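/- In dimension 21, every finite set S of points on the unit sphere of EuclideanSpace ℝ (Fin 21) (i.e., ‖x‖ = 1 for all x ∈ S) such that any two distinct points of S are at Euclidean distance at least 1 has cardinality at most 54584; that is, the kissing number in dimension 21 is at most 54584. -/

import Mathlib

set_option linter.unusedSimpArgs false
open MvPolynomial in
noncomputable def Lx (x : Fin 20 → ℝ) : MvPolynomial (Fin 20) ℝ := ∑ i, C (x i) * X i
open MvPolynomial in
noncomputable def RR : MvPolynomial (Fin 20) ℝ := ∑ i, X i * X i
open MvPolynomial in
noncomputable def Dx (x : Fin 20 → ℝ) (p : MvPolynomial (Fin 20) ℝ) : MvPolynomial (Fin 20) ℝ :=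
  ∑ i, C (x i) * pderiv i p
open MvPolynomial in
noncomputable def Lap (p : MvPolynomial (Fin 20) ℝ) : MvPolynomial (Fin 20) ℝ :=
  ∑ i, pderiv i (pderiv i p)
/-- the (unnormalised) zonal polynomials -/
noncomputable def Qt (w r : ℝ) : ℕ → ℝ
  | 0 => 1
  | 1 => 18 * w
  | (k+2) => (2*(k+1:ℝ)+18) * w * Qt w r (k+1) - (k+1) * (k+18) * r * Qt w r k
open MvPolynomial in
noncomputable def Hk (x : Fin 20 → ℝ) : ℕ → MvPolynomial (Fin 20) ℝ
  | 0 => 1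
  | 1 => C 18 * Lx x
  | (k+2) => C (2*(k+1:ℝ)+18) * (Lx x * Hk x (k+1)) - C ((k+1:ℝ)*(k+18)*∑ i, x i * x i) * (RR * Hk x k)

namespace Fis
open MvPolynomial
abbrev P20 := MvPolynomial (Fin 20) ℝ

theorem pd_comm (i j : Fin 20) (p : P20) : pderiv i (pderiv j p) = pderiv j (pderiv i p) := by
  ext m
  rw [coeff_pderiv, coeff_pderiv, coeff_pderiv, coeff_pderiv]
  by_cases h : i = j
  · subst h; rfl
  · rw [add_right_comm]; simp [Finsupp.single_apply, h, Ne.symm h]; ring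

theorem Dx_add (x) (p q : P20) : Dx x (p + q) = Dx x p + Dx x q := by
  simp [Dx, mul_add, Finset.sum_add_distrib]
theorem Dx_sub (x) (p q : P20) : Dx x (p - q) = Dx x p - Dx x q := by
  simp [Dx, mul_sub, Finset.sum_sub_distrib]
theorem Dx_mul (x) (p q : P20) : Dx x (p * q) = p * Dx x q + q * Dx x p := by
  simp only [Dx, Finset.mul_sum, ← Finset.sum_add_distrib]
  refine Finset.sum_congr rfl fun i _ => ?_
  rw [Derivation.leibniz]; simp only [smul_eq_mul]; ring
theorem Dx_C (x) (a : ℝ) : Dx x (C a) = 0 := by simp [Dx]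
theorem Dx_Cmul (x) (a : ℝ) (p : P20) : Dx x (C a * p) = C a * Dx x p := by
  rw [Dx_mul, Dx_C]; ring
theorem Dx_L (x y) : Dx x (Lx y) = C (∑ i, x i * y i) := by
  simp [Dx, Lx, pderiv_X, Pi.single_apply]
theorem Dx_R (x) : Dx x RR = 2 * Lx x := by
  simp only [Dx, RR, Lx, map_sum, Finset.mul_sum, Derivation.leibniz, smul_eq_mul, pderiv_X]
  refine Finset.sum_congr rfl fun i _ => ?_
  simp [Pi.single_apply, Finset.sum_add_distrib, mul_add]; ring
theorem Lap_sub (p q : P20) : Lap (p - q) = Lap p - Lap q := by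
  simp [Lap, Finset.sum_sub_distrib]
theorem Lap_Cmul (a : ℝ) (p : P20) : Lap (C a * p) = C a * Lap p := by
  simp [Lap, Finset.mul_sum, Derivation.leibniz]
theorem Lap_mul (p q : P20) : Lap (p * q) = p * Lap q + q * Lap p + 2 * ∑ i, pderiv i p * pderiv i q := by
  simp only [Lap, Finset.mul_sum, ← Finset.sum_add_distrib]
  refine Finset.sum_congr rfl fun i _ => ?_
  simp only [Derivation.leibniz, map_add, smul_eq_mul]; ring
theorem Lap_L (x) : Lap (Lx x) = 0 := by
  simp [Lap, Lx, pderiv_X, Pi.single_apply, apply_ite]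
theorem pd_L (i x) : pderiv i (Lx x) = C (x i) := by
  simp [Lx, pderiv_X, Pi.single_apply]
theorem pd_R (i) : pderiv i RR = 2 * X i := by
  simp [RR, pderiv_X, Pi.single_apply, Finset.sum_add_distrib]; ring
theorem Lap_R : Lap RR = 40 := by
  simp only [Lap, pd_R]
  have : (2 : P20) = C 2 := (map_ofNat C 2).symm
  simp only [this, pderiv_C_mul, pderiv_X_self]
  rw [← this]; simp; norm_num
theorem Lap_Lmul (x) (p : P20) : Lap (Lx x * p) = Lx x * Lap p + 2 * Dx x p := by
  rw [Lap_mul, Lap_L]; simp only [pd_L, Dx]; ring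
theorem Lap_Rmul {p : P20} {n : ℕ} (hp : p.IsHomogeneous n) (h : Lap p = 0) :
    Lap (RR * p) = C (40 + 4 * (n:ℝ)) * p := by
  rw [Lap_mul, Lap_R, h]
  have : ∑ i, pderiv i RR * pderiv i p = 2 * ∑ i, X i * pderiv i p := by
    simp only [pd_R, Finset.mul_sum, mul_assoc]
  rw [this, hp.sum_X_mul_pderiv]
  simp only [map_mul, map_add, map_ofNat, map_natCast, nsmul_eq_mul]; ring
theorem Lap_Dx (x) (p : P20) : Lap (Dx x p) = Dx x (Lap p) := by
  simp only [Lap, Dx, map_sum, Finset.mul_sum]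
  rw [Finset.sum_comm]
  refine Finset.sum_congr rfl fun j _ => Finset.sum_congr rfl fun i _ => ?_
  rw [pderiv_C_mul, pderiv_C_mul]
  rw [pd_comm i j, pd_comm i j]
theorem hom_L (x) : (Lx x).IsHomogeneous 1 := by
  refine IsHomogeneous.sum _ _ _ fun i _ => ?_
  simpa using (isHomogeneous_C _ (x i)).mul (isHomogeneous_X ℝ i)
theorem hom_R : RR.IsHomogeneous 2 := by
  refine IsHomogeneous.sum _ _ _ fun i _ => ?_
  simpa using (isHomogeneous_X ℝ i).mul (isHomogeneous_X ℝ i)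
theorem hom_Dx (x) {p : P20} {n : ℕ} (hp : p.IsHomogeneous n) : (Dx x p).IsHomogeneous (n - 1) := by
  refine IsHomogeneous.sum _ _ _ fun i _ => ?_
  simpa using (isHomogeneous_C _ (x i)).mul (hp.pderiv (i := i))
theorem hom_C {p : P20} {n : ℕ} (a : ℝ) (hp : p.IsHomogeneous n) : (C a * p).IsHomogeneous n := by
  simpa using (isHomogeneous_C _ a).mul hp
theorem hom_H (x) : ∀ k, (Hk x k).IsHomogeneous k
  | 0 => by simpa [Hk] using isHomogeneous_one _ _
  | 1 => by
    rw [Hk]; exact hom_C _ (hom_L x)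
  | (k+2) => by
    rw [Hk]
    refine IsHomogeneous.sub (hom_C _ ?_) (hom_C _ ?_)
    · have := (hom_L x).mul (hom_H x (k+1)); rwa [show 1 + (k+1) = k+2 by ring] at this
    · have := hom_R.mul (hom_H x k); rwa [show 2 + k = k+2 by ring] at this
theorem D_H (x) : ∀ k, Dx x (Hk x (k+1)) = C (((k:ℝ)+1)*(k+18)*∑ i, x i * x i) * Hk x k ∧
    Dx x (Hk x (k+2)) = C (((k:ℝ)+2)*(k+19)*∑ i, x i * x i) * Hk x (k+1)
  | 0 => by
    have h1 : Dx x (Hk x 1) = C (18*∑ i, x i * x i) := by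
      rw [Hk, Dx_Cmul, Dx_L, ← C_mul]
    constructor
    · simp only [zero_add, h1]; simp [Hk]
    · simp only [zero_add, Hk, Dx_sub, Dx_Cmul, Dx_mul, Dx_L, Dx_R, mul_one]
      have : Dx x 1 = 0 := by rw [← C_1, Dx_C]
      simp only [← C_1, Dx_C]
      simp only [map_mul, map_add, map_ofNat, map_natCast, map_one, Nat.cast_zero, map_zero]
      ring
  | (k+1) => by
    obtain ⟨h1, h2⟩ := D_H x k
    refine ⟨by rw [h2]; push_cast; congr 3; ring, ?_⟩
    rw [Hk, Dx_sub, Dx_Cmul, Dx_mul, Dx_L, Dx_Cmul, Dx_mul, Dx_R]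
    rw [show k+1+1 = k+2 by rfl, h2, h1]
    have e := Hk.eq_3 x k
    generalize Hk x (k+2) = A at *
    generalize Hk x (k+1) = B at *
    generalize Hk x k = D at *
    simp only [map_mul, map_add, map_ofNat, map_natCast, map_one, Nat.cast_add, Nat.cast_one] at *
    generalize C (∑ i, x i * x i) = s at *
    linear_combination (norm := skip) (s * (k+2) * (k+19)) * (-e)
    ring
theorem Lap_H (x) : ∀ k, Lap (Hk x k) = 0
  | 0 => by simp [Hk, Lap]
  | 1 => by
    rw [Hk, Lap_Cmul, Lap_L, mul_zero]
  | (k+2) => by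
    rw [Hk, Lap_sub, Lap_Cmul, Lap_Cmul, Lap_Lmul, Lap_Rmul (hom_H x k) (Lap_H x k), Lap_H x (k+1), (D_H x k).1]
    simp only [map_mul, map_add, map_ofNat, map_natCast, map_one]
    ring
theorem eval_H (x y : Fin 20 → ℝ) : ∀ k, eval y (Hk x k) = Qt (∑ i, x i * y i) ((∑ i, x i * x i) * ∑ i, y i * y i) k
  | 0 => by simp [Hk, Qt]
  | 1 => by simp [Hk, Qt, Lx]
  | (k+2) => by
    rw [Hk, Qt, map_sub, map_mul, map_mul, map_mul (eval y) (C _), map_mul (eval y) RR, eval_H x y (k+1), eval_H x y k]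
    simp [Lx, RR]; ring

/-- Fischer product -/
noncomputable def B (p q : P20) : ℝ :=
  (basisMonomials (Fin 20) ℝ).constr ℝ (fun m => (∏ i, ((m i).factorial : ℝ)) * coeff m q) p
theorem B_add (p p' q) : B (p + p') q = B p q + B p' q := by
  unfold B
  rw [map_add]
theorem B_mono (m a q) : B (monomial m a) q = a * ((∏ i, ((m i).factorial : ℝ)) * coeff m q) := by
  unfold B
  have : (monomial m a : P20) = a • basisMonomials (Fin 20) ℝ m := by
    rw [coe_basisMonomials, smul_monomial, smul_eq_mul, mul_one]
  rw [this, map_smul, Module.Basis.constr_basis, smul_eq_mul]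
theorem B_Cmul (a p q) : B (C a * p) q = a * B p q := by
  induction p using MvPolynomial.induction_on' with
  | monomial m b => rw [C_mul_monomial, B_mono, B_mono]; ring
  | add p p' h h' => rw [mul_add, B_add, B_add, h, h']; ring
theorem B_zero (q) : B 0 q = 0 := by rw [B, map_zero]
theorem B_sum {ι} (s : Finset ι) (f : ι → P20) (q) : B (∑ i ∈ s, f i) q = ∑ i ∈ s, B (f i) q := by
  classical
  induction s using Finset.induction_on with
  | empty => simp [B_zero]
  | insert a s h ih => rw [Finset.sum_insert h, Finset.sum_insert h, B_add, ih]
theorem B_add_r (p q q') : B p (q + q') = B p q + B p q' := by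
  induction p using MvPolynomial.induction_on' with
  | monomial m b => rw [B_mono, B_mono, B_mono, coeff_add]; ring
  | add p p' h h' => rw [B_add, B_add, B_add, h, h']; ring
theorem B_Cmul_r (a p q) : B p (C a * q) = a * B p q := by
  induction p using MvPolynomial.induction_on' with
  | monomial m b => rw [B_mono, B_mono, coeff_C_mul]; ring
  | add p p' h h' => rw [B_add, B_add, h, h']; ring
theorem B_zero_r (p) : B p 0 = 0 := by
  have := B_Cmul_r 0 p 0
  simpa using this
theorem B_sum_r {ι} (s : Finset ι) (f : ι → P20) (p) : B p (∑ i ∈ s, f i) = ∑ i ∈ s, B p (f i) := by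
  classical
  induction s using Finset.induction_on with
  | empty => simp [B_zero_r]
  | insert a s h ih => rw [Finset.sum_insert h, Finset.sum_insert h, B_add_r, ih]
theorem B_self (p) : 0 ≤ B p p := by
  have : B p p = ∑ m ∈ p.support, B (monomial m (coeff m p)) p := by
    rw [← B_sum, ← MvPolynomial.as_sum]
  rw [this]
  refine Finset.sum_nonneg fun m _ => ?_
  rw [B_mono]
  have : (0:ℝ) ≤ ∏ i, ((m i).factorial : ℝ) := by positivity
  nlinarith [mul_nonneg this (mul_self_nonneg (coeff m p))]
theorem B_X (i) (p q) : B (X i * p) q = B p (pderiv i q) := by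
  induction p using MvPolynomial.induction_on' with
  | monomial m b =>
    have : X i * monomial m b = monomial (m + Finsupp.single i 1) b := by
      rw [X, monomial_mul, one_mul, add_comm]
    rw [this, B_mono, B_mono, coeff_pderiv]
    have : (∏ j, (((m + Finsupp.single i 1 : Fin 20 →₀ ℕ) j).factorial : ℝ)) = (m i + 1) * ∏ j, ((m j).factorial : ℝ) := by
      rw [← Finset.mul_prod_erase _ _ (Finset.mem_univ i), ← Finset.mul_prod_erase (a := i) _ (fun j => ((m j).factorial : ℝ)) (Finset.mem_univ i)]
      have : ∏ j ∈ Finset.univ.erase i, (((m + Finsupp.single i 1 : Fin 20 →₀ ℕ) j).factorial : ℝ) = ∏ j ∈ Finset.univ.erase i, ((m j).factorial : ℝ) := by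
        refine Finset.prod_congr rfl fun j hj => ?_
        have := Finset.ne_of_mem_erase hj
        simp [Finsupp.single_apply, this.symm]
      rw [this]
      simp [Nat.factorial_succ]; ring
    rw [this]; ring
  | add p p' h h' => rw [mul_add, B_add, B_add, h, h']
theorem B_L (x p q) : B (Lx x * p) q = B p (Dx x q) := by
  simp only [Lx, Dx, Finset.sum_mul, B_sum, B_sum_r, mul_assoc, B_Cmul, B_Cmul_r, B_X]
theorem B_R (p q) : B (RR * p) q = B p (Lap q) := by
  simp only [RR, Lap, Finset.sum_mul, B_sum, B_sum_r, mul_assoc, B_X]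
theorem euler (x) {p : P20} {n : ℕ} (hp : p.IsHomogeneous n) : eval x (Dx x p) = n * eval x p := by
  have := congrArg (eval x) hp.sum_X_mul_pderiv
  simpa [Dx] using this

noncomputable def cc : ℕ → ℝ
  | 0 => 1
  | 1 => 18
  | (k+2) => (2*(k+1:ℝ)+18) * cc (k+1)
theorem B_H (x) : ∀ k (h : P20), Lap h = 0 → h.IsHomogeneous k → B (Hk x k) h = cc k * k.factorial * eval x h
  | 0, h, _, hh => by
    rw [← totalDegree_zero_iff_isHomogeneous, totalDegree_eq_zero_iff_eq_C] at hh
    have : (1 : P20) = monomial 0 1 := rfl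
    rw [Hk, this, B_mono, hh]
    simp [cc]
  | 1, h, _, hh => by
    have hd := hom_Dx x hh
    have e := euler x hh
    rw [← totalDegree_zero_iff_isHomogeneous, totalDegree_eq_zero_iff_eq_C] at hd
    rw [Hk, B_Cmul, show Lx x = Lx x * 1 by ring, B_L, hd]
    have : (1 : P20) = monomial 0 1 := rfl
    rw [hd] at e
    rw [this, B_mono]
    simp [cc] at e ⊢
    rw [e]
  | (k+2), h, hl, hh => by
    have sub : ∀ p q r, B (p - q) r = B p r - B q r := by
      intro p q r
      have := B_add (p - q) q r
      rw [sub_add_cancel] at this; linarith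
    rw [Hk, sub, B_Cmul, B_Cmul, B_L, B_R, hl, B_zero_r,
      B_H x (k+1) (Dx x h) (by rw [Lap_Dx, hl]; simp [Dx]) (by simpa using hom_Dx x hh), euler x hh]
    simp only [cc, Nat.factorial_succ]; push_cast; ring
theorem cc_pos : ∀ k, 0 < cc k
  | 0 => by simp [cc]
  | 1 => by simp [cc]
  | (k+2) => by rw [cc]; have := cc_pos (k+1); positivity
theorem psd {ι : Type*} (s : Finset ι) (v : ι → Fin 20 → ℝ) (f : ι → ℝ) (k : ℕ) :
    0 ≤ ∑ a ∈ s, ∑ b ∈ s, f a * f b * Qt (∑ i, v a i * v b i) ((∑ i, v a i * v a i) * ∑ i, v b i * v b i) k := by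
  have h := B_self (∑ a ∈ s, C (f a) * Hk (v a) k)
  rw [B_sum] at h
  simp only [B_sum_r, B_Cmul, B_Cmul_r] at h
  simp only [B_H _ k _ (Lap_H _ k) (hom_H _ k), eval_H] at h
  have hc : 0 < cc k * k.factorial := mul_pos (cc_pos k) (by positivity)
  refine (mul_nonneg_iff_of_pos_left hc).1 ?_
  refine h.trans (le_of_eq ?_)
  symm
  rw [Finset.sum_comm, Finset.mul_sum]
  refine Finset.sum_congr rfl fun a _ => ?_
  rw [Finset.mul_sum]
  refine Finset.sum_congr rfl fun b _ => ?_
  ring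
end Fis

/-- evaluation of a coefficient list -/
noncomputable def gev {A : Type} (e : A → ℝ) (x : ℝ) : List A → ℝ
  | [] => 0
  | c :: l => e c + x * gev e x l
noncomputable def ev (x : ℝ) (l : List ℤ) : ℝ := gev (fun c : ℤ => (c : ℝ)) x l
noncomputable def Fk (ps : List (List ℤ)) (x y : ℝ) : ℝ := (ps.map fun p => ev x p * ev y p).sum
noncomputable def Tk (x y w r : ℝ) : List (List (List ℤ)) → ℕ → ℝ
  | [], _ => 0
  | b :: bs, k => Fk b x y * Qt w r k + Tk x y w r bs (k+1)
noncomputable def Tfun (bs : List (List (List ℤ))) (x y z : ℝ) : ℝ :=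
  Tk x y (z + x + y - x * y - 2) (x * (2 - x) * (y * (2 - y))) bs 0
noncomputable def Asum (cs : List ℤ) : ℝ := (cs.map fun c : ℤ => (c:ℝ) * (c:ℝ)).sum
noncomputable def Lsum (x : ℝ) : List ℤ → List (List ℤ) → ℝ
  | c :: cs, p :: ps => c * ev x p + Lsum x cs ps
  | _, _ => 0

namespace Cnt
abbrev E21 := EuclideanSpace ℝ (Fin 21)
open scoped InnerProductSpace

theorem psd21 (z : E21) (hz : ‖z‖ = 1) (s : Finset E21) (hs : ∀ x ∈ s, ‖x‖ = 1) (f : E21 → ℝ) (k : ℕ) :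
    0 ≤ ∑ x ∈ s, ∑ y ∈ s, f x * f y * Qt (⟪x, y⟫_ℝ - ⟪x, z⟫_ℝ * ⟪y, z⟫_ℝ)
      ((1 - ⟪x, z⟫_ℝ * ⟪x, z⟫_ℝ) * (1 - ⟪y, z⟫_ℝ * ⟪y, z⟫_ℝ)) k := by
  obtain ⟨b, hb⟩ := Orthonormal.exists_orthonormalBasis_extension_of_card_eq (𝕜 := ℝ) (E := E21) (ι := Fin 21)
    (by simp) (v := fun _ => z) (s := {0})
    (by
      constructor
      · intro i; simpa using hz
      · intro i j hij; exact absurd (Subsingleton.elim i j) hij)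
  have hb0 : b 0 = z := hb 0 rfl
  have key : ∀ x y : E21, ∑ i : Fin 20, ⟪x, b i.succ⟫_ℝ * ⟪y, b i.succ⟫_ℝ = ⟪x, y⟫_ℝ - ⟪x, z⟫_ℝ * ⟪y, z⟫_ℝ := by
    intro x y
    have := b.sum_inner_mul_inner x y
    rw [Fin.sum_univ_succ, hb0] at this
    rw [← this, real_inner_comm y z]
    simp only [fun i => real_inner_comm y (b i)]
    ring
  have := Fis.psd s (fun x i => ⟪x, b i.succ⟫_ℝ) f k
  simp only [key] at this
  refine this.trans (le_of_eq ?_)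
  refine Finset.sum_congr rfl fun x hx => Finset.sum_congr rfl fun y hy => ?_
  rw [real_inner_self_eq_norm_sq, real_inner_self_eq_norm_sq, hs x hx, hs y hy]
  norm_num

theorem Fpsd (z : E21) (hz : ‖z‖ = 1) (s : Finset E21) (hs : ∀ x ∈ s, ‖x‖ = 1) (k : ℕ) (ps : List (List ℤ)) :
    0 ≤ ∑ x ∈ s, ∑ y ∈ s, Fk ps (⟪x, z⟫_ℝ + 1) (⟪y, z⟫_ℝ + 1) * Qt (⟪x, y⟫_ℝ - ⟪x, z⟫_ℝ * ⟪y, z⟫_ℝ)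
      ((1 - ⟪x, z⟫_ℝ * ⟪x, z⟫_ℝ) * (1 - ⟪y, z⟫_ℝ * ⟪y, z⟫_ℝ)) k := by
  induction ps with
  | nil => simp [Fk]
  | cons p ps ih =>
    have h := psd21 z hz s hs (fun x => ev (⟪x, z⟫_ℝ + 1) p) k
    refine (add_nonneg h ih).trans (le_of_eq ?_)
    simp only [← Finset.sum_add_distrib]
    refine Finset.sum_congr rfl fun x hx => Finset.sum_congr rfl fun y hy => ?_
    simp only [Fk, List.map_cons, List.sum_cons]; ring

theorem Tpsd (z : E21) (hz : ‖z‖ = 1) (s : Finset E21) (hs : ∀ x ∈ s, ‖x‖ = 1) (bs : List (List (List ℤ))) : ∀ (k : ℕ),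
    0 ≤ ∑ x ∈ s, ∑ y ∈ s, Tk (⟪x, z⟫_ℝ + 1) (⟪y, z⟫_ℝ + 1) (⟪x, y⟫_ℝ - ⟪x, z⟫_ℝ * ⟪y, z⟫_ℝ)
      ((1 - ⟪x, z⟫_ℝ * ⟪x, z⟫_ℝ) * (1 - ⟪y, z⟫_ℝ * ⟪y, z⟫_ℝ)) bs k := by
  induction bs with
  | nil => simp [Tk]
  | cons b bs ih =>
    intro k
    refine (add_nonneg (Fpsd z hz s hs k b) (ih (k+1))).trans (le_of_eq ?_)
    simp only [← Finset.sum_add_distrib, Tk]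

theorem zero_block {ι : Type*} (s : Finset ι) (g : ι → ℝ) : ∀ (cs : List ℤ) (ps : List (List ℤ)), cs.length = ps.length →
    0 ≤ Asum cs + 2 * ∑ x ∈ s, Lsum (g x) cs ps + ∑ x ∈ s, ∑ y ∈ s, Fk ps (g x) (g y)
  | [], [], _ => by simp [Asum, Lsum, Fk]
  | c :: cs, p :: ps, h => by
    have ih := zero_block s g cs ps (by simpa using h)
    have h2 := mul_self_nonneg ((c:ℝ) + ∑ x ∈ s, ev (g x) p)
    refine (add_nonneg h2 ih).trans (le_of_eq ?_)
    simp only [Asum, Lsum, Fk, List.map_cons, List.sum_cons, Finset.sum_add_distrib, ← Finset.mul_sum, ← Finset.sum_mul]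
    ring
  | [], _ :: _, h => by simp at h
  | _ :: _, [], h => by simp at h

theorem zineq (z : E21) (hz : ‖z‖ = 1) (s : Finset E21) (hs : ∀ x ∈ s, ‖x‖ = 1) (cs : List ℤ) (ps : List (List ℤ))
    (bs : List (List (List ℤ))) (hl : cs.length = ps.length) :
    0 ≤ Asum cs + 2 * ∑ x ∈ s, Lsum (⟪x, z⟫_ℝ + 1) cs ps +
      ∑ x ∈ s, ∑ y ∈ s, Tfun (ps :: bs) (⟪x, z⟫_ℝ + 1) (⟪y, z⟫_ℝ + 1) (⟪x, y⟫_ℝ + 1) := by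
  have h1 := zero_block s (fun x => ⟪x, z⟫_ℝ + 1) cs ps hl
  have h2 := Tpsd z hz s hs bs 1
  refine (add_nonneg h1 h2).trans (le_of_eq ?_)
  rw [add_assoc]
  congr 1
  simp only [← Finset.sum_add_distrib, Tfun, Tk]
  refine Finset.sum_congr rfl fun x hx => Finset.sum_congr rfl fun y hy => ?_
  rw [show ⟪x, y⟫_ℝ + 1 + (⟪x, z⟫_ℝ + 1) + (⟪y, z⟫_ℝ + 1) - (⟪x, z⟫_ℝ + 1) * (⟪y, z⟫_ℝ + 1) - 2 = ⟪x, y⟫_ℝ - ⟪x, z⟫_ℝ * ⟪y, z⟫_ℝ by ring,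
    show (⟪x, z⟫_ℝ + 1) * (2 - (⟪x, z⟫_ℝ + 1)) * ((⟪y, z⟫_ℝ + 1) * (2 - (⟪y, z⟫_ℝ + 1))) = (1 - ⟪x, z⟫_ℝ * ⟪x, z⟫_ℝ) * (1 - ⟪y, z⟫_ℝ * ⟪y, z⟫_ℝ) by ring]
  simp [Qt]

theorem det3 (x y z : E21) (hx : ‖x‖ = 1) (hy : ‖y‖ = 1) (hz : ‖z‖ = 1) :
    0 ≤ 1 + 2 * ⟪x, z⟫_ℝ * ⟪y, z⟫_ℝ * ⟪x, y⟫_ℝ - ⟪x, z⟫_ℝ ^ 2 - ⟪y, z⟫_ℝ ^ 2 - ⟪x, y⟫_ℝ ^ 2 := by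
  have h := real_inner_mul_inner_self_le (x - ⟪x, z⟫_ℝ • z) (y - ⟪y, z⟫_ℝ • z)
  simp only [inner_sub_left, inner_sub_right, inner_smul_left, inner_smul_right, real_inner_self_eq_norm_sq, hx, hy, hz,
    RCLike.conj_to_real, real_inner_comm z x, real_inner_comm z y, real_inner_comm y x] at h
  rw [real_inner_comm z x, real_inner_comm z y, real_inner_comm y x]
  nlinarith [h]

theorem main (S : Finset E21) (hnorm : ∀ x ∈ S, ‖x‖ = 1) (hdist : ∀ x ∈ S, ∀ y ∈ S, x ≠ y → 1 ≤ dist x y)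
    (A Λ : ℝ) (L : ℝ → ℝ) (T : ℝ → ℝ → ℝ → ℝ) (hΛ : 0 < Λ)
    (hA : A < 54584 * Λ)
    (hB : ∀ x, 0 ≤ x → x ≤ 3/2 → 2 * L x + T x x 2 ≤ -Λ)
    (hS : ∀ a b c, 0 ≤ a → a ≤ 3/2 → 0 ≤ b → b ≤ 3/2 → 0 ≤ c → c ≤ 3/2 →
      0 ≤ 1 + 2 * (a-1) * (b-1) * (c-1) - (a-1)^2 - (b-1)^2 - (c-1)^2 → T a b c + T a c b + T b c a ≤ 0)
    (hz : ∀ z ∈ S, 0 ≤ A + 2 * ∑ x ∈ S.erase z, L (⟪x, z⟫_ℝ + 1) +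
      ∑ x ∈ S.erase z, ∑ y ∈ S.erase z, T (⟪x, z⟫_ℝ + 1) (⟪y, z⟫_ℝ + 1) (⟪x, y⟫_ℝ + 1)) :
    S.card ≤ 54584 := by
  classical
  have rng : ∀ x ∈ S, ∀ y ∈ S, x ≠ y → 0 ≤ ⟪x, y⟫_ℝ + 1 ∧ ⟪x, y⟫_ℝ + 1 ≤ 3/2 := by
    intro x hx y hy hxy
    constructor
    · have := abs_real_inner_le_norm x y
      rw [hnorm x hx, hnorm y hy] at this
      have := (abs_le.1 this).1; linarith
    · have h := hdist x hx y hy hxy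
      rw [dist_eq_norm] at h
      have h2 := norm_sub_sq_real x y
      rw [hnorm x hx, hnorm y hy] at h2
      nlinarith
  let G : E21 → E21 → E21 → ℝ := fun z x y => if x ≠ z ∧ y ≠ z ∧ x ≠ y then T (⟪x, z⟫_ℝ + 1) (⟪y, z⟫_ℝ + 1) (⟪x, y⟫_ℝ + 1) else 0
  have hsplit : ∀ z ∈ S, ∑ x ∈ S.erase z, ∑ y ∈ S.erase z, T (⟪x, z⟫_ℝ + 1) (⟪y, z⟫_ℝ + 1) (⟪x, y⟫_ℝ + 1)
      = ∑ x ∈ S.erase z, T (⟪x, z⟫_ℝ + 1) (⟪x, z⟫_ℝ + 1) 2 + ∑ x ∈ S, ∑ y ∈ S, G z x y := by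
    intro z hzS
    have e1 : ∑ x ∈ S, ∑ y ∈ S, G z x y = ∑ x ∈ S.erase z, ∑ y ∈ (S.erase z).erase x, T (⟪x, z⟫_ℝ + 1) (⟪y, z⟫_ℝ + 1) (⟪x, y⟫_ℝ + 1) := by
      rw [← Finset.sum_erase S (a := z) (by simp [G])]
      refine Finset.sum_congr rfl fun x hx => ?_
      rw [← Finset.sum_erase S (a := z) (by simp [G]), ← Finset.sum_erase (S.erase z) (a := x) (by simp [G])]
      refine Finset.sum_congr rfl fun y hy => ?_
      simp only [Finset.mem_erase] at hx hy
      simp only [G]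
      rw [if_pos ⟨hx.1, hy.2.1, hy.1.symm⟩]
    rw [e1, ← Finset.sum_add_distrib]
    refine Finset.sum_congr rfl fun x hx => ?_
    rw [← Finset.add_sum_erase _ _ hx, real_inner_self_eq_norm_sq, hnorm x (Finset.mem_of_mem_erase hx)]
    norm_num
  have hG : ∑ z ∈ S, ∑ x ∈ S, ∑ y ∈ S, G z x y ≤ 0 := by
    have s1 : ∑ z ∈ S, ∑ x ∈ S, ∑ y ∈ S, G z x y = ∑ z ∈ S, ∑ x ∈ S, ∑ y ∈ S, G x z y := Finset.sum_comm
    have s2 : ∑ z ∈ S, ∑ x ∈ S, ∑ y ∈ S, G z x y = ∑ z ∈ S, ∑ x ∈ S, ∑ y ∈ S, G y z x := by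
      calc _ = ∑ z ∈ S, ∑ x ∈ S, ∑ y ∈ S, G x z y := s1
        _ = ∑ z ∈ S, ∑ x ∈ S, ∑ y ∈ S, G y z x := Finset.sum_congr rfl fun z _ => Finset.sum_comm
    have : 3 * ∑ z ∈ S, ∑ x ∈ S, ∑ y ∈ S, G z x y = ∑ z ∈ S, ∑ x ∈ S, ∑ y ∈ S, (G z x y + G x z y + G y z x) := by
      simp only [Finset.sum_add_distrib]
      rw [← s1, ← s2]; ring
    have h3 : ∑ z ∈ S, ∑ x ∈ S, ∑ y ∈ S, (G z x y + G x z y + G y z x) ≤ 0 := by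
      refine Finset.sum_nonpos fun z hz => Finset.sum_nonpos fun x hx => Finset.sum_nonpos fun y hy => ?_
      by_cases h : x ≠ z ∧ y ≠ z ∧ x ≠ y
      · obtain ⟨h1, h2, h3⟩ := h
        simp only [G]
        rw [if_pos ⟨h1, h2, h3⟩, if_pos ⟨h1.symm, h3.symm, h2.symm⟩, if_pos ⟨h2.symm, h3, h1.symm⟩]
        rw [real_inner_comm x z, real_inner_comm y z, real_inner_comm x y]
        have r1 := rng x hx z hz h1
        have r2 := rng y hy z hz h2
        have r3 := rng x hx y hy h3
        have d := det3 x y z (hnorm x hx) (hnorm y hy) (hnorm z hz)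
        have := hS (⟪x, z⟫_ℝ + 1) (⟪y, z⟫_ℝ + 1) (⟪x, y⟫_ℝ + 1) r1.1 r1.2 r2.1 r2.2 r3.1 r3.2 (by simpa using d)
        linarith
      · have : G z x y = 0 ∧ G x z y = 0 ∧ G y z x = 0 := by
          simp only [G]
          refine ⟨if_neg h, if_neg ?_, if_neg ?_⟩
          · rintro ⟨a, b, c⟩; exact h ⟨a.symm, c.symm, b.symm⟩
          · rintro ⟨a, b, c⟩; exact h ⟨c.symm, a.symm, b⟩
        rw [this.1, this.2.1, this.2.2]; norm_num
    linarith
  have hsum := Finset.sum_nonneg hz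
  have hle : ∑ z ∈ S, (A + 2 * ∑ x ∈ S.erase z, L (⟪x, z⟫_ℝ + 1) +
      ∑ x ∈ S.erase z, ∑ y ∈ S.erase z, T (⟪x, z⟫_ℝ + 1) (⟪y, z⟫_ℝ + 1) (⟪x, y⟫_ℝ + 1)) ≤
      ∑ z ∈ S, (A + ((S.card:ℝ) - 1) * (-Λ) + ∑ x ∈ S, ∑ y ∈ S, G z x y) := by
    refine Finset.sum_le_sum fun z hz => ?_
    rw [hsplit z hz, Finset.mul_sum]
    have : ∑ x ∈ S.erase z, (2 * L (⟪x, z⟫_ℝ + 1) + T (⟪x, z⟫_ℝ + 1) (⟪x, z⟫_ℝ + 1) 2) ≤ ∑ x ∈ S.erase z, (-Λ) := by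
      refine Finset.sum_le_sum fun x hx => ?_
      have r := rng x (Finset.mem_of_mem_erase hx) z hz (Finset.ne_of_mem_erase hx)
      exact hB _ r.1 r.2
    rw [Finset.sum_add_distrib, Finset.sum_const, nsmul_eq_mul, Finset.card_erase_of_mem hz,
      Nat.cast_sub (Finset.card_pos.2 ⟨z, hz⟩), Nat.cast_one] at this
    linarith
  have hr : ∑ z ∈ S, (A + ((S.card:ℝ) - 1) * (-Λ) + ∑ x ∈ S, ∑ y ∈ S, G z x y) =
      (S.card : ℝ) * (A + ((S.card:ℝ) - 1) * (-Λ)) + ∑ z ∈ S, ∑ x ∈ S, ∑ y ∈ S, G z x y := by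
    rw [Finset.sum_add_distrib, Finset.sum_const, nsmul_eq_mul]
  rw [hr] at hle
  have h5 : 0 ≤ (S.card : ℝ) * (A + ((S.card:ℝ) - 1) * (-Λ)) := by linarith
  by_contra hcon
  push Not at hcon
  have hc : (54585:ℝ) ≤ S.card := by exact_mod_cast hcon
  have : A + ((S.card:ℝ) - 1) * (-Λ) < 0 := by nlinarith
  have : (S.card : ℝ) * (A + ((S.card:ℝ) - 1) * (-Λ)) < 0 := mul_neg_of_pos_of_neg (by linarith) this
  linarith
end Cnt

/-! ### kernel checker: definitions -/
noncomputable def passG {A : Type} (f : A → A → A) (l : List A) : List A :=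
  List.rec [] (fun c _ r => List.rec [c] (fun h t _ => f c h :: h :: t) r) l
noncomputable def taylG {A : Type} (f : A → A → A) (n : Nat) : List A → List A :=
  Nat.rec (fun _ => []) (fun _ F l => List.rec [] (fun h t _ => h :: F t) (passG f l)) n
noncomputable def scalG {A : Type} (m : Nat → A → A) (e : Nat) (l : List A) : Nat → List A :=
  List.rec (fun _ => []) (fun c _ F p => m p c :: F (Nat.mul p e)) l
noncomputable def revG {A : Type} (l : List A) : List A → List A :=
  List.rec (fun acc => acc) (fun c _ F acc => F (c :: acc)) l
noncomputable def algG {A : Type} (ad : A → A → A) (m : Nat → A → A) (a e n : Nat) (l : List A) : List A :=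
  taylG ad n (revG (scalG m e (taylG (fun c h => ad c (m a h)) n l) 1) [])
noncomputable def dotG {A B : Type} (z : A) (ad : A → A → A) (m : A → B → A) (l : List A) : List B → A :=
  List.rec (fun _ => z) (fun c _ F E => List.rec z (fun e E' _ => ad (m c e) (F E')) E) l
noncomputable def mapG {A B : Type} (f : A → B) (l : List A) : List B :=
  List.rec [] (fun c _ r => f c :: r) l
noncomputable def elG {B : Type} (o : B) (m : B → B → B) (P Q : B) (n : Nat) : List B :=
  Nat.rec [o] (fun _ l => List.rec [] (fun h _ _ => m Q h :: mapG (m P) l) l) n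
noncomputable def addG {A : Type} (ad : A → A → A) (l : List A) : List A → List A :=
  List.rec (fun _ => []) (fun c _ F l' => List.rec [] (fun c' t' _ => ad c c' :: F t') l') l
noncomputable def allG {A : Type} (p : A → Bool) (l : List A) : Bool :=
  List.rec true (fun c _ r => Bool.rec false r (p c)) l
noncomputable def andB (a b : Bool) : Bool := Bool.rec false b a
noncomputable def idot (l : List Int) (E : List Nat) : Int :=
  dotG (Int.ofNat 0) Int.add (fun c e => Int.mul c (Int.ofNat e)) l E
noncomputable def resid (W : Nat) (l : List Int) (d : List Nat) : List Nat :=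
  List.rec (fun _ => []) (fun c _ F d => List.rec [] (fun d0 d' _ =>
    Int.toNat (Int.emod (Int.mul c (Int.ofNat d0)) (Int.ofNat W)) :: F d') d) l d
def BB : Nat := 608
def WW : Nat := Nat.pow 2 (Nat.mul 608 289)
noncomputable def maskN (n : Nat) : Nat :=
  Nat.rec 0 (fun _ r => Nat.add (Nat.pow 2 607) (Nat.mul (Nat.pow 2 608) r)) n
noncomputable def El (X a b : Nat) : List Nat :=
  elG 1 Nat.mul (Nat.add a (Nat.mul b X)) (Nat.add 128 (Nat.mul 128 X)) 16
noncomputable def leafOK (a b g : Nat) (c nd : List Nat) : Bool :=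
  andB (andB (Nat.ble (Nat.succ a) b) (andB (Nat.ble b 192) (Nat.ble g (Nat.pow 2 70))))
  (allG (fun r => Nat.beq (Nat.land r (maskN 289)) 0)
    (algG Nat.add Nat.mul a (Nat.sub b a) 17 (addG Nat.add c (mapG (Nat.mul g) nd))))
noncomputable def tOK (c nd : List Nat) (tl : List (Nat × Nat)) : Nat → Bool :=
  List.rec (fun a => Nat.beq a 192)
    (fun p _ F a => andB (leafOK a (Prod.fst p) (Prod.snd p) c nd) (F (Prod.fst p))) tl
noncomputable def vstage (u : List (List Int)) (E : List Nat) : List Nat :=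
  resid WW (mapG (fun l => idot l E) u) (elG 1 Nat.mul 1 128 16)
noncomputable def vOK (u ud : List (List Int)) (vl : List (Nat × List (Nat × Nat))) : Nat → Bool :=
  List.rec (fun a => Nat.beq a 192)
    (fun p _ F a => andB (andB (andB (Nat.ble (Nat.succ a) (Prod.fst p)) (Nat.ble (Prod.fst p) 192))
      (tOK (vstage u (El (Nat.pow 2 10336) a (Prod.fst p))) (vstage ud (El (Nat.pow 2 10336) a (Prod.fst p))) (Prod.snd p) a))
      (F (Prod.fst p))) vl
noncomputable def ustage (T : List (List (List Int))) (E : List Nat) : List (List Int) :=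
  mapG (mapG (fun l => idot l E)) T
noncomputable def uOK (T Td : List (List (List Int))) (a b : Nat) (vl : List (Nat × List (Nat × Nat))) : Bool :=
  andB (andB (Nat.ble (Nat.succ a) b) (Nat.ble b 192))
    (vOK (ustage T (El (Nat.pow 2 608) a b)) (ustage Td (El (Nat.pow 2 608) a b)) vl a)

namespace Ck
open List
theorem andB_true {a b : Bool} : andB a b = true ↔ a = true ∧ b = true := by
  cases a <;> cases b <;> simp [andB]
theorem allG_true {A : Type} (p : A → Bool) (l : List A) : allG p l = true ↔ ∀ x ∈ l, p x = true := by
  induction l with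
  | nil => simp [allG]
  | cons c l ih =>
    have : allG p (c :: l) = andB (p c) (allG p l) := rfl
    rw [this, andB_true, ih]; simp
theorem mapG_eq {A B : Type} (f : A → B) (l : List A) : mapG f l = l.map f := by
  induction l with
  | nil => rfl
  | cons c l ih => rw [List.map_cons, ← ih]; rfl
theorem revG_eq {A : Type} (l : List A) : ∀ acc, revG l acc = l.reverse ++ acc := by
  induction l with
  | nil => intro acc; rfl
  | cons c l ih =>
    intro acc
    have : revG (c :: l) acc = revG l (c :: acc) := rfl
    rw [this, ih]; simp

/-! algebraic side -/
section alg
variable {A : Type} [CommRing A]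
noncomputable def pev (x : A) : List A → A
  | [] => 0
  | c :: l => c + x * pev x l
noncomputable def hev (μ ν : A) : List A → A
  | [] => 0
  | c :: l => c * ν ^ l.length + μ * hev μ ν l
def mA (n : ℕ) (c : A) : A := (n : A) * c

theorem pass_len (f : A → A → A) (l : List A) : (passG f l).length = l.length := by
  induction l with
  | nil => rfl
  | cons c l ih =>
    have : passG f (c :: l) = List.rec [c] (fun h t _ => f c h :: h :: t) (passG f l) := rfl
    rw [this]
    cases h : passG f l with
    | nil => rw [h] at ih; simp at ih; simp [← ih]
    | cons a t => rw [h] at ih; simp at ih; simp [← ih]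

theorem pass_hev (a z ν : A) (l : List A) : ∀ (h : A) (t : List A), passG (fun c h => c + a * h) l = h :: t →
    hev z ν l = h * ν ^ t.length + (z - a * ν) * hev z ν t := by
  induction l with
  | nil => intro h t e; simp [passG] at e
  | cons c l ih =>
    intro h t
    have e1 : passG (fun c h => c + a * h) (c :: l) =
      List.rec [c] (fun h t _ => (c + a * h) :: h :: t) (passG (fun c h => c + a * h) l) := rfl
    rw [e1]
    have hl := pass_len (fun c h : A => c + a * h) l
    cases e : passG (fun c h => c + a * h) l with
    | nil =>
      rw [e] at hl; 
      have : l = [] := List.eq_nil_of_length_eq_zero (by simpa using hl.symm)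
      subst this
      intro e2; simp at e2; obtain ⟨rfl, rfl⟩ := e2
      simp [hev]
    | cons h' t' =>
      rw [e] at hl
      intro e2; simp at e2; obtain ⟨rfl, rfl⟩ := e2
      have := ih h' t' e
      simp only [hev, this, ← hl, List.length_cons]
      ring

theorem tayl_len (f : A → A → A) : ∀ (n : ℕ) (l : List A), l.length = n → (taylG f n l).length = n := by
  intro n
  induction n with
  | zero => intro l h; rfl
  | succ n ih =>
    intro l h
    have e : taylG f (n+1) l = List.rec [] (fun h t _ => h :: taylG f n t) (passG f l) := rfl
    have hl := pass_len f l
    rw [e]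
    cases e2 : passG f l with
    | nil => rw [e2, h] at hl; simp at hl
    | cons h' t' => rw [e2, h] at hl; simp at hl; simp [ih t' hl]

theorem tayl_hev (a y ν : A) : ∀ (n : ℕ) (l : List A), l.length = n →
    hev y ν (taylG (fun c h => c + a * h) n l) = hev (y + a * ν) ν l := by
  intro n
  induction n with
  | zero => intro l h; rw [List.eq_nil_of_length_eq_zero h]; rfl
  | succ n ih =>
    intro l h
    have e : taylG (fun c h => c + a * h) (n+1) l = List.rec [] (fun h t _ => h :: taylG (fun c h => c + a * h) n t) (passG (fun c h => c + a * h) l) := rfl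
    have hl := pass_len (fun c h : A => c + a * h) l
    rw [e]
    cases e2 : passG (fun c h => c + a * h) l with
    | nil => rw [e2, h] at hl; simp at hl
    | cons h' t' =>
      rw [e2, h] at hl; simp at hl
      have := pass_hev a (y + a * ν) ν l h' t' e2
      rw [this]
      simp only [hev, ih t' hl, tayl_len _ n t' hl, hl]
      ring

theorem scal_len (e : ℕ) (l : List A) : ∀ p, (scalG mA e l p).length = l.length := by
  induction l with
  | nil => intro p; rfl
  | cons c l ih =>
    intro p
    have : scalG mA e (c :: l) p = mA p c :: scalG mA e l (p * e) := rfl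
    rw [this]; simp [ih]
theorem scal_hev (e : ℕ) (y ν : A) (l : List A) : ∀ p : ℕ, hev y ν (scalG mA e l p) = p * hev (e * y) ν l := by
  induction l with
  | nil => intro p; simp [scalG, hev]
  | cons c l ih =>
    intro p
    have : scalG mA e (c :: l) p = mA p c :: scalG mA e l (p * e) := rfl
    rw [this]; simp only [hev, ih, scal_len, mA]; push_cast; ring

theorem hev_append (μ ν : A) (l l' : List A) : hev μ ν (l ++ l') = hev μ ν l * ν ^ l'.length + μ ^ l.length * hev μ ν l' := by
  induction l with
  | nil => simp [hev]
  | cons c l ih => simp only [List.cons_append, hev, ih, List.length_append, List.length_cons]; ring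
theorem hev_rev (μ ν : A) (l : List A) : hev μ ν l.reverse = hev ν μ l := by
  induction l with
  | nil => rfl
  | cons c l ih => simp only [List.reverse_cons, hev_append, hev, ih]; simp; ring

theorem alg_hev (a e n : ℕ) (μ ν : A) (l : List A) (h : l.length = n) :
    hev μ ν (algG (· + ·) mA a e n l) = hev (a * μ + (a + e : ℕ) * ν) (μ + ν) l := by
  unfold algG
  have e1 : (fun c h : A => c + mA a h) = fun c h => c + (a : A) * h := rfl
  have e2 : ((· + ·) : A → A → A) = fun c h => c + 1 * h := by funext c h; simp
  simp only [e1]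
  rw [e2, revG_eq, List.append_nil]
  have hl := tayl_len (fun c h => c + (a : A) * h) n l h
  rw [tayl_hev _ _ _ n _ (by rw [List.length_reverse, scal_len, hl]), hev_rev, scal_hev, tayl_hev _ _ _ n _ h]
  push_cast
  ring_nf

theorem hev_add (μ ν : A) : ∀ (l l' : List A), l.length = l'.length → hev μ ν (addG (· + ·) l l') = hev μ ν l + hev μ ν l'
    ∧ (addG (· + ·) l l').length = l.length
  | [], [], _ => by simp [addG, hev]
  | c :: l, c' :: l', h => by
    have ih := hev_add μ ν l l' (by simpa using h)
    have e : addG (· + ·) (c :: l) (c' :: l') = (c + c') :: addG (· + ·) l l' := rfl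
    have hl : l.length = l'.length := by simpa using h
    rw [e]; simp only [hev, ih.1, ih.2, ← hl, List.length_cons, and_true]; ring
  | [], _ :: _, h => by simp at h
  | _ :: _, [], h => by simp at h
theorem hev_map (μ ν c : A) (l : List A) : hev μ ν (l.map (c * ·)) = c * hev μ ν l := by
  induction l with
  | nil => simp [hev]
  | cons a l ih => simp only [List.map_cons, hev, ih, List.length_map]; ring
theorem pev_map (x c : A) (l : List A) : pev x (l.map (c * ·)) = c * pev x l := by
  induction l with
  | nil => simp [pev]
  | cons a l ih => simp only [List.map_cons, pev, ih]; ring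

noncomputable def dotA (l E : List A) : A := dotG 0 (· + ·) (· * ·) l E
theorem dotA_map (c : A) : ∀ (l E : List A), dotA l (E.map (c * ·)) = c * dotA l E
  | [], E => by simp [dotA, dotG]
  | _ :: _, [] => by simp [dotA, dotG]
  | a :: l, e :: E => by
    have e1 : dotA (a :: l) (e :: E) = a * e + dotA l E := rfl
    have e2 : dotA (a :: l) ((e :: E).map (c * ·)) = a * (c * e) + dotA l (E.map (c * ·)) := rfl
    rw [e1, e2, dotA_map c l E]; ring
noncomputable def elA (P Q : A) (n : ℕ) : List A := elG 1 (· * ·) P Q n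
theorem elA_succ (P Q : A) (n : ℕ) : ∃ t, elA P Q n = Q ^ n :: t ∧ elA P Q (n+1) = Q ^ (n+1) :: (elA P Q n).map (P * ·) := by
  induction n with
  | zero => exact ⟨[], by simp [elA, elG], by simp [elA, elG, mapG_eq]⟩
  | succ n ih =>
    obtain ⟨t, h1, h2⟩ := ih
    refine ⟨_, h2, ?_⟩
    have e : elA P Q (n+2) = List.rec [] (fun h _ _ => Q * h :: mapG (P * ·) (elA P Q (n+1))) (elA P Q (n+1)) := rfl
    rw [e, mapG_eq]
    nth_rewrite 2 [h2]
    simp only []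
    congr 1; ring
theorem dot_el (x Q : A) : ∀ (n : ℕ) (l : List A), l.length ≤ n + 1 → dotA l (elA (x * Q) Q n) = Q ^ n * pev x l := by
  intro n
  induction n with
  | zero =>
    intro l h
    match l, h with
    | [], _ => simp [dotA, dotG, pev]
    | [c], _ => simp [dotA, dotG, pev, elA, elG]
  | succ n ih =>
    intro l h
    match l, h with
    | [], _ => simp [dotA, dotG, pev]
    | c :: l, h =>
      obtain ⟨t, h1, h2⟩ := elA_succ (x * Q) Q n
      have e1 : ∀ (e : A) E, dotA (c :: l) (e :: E) = c * e + dotA l E := fun _ _ => rfl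
      rw [h2, e1, dotA_map, ih l (by simpa using h), pev]; ring
noncomputable def zipM (l d : List A) : List A := List.zipWith (· * ·) l d
theorem zip_el (x q D : A) : ∀ (n : ℕ) (l : List A), l.length = n + 1 →
    hev (x * D * q) q (zipM l (elA 1 D n)) = (D * q) ^ n * pev x l ∧ (zipM l (elA 1 D n)).length = n + 1 := by
  intro n
  induction n with
  | zero =>
    intro l h
    match l, h with
    | [c], _ => simp [zipM, elA, elG, hev, pev]
  | succ n ih =>
    intro l h
    match l, h with
    | c :: l, h =>
      obtain ⟨t, h1, h2⟩ := elA_succ 1 D n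
      have ih := ih l (by simpa using h)
      have e : zipM (c :: l) (elA 1 D (n+1)) = (c * D ^ (n+1)) :: zipM l (elA 1 D n) := by
        rw [h2]; simp [zipM]
      rw [e]
      simp only [hev, ih.1, ih.2, pev, List.length_cons, and_true]; ring
end alg
end Ck

namespace Ck
open List
/-! relational side -/
def Rep {ι : Type} [Fintype ι] (W : ι → ℤ) (w : ι → ℝ) (N : ℤ) (p : ℝ × ℝ) : Prop :=
  ∃ a : ι → ℤ, N = ∑ i, a i * W i ∧ p.1 = ∑ i, (a i : ℝ) * w i ∧ ∑ i, |(a i : ℝ)| ≤ p.2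
section rep
variable {ι κ : Type} [Fintype ι] [Fintype κ] {W : ι → ℤ} {w : ι → ℝ} {W' : κ → ℤ} {w' : κ → ℝ}
theorem Rep.zero : Rep W w 0 0 := ⟨0, by simp, by simp, by simp⟩
theorem Rep.add {N N' : ℤ} {p p' : ℝ × ℝ} (h : Rep W w N p) (h' : Rep W w N' p') : Rep W w (N + N') (p + p') := by
  obtain ⟨a, h1, h2, h3⟩ := h
  obtain ⟨b, k1, k2, k3⟩ := h'
  refine ⟨a + b, ?_, ?_, ?_⟩
  · rw [h1, k1, ← Finset.sum_add_distrib]; simp [add_mul]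
  · rw [Prod.fst_add, h2, k2, ← Finset.sum_add_distrib]; simp [add_mul]
  · rw [Prod.snd_add]
    refine le_trans ?_ (add_le_add h3 k3)
    rw [← Finset.sum_add_distrib]
    refine Finset.sum_le_sum fun i _ => ?_
    rw [Pi.add_apply]; push_cast; exact abs_add_le _ _
theorem Rep.mul {N N' : ℤ} {p p' : ℝ × ℝ} (h : Rep W w N p) (h' : Rep W' w' N' p') :
    Rep (fun i : κ × ι => W' i.1 * W i.2) (fun i : κ × ι => w' i.1 * w i.2) (N * N') (p * p') := by
  obtain ⟨a, h1, h2, h3⟩ := h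
  obtain ⟨b, k1, k2, k3⟩ := h'
  refine ⟨fun i => b i.1 * a i.2, ?_, ?_, ?_⟩
  · rw [h1, k1, mul_comm, Finset.sum_mul_sum, Fintype.sum_prod_type]
    refine Finset.sum_congr rfl fun i _ => Finset.sum_congr rfl fun j _ => ?_
    ring
  · rw [Prod.fst_mul, h2, k2, mul_comm, Finset.sum_mul_sum, Fintype.sum_prod_type]
    refine Finset.sum_congr rfl fun i _ => Finset.sum_congr rfl fun j _ => ?_
    push_cast; ring
  · rw [Prod.snd_mul]
    calc _ = (∑ i, |(a i : ℝ)|) * ∑ i, |(b i : ℝ)| := by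
          rw [mul_comm, Finset.sum_mul_sum, Fintype.sum_prod_type]
          refine Finset.sum_congr rfl fun i _ => Finset.sum_congr rfl fun j _ => ?_
          push_cast; rw [abs_mul]
      _ ≤ _ := mul_le_mul h3 k3 (Finset.sum_nonneg fun _ _ => abs_nonneg _) ((Finset.sum_nonneg fun _ _ => abs_nonneg _).trans h3)
theorem Rep.nsmul {N : ℤ} {p : ℝ × ℝ} (n : ℕ) (h : Rep W w N p) : Rep W w (n * N) ((n : ℝ × ℝ) * p) := by
  obtain ⟨a, h1, h2, h3⟩ := h
  refine ⟨fun i => n * a i, ?_, ?_, ?_⟩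
  · rw [h1, Finset.mul_sum]; exact Finset.sum_congr rfl fun i _ => by ring
  · rw [Prod.fst_mul, h2, Finset.mul_sum]; refine Finset.sum_congr rfl fun i _ => ?_
    push_cast [Prod.fst_natCast]; ring
  · rw [Prod.snd_mul, Prod.snd_natCast]
    refine le_trans (le_of_eq ?_) (mul_le_mul_of_nonneg_left h3 (Nat.cast_nonneg n))
    rw [Finset.mul_sum]; refine Finset.sum_congr rfl fun i _ => ?_
    push_cast; rw [abs_mul, Nat.abs_cast]
theorem Rep.nonneg {N : ℤ} {p : ℝ × ℝ} (h : Rep W w N p) : 0 ≤ p.2 := by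
  obtain ⟨a, h1, h2, h3⟩ := h
  exact (Finset.sum_nonneg fun _ _ => abs_nonneg _).trans h3
theorem Rep.ofInt (c : ℤ) : Rep (fun _ : Unit => 1) (fun _ => 1) c ((c : ℝ), |(c : ℝ)|) :=
  ⟨fun _ => c, by simp, by simp, by simp⟩
end rep

def RF (Y : ℤ) (μ ν : ℝ) (n : ℕ) (N : ℤ) (p : ℝ × ℝ) : Prop :=
  Rep (fun s : Fin (n+1) => Y ^ (s : ℕ)) (fun s : Fin (n+1) => μ ^ (s : ℕ) * ν ^ (n - s)) N p
theorem RF.up0 {Y : ℤ} {μ ν : ℝ} {n : ℕ} {N : ℤ} {p : ℝ × ℝ} (h : RF Y μ ν n N p) : RF Y μ ν (n+1) N ((ν, 1) * p) := by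
  obtain ⟨a, h1, h2, h3⟩ := h
  refine ⟨Fin.snoc a 0, ?_, ?_, ?_⟩
  · rw [Fin.sum_univ_castSucc]; simp [h1]
  · rw [Fin.sum_univ_castSucc, Prod.fst_mul, h2, Finset.mul_sum]
    simp only [Fin.snoc_castSucc, Fin.val_castSucc, Fin.snoc_last, Int.cast_zero, zero_mul, add_zero]
    refine Finset.sum_congr rfl fun i _ => ?_
    rw [Nat.succ_sub (by omega), pow_succ]; ring
  · rw [Fin.sum_univ_castSucc]; simpa using h3
theorem RF.up1 {Y : ℤ} {μ ν : ℝ} {n : ℕ} {N : ℤ} {p : ℝ × ℝ} (h : RF Y μ ν n N p) : RF Y μ ν (n+1) (Y * N) ((μ, 1) * p) := by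
  obtain ⟨a, h1, h2, h3⟩ := h
  refine ⟨Fin.cons 0 a, ?_, ?_, ?_⟩
  · rw [Fin.sum_univ_succ]; simp only [Fin.cons_zero, Fin.cons_succ, h1, Finset.mul_sum, zero_mul, zero_add, Fin.val_succ]
    refine Finset.sum_congr rfl fun i _ => ?_
    ring
  · rw [Fin.sum_univ_succ, Prod.fst_mul, h2, Finset.mul_sum]
    simp only [Fin.cons_zero, Fin.cons_succ, Fin.val_succ, Int.cast_zero, zero_mul, zero_add]
    refine Finset.sum_congr rfl fun i _ => ?_
    rw [Nat.add_sub_add_right]; ring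
  · rw [Fin.sum_univ_succ]; simpa using h3
theorem RF.step {Y : ℕ} {μ ν : ℝ} {n : ℕ} {N : ℕ} {p : ℝ × ℝ} (c d : ℕ) (h : RF Y μ ν n N p) :
    RF Y μ ν (n+1) ((Nat.mul (Nat.add c (Nat.mul d Y)) N : ℕ) : ℤ) (((c : ℝ × ℝ) * (ν, 1) + (d : ℝ × ℝ) * (μ, 1)) * p) := by
  have h1 := Rep.add (Rep.nsmul c h.up0) (Rep.nsmul d h.up1)
  unfold RF
  convert h1 using 1
  · simp only [Nat.mul_eq, Nat.add_eq]; push_cast; ring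
  · ring

theorem el_rel (Y : ℕ) (μ ν : ℝ) (a b D : ℕ) : ∀ n, Forall₂ (fun (N : ℕ) p => RF Y μ ν n N p)
    (elG 1 Nat.mul (Nat.add a (Nat.mul b Y)) (Nat.add D (Nat.mul D Y)) n)
    (elA ((a : ℝ × ℝ) * (ν, 1) + (b : ℝ × ℝ) * (μ, 1)) ((D : ℝ × ℝ) * (ν, 1) + (D : ℝ × ℝ) * (μ, 1)) n) := by
  intro n
  induction n with
  | zero =>
    refine Forall₂.cons ?_ Forall₂.nil
    refine ⟨fun _ => 1, ?_, ?_, ?_⟩ <;> simp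
  | succ n ih =>
    obtain ⟨t, h1, h2⟩ := elA_succ ((a : ℝ × ℝ) * (ν, 1) + (b : ℝ × ℝ) * (μ, 1)) ((D : ℝ × ℝ) * (ν, 1) + (D : ℝ × ℝ) * (μ, 1)) n
    rw [h2]
    have e : elG 1 Nat.mul (Nat.add a (Nat.mul b Y)) (Nat.add D (Nat.mul D Y)) (n+1) =
      List.rec [] (fun h _ _ => Nat.mul (Nat.add D (Nat.mul D Y)) h :: mapG (Nat.mul (Nat.add a (Nat.mul b Y)))
        (elG 1 Nat.mul (Nat.add a (Nat.mul b Y)) (Nat.add D (Nat.mul D Y)) n))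
        (elG 1 Nat.mul (Nat.add a (Nat.mul b Y)) (Nat.add D (Nat.mul D Y)) n) := rfl
    rw [e, mapG_eq]
    generalize elG 1 Nat.mul (Nat.add a (Nat.mul b Y)) (Nat.add D (Nat.mul D Y)) n = E at ih
    cases E with
    | nil => rw [h1] at ih; cases ih
    | cons e E =>
      refine Forall₂.cons ?_ ?_
      · rw [h1] at ih
        cases ih with
        | cons i1 i2 => rw [pow_succ']; exact RF.step D D i1
      · rw [forall₂_map_left_iff, forall₂_map_right_iff]
        exact ih.imp fun N p h => RF.step a b h

theorem dot_rel {ι κ : Type} [Fintype ι] [Fintype κ] {W : ι → ℤ} {w : ι → ℝ} {W' : κ → ℤ} {w' : κ → ℝ}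
    {l : List ℤ} {l' : List (ℝ × ℝ)} (h : Forall₂ (Rep W w) l l') :
    ∀ {E : List ℕ} {E' : List (ℝ × ℝ)}, Forall₂ (fun (N : ℕ) p => Rep W' w' N p) E E' →
    Rep (fun i : κ × ι => W' i.1 * W i.2) (fun i : κ × ι => w' i.1 * w i.2) (idot l E) (dotA l' E') := by
  induction h with
  | nil => intro E E' _; exact Rep.zero
  | cons h1 h2 ih =>
    intro E E' hE
    cases hE with
    | nil => exact Rep.zero
    | cons k1 k2 => exact Rep.add (Rep.mul h1 k1) (ih k2)

def RM {ι : Type} [Fintype ι] (Z : ℕ) (W : ι → ℤ) (w : ι → ℝ) (N : ℕ) (p : ℝ × ℝ) : Prop :=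
  ∃ M : ℤ, (Z : ℤ) ∣ N - M ∧ Rep W w M p
section rm
variable {ι : Type} [Fintype ι] {W : ι → ℤ} {w : ι → ℝ} {Z : ℕ}
theorem RM.add {N N' : ℕ} {p p' : ℝ × ℝ} (h : RM Z W w N p) (h' : RM Z W w N' p') : RM Z W w (Nat.add N N') (p + p') := by
  obtain ⟨M, h1, h2⟩ := h
  obtain ⟨M', k1, k2⟩ := h'
  refine ⟨M + M', ?_, h2.add k2⟩
  have := dvd_add h1 k1
  rw [Nat.add_eq]; push_cast
  exact this.trans (dvd_of_eq (by ring))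
theorem RM.nsmul {N : ℕ} {p : ℝ × ℝ} (n : ℕ) (h : RM Z W w N p) : RM Z W w (Nat.mul n N) (mA n p) := by
  obtain ⟨M, h1, h2⟩ := h
  refine ⟨n * M, ?_, h2.nsmul n⟩
  have := dvd_mul_of_dvd_right h1 (n : ℤ)
  rw [Nat.mul_eq]; push_cast
  exact this.trans (dvd_of_eq (by ring))
theorem resid_rel (hZ : 0 < Z) {l : List ℤ} {l' : List (ℝ × ℝ)} (h : Forall₂ (Rep W w) l l') :
    ∀ (d : List ℕ), Forall₂ (RM Z W w) (resid Z l d) (zipM l' (d.map (fun n : ℕ => (n : ℝ × ℝ)))) := by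
  induction h with
  | nil => intro d; exact Forall₂.nil
  | cons h1 h2 ih =>
    intro d
    cases d with
    | nil => exact Forall₂.nil
    | cons d0 d =>
      refine Forall₂.cons ?_ (ih d)
      rename_i c p _ _
      refine ⟨d0 * c, ?_, ?_⟩
      · have hp : (0 : ℤ) < Z := by exact_mod_cast hZ
        have e : (((Int.mul c (Int.ofNat d0)).emod (Int.ofNat Z)).toNat : ℤ) = (c * d0) % (Z : ℤ) :=
          Int.toNat_of_nonneg (Int.emod_nonneg _ hp.ne')
        rw [e, mul_comm (d0 : ℤ) c]
        refine ⟨-((c * d0) / (Z : ℤ)), ?_⟩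
        have := Int.emod_add_mul_ediv (c * d0) (Z : ℤ)
        linarith
      · show Rep W w _ (p * (d0 : ℝ × ℝ))
        rw [mul_comm p]; exact h1.nsmul d0

theorem pass_rel {A B : Type} {R : A → B → Prop} {f : A → A → A} {f' : B → B → B}
    (hf : ∀ {a b a' b'}, R a b → R a' b' → R (f a a') (f' b b')) {l : List A} {l' : List B} (h : Forall₂ R l l') :
    Forall₂ R (passG f l) (passG f' l') := by
  induction h with
  | nil => exact Forall₂.nil
  | @cons c c' l l' h1 h2 ih =>
    have e1 : passG f (c :: l) = List.rec [c] (fun h t _ => f c h :: h :: t) (passG f l) := rfl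
    have e2 : passG f' (c' :: l') = List.rec [c'] (fun h t _ => f' c' h :: h :: t) (passG f' l') := rfl
    rw [e1, e2]
    generalize passG f l = r at ih
    generalize passG f' l' = r' at ih
    cases ih with
    | nil => exact Forall₂.cons h1 Forall₂.nil
    | cons k1 k2 => exact Forall₂.cons (hf h1 k1) (Forall₂.cons k1 k2)
theorem tayl_rel {A B : Type} {R : A → B → Prop} {f : A → A → A} {f' : B → B → B}
    (hf : ∀ {a b a' b'}, R a b → R a' b' → R (f a a') (f' b b')) : ∀ (n : ℕ) {l : List A} {l' : List B}, Forall₂ R l l' →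
    Forall₂ R (taylG f n l) (taylG f' n l') := by
  intro n
  induction n with
  | zero => intro l l' _; exact Forall₂.nil
  | succ n ih =>
    intro l l' h
    have e1 : taylG f (n+1) l = List.rec [] (fun h t _ => h :: taylG f n t) (passG f l) := rfl
    have e2 : taylG f' (n+1) l' = List.rec [] (fun h t _ => h :: taylG f' n t) (passG f' l') := rfl
    rw [e1, e2]
    have hp := pass_rel hf h
    generalize passG f l = r at hp
    generalize passG f' l' = r' at hp
    cases hp with
    | nil => exact Forall₂.nil
    | cons k1 k2 => exact Forall₂.cons k1 (ih k2)
theorem scal_rel {A B : Type} {R : A → B → Prop} {m : ℕ → A → A} {m' : ℕ → B → B}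
    (hm : ∀ n {a b}, R a b → R (m n a) (m' n b)) (e : ℕ) {l : List A} {l' : List B} (h : Forall₂ R l l') :
    ∀ p, Forall₂ R (scalG m e l p) (scalG m' e l' p) := by
  induction h with
  | nil => intro p; exact Forall₂.nil
  | cons h1 h2 ih => intro p; exact Forall₂.cons (hm p h1) (ih _)
theorem alg_rel {A B : Type} {R : A → B → Prop} {f : A → A → A} {f' : B → B → B} {m : ℕ → A → A} {m' : ℕ → B → B}
    (hf : ∀ {a b a' b'}, R a b → R a' b' → R (f a a') (f' b b'))
    (hm : ∀ n {a b}, R a b → R (m n a) (m' n b)) (a e n : ℕ) {l : List A} {l' : List B} (h : Forall₂ R l l') :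
    Forall₂ R (algG f m a e n l) (algG f' m' a e n l') := by
  unfold algG
  refine tayl_rel hf n ?_
  rw [revG_eq, revG_eq, List.append_nil, List.append_nil]
  refine List.rel_reverse ?_
  exact scal_rel hm e (tayl_rel (fun h1 h2 => hf h1 (hm a h2)) n h) 1
theorem add_rel {A B : Type} {R : A → B → Prop} {f : A → A → A} {f' : B → B → B}
    (hf : ∀ {a b a' b'}, R a b → R a' b' → R (f a a') (f' b b')) {l : List A} {l' : List B} (h : Forall₂ R l l') :
    ∀ {m : List A} {m' : List B}, Forall₂ R m m' → Forall₂ R (addG f l m) (addG f' l' m') := by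
  induction h with
  | nil => intro m m' _; exact Forall₂.nil
  | cons h1 h2 ih =>
    intro m m' hm
    cases hm with
    | nil => exact Forall₂.nil
    | cons k1 k2 => exact Forall₂.cons (hf h1 k1) (ih k2)
end rm
end Ck

namespace Ck
open List
theorem digits (B : ℕ) (hB : 1 ≤ B) : ∀ (m : ℕ) (r : ℕ) (a : ℕ → ℤ),
    ((2 : ℤ) ^ (B * m)) ∣ r - ∑ n ∈ Finset.range m, a n * 2 ^ (B * n) →
    (∀ n < m, |a n| < 2 ^ (B - 1)) → (∀ n < m, r.testBit (B * n + (B - 1)) = false) → ∀ n < m, 0 ≤ a n := by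
  intro m
  induction m with
  | zero => intro r a _ _ _ n hn; omega
  | succ m ih =>
    intro r a hd hb ht
    have hpow : (2 : ℤ) ^ B = 2 * 2 ^ (B - 1) := by
      rw [← pow_succ']; congr 1; omega
    have hpowN : 2 ^ B = 2 * 2 ^ (B - 1) := by
      rw [← pow_succ']; congr 1; omega
    rw [Finset.sum_range_succ'] at hd
    have e1 : ∑ k ∈ Finset.range m, a (k + 1) * (2 : ℤ) ^ (B * (k + 1)) =
        2 ^ B * ∑ k ∈ Finset.range m, a (k + 1) * (2 : ℤ) ^ (B * k) := by
      rw [Finset.mul_sum]; refine Finset.sum_congr rfl fun k _ => ?_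
      rw [mul_add, pow_add]; ring
    rw [e1] at hd
    simp only [mul_zero, pow_zero, mul_one] at hd
    set SS := ∑ k ∈ Finset.range m, a (k + 1) * (2 : ℤ) ^ (B * k) with hSS
    have hrm : r % 2 ^ B < 2 ^ (B - 1) := by
      have h0 := ht 0 (by omega)
      rw [mul_zero, zero_add] at h0
      have : r % 2 ^ B % 2 ^ (B-1) = r % 2 ^ B := by
        apply Nat.eq_of_testBit_eq
        intro i
        rw [Nat.testBit_mod_two_pow, Nat.testBit_mod_two_pow]
        by_cases h1 : i < B - 1
        · simp [h1]
        · by_cases h2 : i = B - 1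
          · subst h2; simp [h0]
          · have : ¬ i < B := by omega
            simp [h1, this]
      rw [← this]; exact Nat.mod_lt _ (by positivity)
    have hdiv : (r : ℤ) = 2 ^ B * (r / 2 ^ B : ℕ) + (r % 2 ^ B : ℕ) := by
      exact_mod_cast (Nat.div_add_mod r (2 ^ B)).symm
    obtain ⟨q, hq⟩ := hd
    have hbm : (2 : ℤ) ^ (B * (m + 1)) = 2 ^ B * 2 ^ (B * m) := by rw [mul_add, pow_add]; ring
    rw [hbm, hdiv] at hq
    have hb0 := abs_lt.1 (hb 0 (by omega))
    have hrm' : ((r % 2 ^ B : ℕ) : ℤ) < 2 ^ (B - 1) := by exact_mod_cast hrm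
    have hrm0 : (0 : ℤ) ≤ ((r % 2 ^ B : ℕ) : ℤ) := Int.natCast_nonneg _
    have hz : ((r % 2 ^ B : ℕ) : ℤ) - a 0 = 0 := by
      have h2 : (2 : ℤ) ^ B ∣ ((r % 2 ^ B : ℕ) : ℤ) - a 0 := ⟨2 ^ (B * m) * q - (r / 2 ^ B : ℕ) + SS, by linarith⟩
      apply Int.eq_zero_of_abs_lt_dvd h2
      rw [hpow, abs_lt]; constructor <;> linarith
    have hp : (0 : ℤ) < 2 ^ B := by positivity
    have ih' := ih (r / 2 ^ B) (fun n => a (n + 1)) ⟨q, by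
        have : (2 : ℤ) ^ B * ((r / 2 ^ B : ℕ) - SS ) = 2 ^ B * (2 ^ (B * m) * q) := by linarith
        exact mul_left_cancel₀ hp.ne' this⟩ (fun n hn => hb (n+1) (by omega)) (fun n hn => by
        have := ht (n+1) (by omega)
        rw [Nat.testBit_div_two_pow]
        convert this using 2; ring)
    intro n hn
    cases n with
    | zero => linarith
    | succ n => exact ih' n (by omega)

theorem mask_testBit : ∀ m n, n < m → (maskN m).testBit (608 * n + 607) = true := by
  intro m
  induction m with
  | zero => intro n h; omega
  | succ m ih =>
    intro n hn
    have e : maskN (m+1) = 2 ^ 608 * maskN m + 2 ^ 607 := by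
      have : maskN (m+1) = 2 ^ 607 + 2 ^ 608 * maskN m := rfl
      rw [this, add_comm]
    rw [e, Nat.testBit_two_pow_mul_add _ (Nat.pow_lt_pow_right (by norm_num) (by norm_num))]
    cases n with
    | zero => rw [if_pos (by norm_num)]; exact Nat.testBit_two_pow_self
    | succ n =>
      rw [if_neg (by omega), show 608 * (n + 1) + 607 - 608 = 608 * n + 607 by omega]
      exact ih n (by omega)

def PZ (Z : ℕ) : Prop := Z = 2 ^ (608 * 289)
abbrev I2 := Fin (16+1) × (Fin (16+1) × Unit)
abbrev W2 : I2 → ℤ := fun i => (((2 ^ 10336 : ℕ) : ℤ) ^ (i.1 : ℕ)) * ((((2 ^ 608 : ℕ) : ℤ) ^ (i.2.1 : ℕ)) * 1)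

theorem nonneg_of_mask {w : I2 → ℝ} (hw : ∀ i, 0 ≤ w i) {Z : ℕ} (hZ : PZ Z) {r : ℕ} {p : ℝ × ℝ} (h : RM Z W2 w r p)
    (hm : Nat.beq (Nat.land r (maskN 289)) 0 = true) (hp : p.2 < 2 ^ 607) : 0 ≤ p.1 := by
  obtain ⟨M, h1, a, h2, h3, h4⟩ := h
  have hm0 : r &&& maskN 289 = 0 := Nat.eq_of_beq_eq_true hm
  have ht : ∀ n < 289, r.testBit (608 * n + (608 - 1)) = false := by
    intro n hn
    have := congrArg (fun t => t.testBit (608 * n + 607)) hm0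
    simpa [Nat.testBit_and, mask_testBit 289 n hn] using this
  let a' : ℕ → ℤ := fun n => a (Fin.ofNat 17 (n / 17), (Fin.ofNat 17 (n % 17), ()))
  have hb : ∀ i, |a i| < 2 ^ (608 - 1) := by
    intro i
    have : |(a i : ℝ)| ≤ ∑ i, |(a i : ℝ)| := Finset.single_le_sum (f := fun i => |(a i : ℝ)|) (fun _ _ => abs_nonneg _) (Finset.mem_univ i)
    have h5 : |(a i : ℝ)| < 2 ^ 607 := by linarith
    exact_mod_cast h5
  have hs : M = ∑ n ∈ Finset.range 289, a' n * 2 ^ (608 * n) := by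
    rw [h2, Finset.sum_range (n := 289), Fintype.sum_prod_type]
    simp only [Fintype.sum_prod_type]
    rw [← (finProdFinEquiv (m := 17) (n := 17)).sum_comp, Fintype.sum_prod_type]
    refine Finset.sum_congr rfl fun t _ => Finset.sum_congr rfl fun s _ => ?_
    have hv : ((finProdFinEquiv (t, s) : Fin (17 * 17)) : ℕ) = s + 17 * t := rfl
    have hs17 : (s : ℕ) < 17 := s.2
    have ht17 : (t : ℕ) < 17 := t.2
    have d1 : ((s : ℕ) + 17 * t) / 17 = t := by omega
    have d2 : ((s : ℕ) + 17 * t) % 17 = s := by omega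
    have f1 : Fin.ofNat 17 (t : ℕ) = t := Fin.ext (Nat.mod_eq_of_lt ht17)
    have f2 : Fin.ofNat 17 (s : ℕ) = s := Fin.ext (Nat.mod_eq_of_lt hs17)
    simp only [a', hv, d1, d2, f1, f2]
    simp only [Finset.univ_unique, Finset.sum_singleton, W2]
    rw [mul_one, Nat.cast_pow, Nat.cast_pow, ← pow_mul, ← pow_mul, ← pow_add]
    have : 10336 * (t : ℕ) + 608 * s = 608 * (s + 17 * t) := by ring
    rw [this]; rfl
  have key := digits 608 (by norm_num) 289 r a' (by
    rw [← hs]; unfold PZ at hZ; rw [hZ] at h1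
    rw [Nat.cast_pow] at h1
    exact h1) (fun n _ => hb _) ht
  rw [h3]
  refine Finset.sum_nonneg fun i _ => mul_nonneg ?_ (hw i)
  obtain ⟨t, s, u⟩ := i
  have hs17 : (s : ℕ) < 17 := s.2
  have ht17 : (t : ℕ) < 17 := t.2
  have := key (s + 17 * t) (by omega)
  have d1 : ((s : ℕ) + 17 * t) / 17 = t := by omega
  have d2 : ((s : ℕ) + 17 * t) % 17 = s := by omega
  have f1 : Fin.ofNat 17 (t : ℕ) = t := Fin.ext (Nat.mod_eq_of_lt ht17)
  have f2 : Fin.ofNat 17 (s : ℕ) = s := Fin.ext (Nat.mod_eq_of_lt hs17)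
  simp only [a', d1, d2, f1, f2] at this
  exact_mod_cast this

theorem hev_fst (μ ν : ℝ × ℝ) (l : List (ℝ × ℝ)) (hμ : 0 ≤ μ.1) (hν : 0 ≤ ν.1) (h : ∀ p ∈ l, 0 ≤ p.1) : 0 ≤ (hev μ ν l).1 := by
  induction l with
  | nil => simp [hev]
  | cons c l ih =>
    simp only [hev, Prod.fst_add, Prod.fst_mul, Prod.pow_fst]
    have := h c (by simp)
    have := ih fun p hp => h p (by simp [hp])
    positivity
theorem hev_snd (μ ν : ℝ × ℝ) (l : List (ℝ × ℝ)) (hμ : μ.2 = 1) (hν : ν.2 = 1) (h : ∀ p ∈ l, 0 ≤ p.2) :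
    0 ≤ (hev μ ν l).2 ∧ ∀ p ∈ l, p.2 ≤ (hev μ ν l).2 := by
  induction l with
  | nil => simp [hev]
  | cons c l ih =>
    simp only [hev, Prod.snd_add, Prod.snd_mul, Prod.pow_snd, hμ, hν, one_pow, mul_one, one_mul]
    have h1 := h c (by simp)
    have h2 := ih fun p hp => h p (by simp [hp])
    refine ⟨by linarith, ?_⟩
    intro p hp
    rcases List.mem_cons.1 hp with rfl | hp
    · linarith
    · linarith [h2.2 p hp]

theorem el_cast (P Q : ℕ) : ∀ n, (elG 1 Nat.mul P Q n).map (fun n : ℕ => (n : ℝ × ℝ)) = elA (P : ℝ × ℝ) Q n := by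
  intro n
  induction n with
  | zero => simp [elG, elA]
  | succ n ih =>
    obtain ⟨t, h1, h2⟩ := elA_succ (P : ℝ × ℝ) Q n
    have e : elG 1 Nat.mul P Q (n+1) =
      List.rec [] (fun h _ _ => Nat.mul Q h :: mapG (Nat.mul P) (elG 1 Nat.mul P Q n)) (elG 1 Nat.mul P Q n) := rfl
    rw [e, h2, mapG_eq, ← ih]
    generalize elG 1 Nat.mul P Q n = E at ih
    cases E with
    | nil => rw [h1] at ih; simp at ih
    | cons e E =>
      rw [h1] at ih
      simp only [List.map_cons, List.cons.injEq] at ih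
      simp only [List.map_cons, List.map_map, Nat.mul_eq, Nat.cast_mul, ih.1]
      refine congrArg₂ _ (by ring) (congrArg₂ _ (by rw [← ih.1]) ?_)
      exact List.map_congr_left fun x _ => by simp

theorem param (a b : ℕ) (x : ℝ) (hab : a < b) (h1 : (a : ℝ) ≤ 128 * x) (h2 : 128 * x ≤ b) :
    ∃ μ ν : ℝ, 0 ≤ μ ∧ 0 ≤ ν ∧ ν + μ = 1 ∧ a * ν + b * μ = 128 * x := by
  have h : (a : ℝ) < b := by exact_mod_cast hab
  have hne : (b : ℝ) - a ≠ 0 := by linarith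
  refine ⟨(128 * x - a) / (b - a), (b - 128 * x) / (b - a), div_nonneg (by linarith) (by linarith), div_nonneg (by linarith) (by linarith), ?_, ?_⟩
  · field_simp; ring
  · field_simp; ring

theorem leaf {w : I2 → ℝ} (hw : ∀ i, 0 ≤ w i) {Z : ℕ} (hZ : PZ Z) {c nd : List ℕ} {l l' : List (ℝ × ℝ)}
    (hl : l.length = 17) (hl' : l'.length = 17)
    (hc : Forall₂ (RM Z W2 w) c (zipM l (elA 1 128 16)))
    (hn : Forall₂ (RM Z W2 w) nd (zipM l' (elA 1 128 16)))
    (K1 K2 : ℝ) (hK1 : ∀ ζ : ℝ × ℝ, 0 ≤ ζ.2 → ζ.2 ≤ 3/2 → (pev ζ l).2 ≤ K1)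
    (hK20 : 0 ≤ K2) (hK2 : ∀ ζ : ℝ × ℝ, 0 ≤ ζ.2 → ζ.2 ≤ 3/2 → (pev ζ l').2 ≤ K2)
    (hKK : 256 ^ 16 * (K1 + 2 ^ 70 * K2) < 2 ^ 607)
    {a b g : ℕ} (hleaf : leafOK a b g c nd = true) (z : ℝ) (hz1 : (a : ℝ) ≤ 128 * z) (hz2 : 128 * z ≤ b) :
    ∃ g : ℝ, 0 ≤ g ∧ ∃ t : ℝ, 0 ≤ (pev (z, t) l).1 + g * (pev (z, t) l').1 := by
  unfold leafOK at hleaf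
  rw [andB_true, andB_true, andB_true, allG_true] at hleaf
  obtain ⟨⟨hab, hb, hg⟩, hall⟩ := hleaf
  have hab : a < b := Nat.le_of_ble_eq_true hab
  have hb : b ≤ 192 := Nat.le_of_ble_eq_true hb
  have hg : g ≤ 2 ^ 70 := Nat.le_of_ble_eq_true hg
  obtain ⟨ν, μ, hν, hμ, hsum, hlin⟩ := param a b z hab hz1 hz2
  set ζ : ℝ × ℝ := (z, ((a : ℝ) + b) / 256) with hζ
  refine ⟨g, Nat.cast_nonneg _, ((a : ℝ) + b) / 256, ?_⟩
  rw [mapG_eq] at hall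
  have hrel := alg_rel (R := RM Z W2 w) (f := Nat.add) (f' := (· + ·)) (m := Nat.mul) (m' := mA) (fun h h' => RM.add h h')
    (fun n _ _ h => RM.nsmul n h) a (Nat.sub b a) 17 (add_rel (f := Nat.add) (f' := (· + ·)) (fun h h' => RM.add h h') hc
      (m := nd.map (Nat.mul g)) (m' := (zipM l' (elA 1 128 16)).map (mA g)) (by
        rw [forall₂_map_left_iff, forall₂_map_right_iff]; exact hn.imp fun _ _ h => RM.nsmul g h))
  set L := zipM l (elA 1 128 16) with hL
  set L' := zipM l' (elA 1 128 16) with hL'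
  have zl := zip_el ζ (((μ, 1) : ℝ × ℝ) + (ν, 1)) 128 16 l hl
  have zl' := zip_el ζ (((μ, 1) : ℝ × ℝ) + (ν, 1)) 128 16 l' hl'
  have hadd := hev_add ((a : ℝ × ℝ) * ((μ, 1) : ℝ × ℝ) + ((a + Nat.sub b a : ℕ) : ℝ × ℝ) * ((ν, 1) : ℝ × ℝ)) (((μ, 1) : ℝ × ℝ) + (ν, 1)) L (L'.map (mA g))
    (by rw [List.length_map, zl.2, zl'.2])
  have hev1 := alg_hev a (Nat.sub b a) 17 ((μ, 1) : ℝ × ℝ) (ν, 1) (addG (· + ·) L (L'.map (mA g))) (by rw [hadd.2, zl.2])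
  have harg : ((a : ℝ × ℝ) * ((μ, 1) : ℝ × ℝ) + ((a + Nat.sub b a : ℕ) : ℝ × ℝ) * ((ν, 1) : ℝ × ℝ)) = ζ * 128 * (((μ, 1) : ℝ × ℝ) + (ν, 1)) := by
    have : a + Nat.sub b a = b := by
      have : Nat.sub b a = b - a := rfl
      omega
    rw [this]
    ext
    · simp [hζ]
      rw [show μ + ν = 1 by linarith]; linarith
    · simp [hζ]; ring
  have hmap : L'.map (mA g) = L'.map ((g : ℝ × ℝ) * ·) := rfl
  rw [hadd.1, hmap, hev_map, harg, zl.1, zl'.1, ← hmap] at hev1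
  have hζ2 : 0 ≤ ζ.2 ∧ ζ.2 ≤ 3/2 := by
    have : (b : ℝ) ≤ 192 := by exact_mod_cast hb
    have : (a : ℝ) ≤ b := by exact_mod_cast hab.le
    simp only [hζ]
    constructor
    · positivity
    · linarith
  have hDq : (128 * (((μ, 1) : ℝ × ℝ) + (ν, 1))) = (128, 256) := by
    ext
    · simp; linarith
    · simp; norm_num
  rw [hDq] at hev1
  generalize algG Nat.add Nat.mul a (Nat.sub b a) 17 (addG Nat.add c (nd.map (Nat.mul g))) = res at hall hrel
  generalize algG (· + ·) mA a (Nat.sub b a) 17 (addG (· + ·) L (L'.map (mA g))) = res' at hev1 hrel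
  have hnn : ∀ p ∈ res', 0 ≤ p.2 := by
    intro p hp
    obtain ⟨i, hi, rfl⟩ := List.getElem_of_mem hp
    have := (forall₂_iff_get.1 hrel).2 i (by rw [hrel.length_eq]; exact hi) hi
    obtain ⟨M, _, h⟩ := this
    exact h.nonneg
  have hsnd := hev_snd (μ, 1) (ν, 1) res' rfl rfl hnn
  have hbound : (hev (μ, 1) (ν, 1) res').2 < 2 ^ 607 := by
    rw [hev1]
    simp only [Prod.snd_add, Prod.snd_mul, Prod.pow_snd, Prod.snd_natCast]
    have k1 := hK1 ζ hζ2.1 hζ2.2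
    have k2 := hK2 ζ hζ2.1 hζ2.2
    have hg' : (g : ℝ) ≤ 2 ^ 70 := by exact_mod_cast hg
    have k3 : (g : ℝ) * (pev ζ l').2 ≤ 2 ^ 70 * K2 :=
      (mul_le_mul_of_nonneg_left k2 (Nat.cast_nonneg g)).trans (mul_le_mul_of_nonneg_right hg' hK20)
    calc _ = 256 ^ 16 * ((pev ζ l).2 + g * (pev ζ l').2) := by ring
      _ ≤ 256 ^ 16 * (K1 + 2 ^ 70 * K2) := mul_le_mul_of_nonneg_left (by linarith) (by positivity)
      _ < _ := hKK
  have hfst := hev_fst (μ, 1) (ν, 1) res' hμ hν (by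
    intro p hp
    have hb2 := hsnd.2 p hp
    obtain ⟨i, hi, rfl⟩ := List.getElem_of_mem hp
    have hi' : i < res.length := by rw [hrel.length_eq]; exact hi
    have := (forall₂_iff_get.1 hrel).2 i hi' hi
    exact nonneg_of_mask hw hZ this (hall _ (List.getElem_mem hi')) (lt_of_le_of_lt hb2 hbound))
  rw [hev1] at hfst
  simp only [Prod.fst_add, Prod.fst_mul, Prod.pow_fst, Prod.fst_natCast] at hfst
  have : (0 : ℝ) ≤ 128 ^ 16 * ((pev ζ l).1 + g * (pev ζ l').1) := by linarith
  exact nonneg_of_mul_nonneg_right this (by positivity)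
end Ck

noncomputable def tev (T : List (List (List ℤ))) (x y z : ℝ) : ℝ :=
  gev (gev (gev (fun c : ℤ => (c : ℝ)) x) y) z T
namespace Ck
open List
theorem stage (Y a b : ℕ) (hab : a < b) (hb : b ≤ 192) (x : ℝ) (h1 : (a : ℝ) ≤ 128 * x) (h2 : 128 * x ≤ b) :
    ∃ w' : Fin (16+1) → ℝ, (∀ i, 0 ≤ w' i) ∧ ∃ ξ : ℝ × ℝ, ξ.1 = x ∧ 0 ≤ ξ.2 ∧ ξ.2 ≤ 3/2 ∧
    ∀ {ι : Type} [Fintype ι] {W : ι → ℤ} {w : ι → ℝ} {l : List ℤ} {l' : List (ℝ × ℝ)}, Forall₂ (Rep W w) l l' → l'.length ≤ 17 →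
    Rep (fun i : Fin (16+1) × ι => (Y : ℤ) ^ (i.1 : ℕ) * W i.2) (fun i => w' i.1 * w i.2) (idot l (El Y a b))
      ((128, 256) ^ 16 * pev ξ l') := by
  obtain ⟨μ, ν, hμ, hν, hsum, hlin⟩ := param a b x hab h1 h2
  have hbr : (b : ℝ) ≤ 192 := by exact_mod_cast hb
  have habr : (a : ℝ) ≤ b := by exact_mod_cast hab.le
  refine ⟨fun s => μ ^ (s : ℕ) * ν ^ (16 - (s : ℕ)), fun i => by positivity, (x, ((a : ℝ) + b) / 256), rfl, by positivity, by simp only []; linarith, ?_⟩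
  intro ι _ W w l l' h hl
  have hE := el_rel Y μ ν a b 128 16
  have hQ : (((128 : ℕ) : ℝ × ℝ) * (ν, 1) + ((128 : ℕ) : ℝ × ℝ) * (μ, 1)) = (128, 256) := by
    ext
    · simp; linarith
    · simp; norm_num
  have hP : ((a : ℝ × ℝ) * (ν, 1) + (b : ℝ × ℝ) * (μ, 1)) = (x, ((a : ℝ) + b) / 256) * (128, 256) := by
    ext
    · simp; linarith
    · simp
  rw [hQ, hP] at hE
  have := dot_rel h hE
  rw [dot_el _ _ 16 l' hl] at this
  exact this

def lift (c : ℤ) : ℝ × ℝ := ((c : ℝ), |(c : ℝ)|)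
theorem pev_fst {A : Type} (f : A → ℝ × ℝ) (ξ : ℝ × ℝ) (l : List A) : (pev ξ (l.map f)).1 = gev (fun a => (f a).1) ξ.1 l := by
  induction l with
  | nil => rfl
  | cons c l ih => simp only [List.map_cons, pev, gev, ← ih]; simp
theorem pev_snd {A : Type} (f : A → ℝ × ℝ) (ξ : ℝ × ℝ) (h0 : 0 ≤ ξ.2) (h1 : ξ.2 ≤ 3/2) (K : ℝ) (hK : 0 ≤ K) (l : List A) :
    (∀ a ∈ l, 0 ≤ (f a).2 ∧ (f a).2 ≤ K) → 0 ≤ (pev ξ (l.map f)).2 ∧ (pev ξ (l.map f)).2 ≤ K * (2 * (3/2) ^ l.length - 2) := by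
  induction l with
  | nil => intro _; simp [pev]
  | cons c l ih =>
    intro h
    obtain ⟨i1, i2⟩ := ih fun a ha => h a (by simp [ha])
    obtain ⟨c1, c2⟩ := h c (by simp)
    simp only [List.map_cons, pev, Prod.snd_add, Prod.snd_mul, List.length_cons]
    refine ⟨by positivity, ?_⟩
    have : ξ.2 * (pev ξ (l.map f)).2 ≤ 3/2 * (K * (2 * (3/2) ^ l.length - 2)) := mul_le_mul h1 i2 i1 (by norm_num)
    rw [pow_succ]; linarith
theorem pev_snd17 {A : Type} (f : A → ℝ × ℝ) (ξ : ℝ × ℝ) (h0 : 0 ≤ ξ.2) (h1 : ξ.2 ≤ 3/2) (K : ℝ) (hK : 0 ≤ K) (l : List A) (hl : l.length ≤ 17)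
    (h : ∀ a ∈ l, 0 ≤ (f a).2 ∧ (f a).2 ≤ K) : 0 ≤ (pev ξ (l.map f)).2 ∧ (pev ξ (l.map f)).2 ≤ 2000 * K := by
  have := pev_snd f ξ h0 h1 K hK l h
  refine ⟨this.1, this.2.trans ?_⟩
  have h3 : ((3 : ℝ)/2) ^ l.length ≤ (3/2) ^ 17 := pow_le_pow_right₀ (by norm_num) hl
  have h4 : 2 * ((3 : ℝ)/2) ^ l.length - 2 ≤ 2000 := by norm_num at h3 ⊢; linarith
  rw [mul_comm]
  exact mul_le_mul_of_nonneg_right h4 hK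

def okT (K : ℤ) (T : List (List (List ℤ))) : Prop :=
  T.length = 17 ∧ ∀ m ∈ T, m.length ≤ 17 ∧ ∀ l ∈ m, l.length ≤ 17 ∧ ∀ c ∈ l, |c| ≤ K

/-- iterated evaluation in `ℝ × ℝ` -/
noncomputable def uA (T : List (List (List ℤ))) (ξ : ℝ × ℝ) : List (List (ℝ × ℝ)) :=
  T.map fun m => m.map fun l => (128, 256) ^ 16 * pev ξ (l.map lift)
noncomputable def vA (T : List (List (List ℤ))) (ξ η : ℝ × ℝ) : List (ℝ × ℝ) :=
  (uA T ξ).map fun m => (128, 256) ^ 16 * pev η m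

theorem vA_fst (T : List (List (List ℤ))) (ξ η ζ : ℝ × ℝ) :
    (pev ζ (vA T ξ η)).1 = 128 ^ 32 * tev T ξ.1 η.1 ζ.1 := by
  have e : vA T ξ η = (T.map fun m => pev η (m.map fun l => pev ξ (l.map lift))).map ((128, 256) ^ 32 * ·) := by
    unfold vA uA
    rw [List.map_map, List.map_map]
    refine List.map_congr_left fun m _ => ?_
    have : (m.map fun l => (128, 256) ^ 16 * pev ξ (l.map lift)) = (m.map fun l => pev ξ (l.map lift)).map ((128, 256) ^ 16 * ·) := by
      rw [List.map_map]; rfl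
    simp only [Function.comp_apply]
    rw [this, pev_map]; ring
  rw [e, pev_map, Prod.fst_mul, Prod.pow_fst, pev_fst]
  congr 1
  unfold tev
  congr 1
  funext m
  rw [pev_fst]
  congr 1
  funext l
  rw [pev_fst]; rfl

theorem vA_snd (K : ℤ) (hK : 0 ≤ K) (T : List (List (List ℤ))) (h : okT K T) (ξ η ζ : ℝ × ℝ) (hξ : 0 ≤ ξ.2 ∧ ξ.2 ≤ 3/2) (hη : 0 ≤ η.2 ∧ η.2 ≤ 3/2)
    (hζ0 : 0 ≤ ζ.2) (hζ1 : ζ.2 ≤ 3/2) : (pev ζ (vA T ξ η)).2 ≤ 2000 * (256 ^ 16 * (2000 * (256 ^ 16 * (2000 * (K : ℝ))))) := by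
  obtain ⟨h1, h2⟩ := h
  have hK' : (0 : ℝ) ≤ K := by exact_mod_cast hK
  unfold vA uA
  rw [List.map_map]
  refine (pev_snd17 _ ζ hζ0 hζ1 _ (by positivity) T h1.le ?_).2
  intro m hm
  obtain ⟨h3, h4⟩ := h2 m hm
  simp only [Function.comp_apply, Prod.snd_mul, Prod.pow_snd]
  have := pev_snd17 (fun l : List ℤ => ((128, 256) : ℝ × ℝ) ^ 16 * pev ξ (l.map lift)) η hη.1 hη.2 (256 ^ 16 * (2000 * (K : ℝ))) (by positivity) m h3 ?_
  · exact ⟨mul_nonneg (by positivity) this.1, mul_le_mul_of_nonneg_left this.2 (by positivity)⟩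
  intro l hl
  obtain ⟨h5, h6⟩ := h4 l hl
  simp only [Prod.snd_mul, Prod.pow_snd]
  have := pev_snd17 lift ξ hξ.1 hξ.2 (K : ℝ) hK' l h5 (fun c hc => ⟨abs_nonneg _, by
    have := h6 c hc
    show |(c : ℝ)| ≤ K
    exact_mod_cast this⟩)
  exact ⟨mul_nonneg (by positivity) this.1, mul_le_mul_of_nonneg_left this.2 (by positivity)⟩

theorem u_rel (K : ℤ) (T : List (List (List ℤ))) (h : okT K T) (Y a b : ℕ) (w' : Fin (16+1) → ℝ) (ξ : ℝ × ℝ)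
    (hs : ∀ {ι : Type} [Fintype ι] {W : ι → ℤ} {w : ι → ℝ} {l : List ℤ} {l' : List (ℝ × ℝ)}, Forall₂ (Rep W w) l l' → l'.length ≤ 17 →
    Rep (fun i : Fin (16+1) × ι => (Y : ℤ) ^ (i.1 : ℕ) * W i.2) (fun i => w' i.1 * w i.2) (idot l (El Y a b))
      ((128, 256) ^ 16 * pev ξ l')) :
    Forall₂ (Forall₂ (Rep (fun i : Fin (16+1) × Unit => (Y : ℤ) ^ (i.1 : ℕ) * 1) (fun i => w' i.1 * 1)))
      (ustage T (El Y a b)) (uA T ξ) := by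
  unfold ustage uA
  rw [mapG_eq, forall₂_map_left_iff, forall₂_map_right_iff, forall₂_same]
  intro m hm
  rw [mapG_eq, forall₂_map_left_iff, forall₂_map_right_iff, forall₂_same]
  intro l hl
  refine hs (ι := Unit) (W := fun _ => 1) (w := fun _ => 1) ?_ ?_
  · rw [forall₂_map_right_iff, forall₂_same]
    intro c _; exact Rep.ofInt c
  · rw [List.length_map]; exact ((h.2 m hm).2 l hl).1

theorem v_rel {Z : ℕ} (hZ : 0 < Z) (K : ℤ) (T : List (List (List ℤ))) (h : okT K T) (Y a b : ℕ) (w' : Fin (16+1) → ℝ) (ξ η : ℝ × ℝ)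
    {ι : Type} [Fintype ι] {W : ι → ℤ} {w : ι → ℝ}
    (hs : ∀ {ι : Type} [Fintype ι] {W : ι → ℤ} {w : ι → ℝ} {l : List ℤ} {l' : List (ℝ × ℝ)}, Forall₂ (Rep W w) l l' → l'.length ≤ 17 →
    Rep (fun i : Fin (16+1) × ι => (Y : ℤ) ^ (i.1 : ℕ) * W i.2) (fun i => w' i.1 * w i.2) (idot l (El Y a b))
      ((128, 256) ^ 16 * pev η l')) (u : List (List ℤ)) (hu : Forall₂ (Forall₂ (Rep W w)) u (uA T ξ)) :
    Forall₂ (RM Z (fun i : Fin (16+1) × ι => (Y : ℤ) ^ (i.1 : ℕ) * W i.2) (fun i => w' i.1 * w i.2))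
      (resid Z (mapG (fun l => idot l (El Y a b)) u) (elG 1 Nat.mul 1 128 16)) (zipM (vA T ξ η) (elA 1 128 16)) := by
  have e : elA (1 : ℝ × ℝ) 128 16 = (elG 1 Nat.mul 1 128 16).map (fun n : ℕ => (n : ℝ × ℝ)) := by rw [el_cast]; simp
  rw [e]
  refine resid_rel hZ ?_ _
  unfold vA
  rw [mapG_eq, forall₂_map_left_iff, forall₂_map_right_iff]
  have hlen : ∀ m ∈ uA T ξ, m.length ≤ 17 := by
    intro m hm
    obtain ⟨m', hm', rfl⟩ := List.mem_map.1 hm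
    rw [List.length_map]; exact (h.2 m' hm').1
  have := (forall₂_iff_get.1 hu)
  refine forall₂_iff_get.2 ⟨this.1, fun i h1 h2 => hs (this.2 i h1 h2) (hlen _ (List.get_mem _ _))⟩

theorem t_sound (c nd : List ℕ) (P : ℝ → Prop)
    (hleaf : ∀ a b g : ℕ, leafOK a b g c nd = true → ∀ z : ℝ, (a : ℝ) ≤ 128 * z → 128 * z ≤ b → P z) (tl : List (ℕ × ℕ)) :
    ∀ a : ℕ, tOK c nd tl a = true → ∀ z : ℝ, (a : ℝ) ≤ 128 * z → z < 3/2 ∨ a < 192 → z ≤ 3/2 → P z := by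
  induction tl with
  | nil =>
    intro a h z h1 h2 h3
    have : a = 192 := Nat.eq_of_beq_eq_true h
    subst this
    rcases h2 with h2 | h2
    · norm_num at h1; linarith
    · omega
  | cons p tl ih =>
    intro a h z h1 h2 h3
    have e : tOK c nd (p :: tl) a = andB (leafOK a p.1 p.2 c nd) (tOK c nd tl p.1) := rfl
    rw [e, andB_true] at h
    rcases le_or_gt (128 * z) p.1 with h4 | h4
    · exact hleaf _ _ _ h.1 z h1 h4
    · refine ih p.1 h.2 z h4.le ?_ h3
      right
      have : (p.1 : ℝ) < 192 := by linarith
      exact_mod_cast this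

theorem v_sound (u ud : List (List ℤ)) (P : ℝ → ℝ → Prop)
    (hv : ∀ a b : ℕ, a < b → b ≤ 192 → ∀ tl, tOK (vstage u (El (Nat.pow 2 10336) a b)) (vstage ud (El (Nat.pow 2 10336) a b)) tl a = true →
      ∀ y z : ℝ, (a : ℝ) ≤ 128 * y → 128 * y ≤ b → y ≤ z → z ≤ 3/2 → P y z) (vl : List (ℕ × List (ℕ × ℕ))) :
    ∀ a : ℕ, vOK u ud vl a = true → ∀ y z : ℝ, (a : ℝ) ≤ 128 * y → y ≤ z → (z < 3/2 ∨ a < 192) → z ≤ 3/2 → P y z := by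
  induction vl with
  | nil =>
    intro a h y z h1 h2 h3 h4
    have : a = 192 := Nat.eq_of_beq_eq_true h
    subst this
    rcases h3 with h3 | h3
    · norm_num at h1; linarith
    · omega
  | cons p vl ih =>
    intro a h y z h1 h2 h3 h4
    have e : vOK u ud (p :: vl) a = andB (andB (andB (Nat.ble (Nat.succ a) p.1) (Nat.ble p.1 192))
      (tOK (vstage u (El (Nat.pow 2 10336) a p.1)) (vstage ud (El (Nat.pow 2 10336) a p.1)) p.2 a)) (vOK u ud vl p.1) := rfl
    rw [e, andB_true, andB_true, andB_true] at h
    obtain ⟨⟨⟨k1, k2⟩, k3⟩, k4⟩ := h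
    rcases le_or_gt (128 * y) p.1 with h5 | h5
    · exact hv a p.1 (Nat.le_of_ble_eq_true k1) (Nat.le_of_ble_eq_true k2) p.2 k3 y z h1 h5 h2 h4
    · refine ih p.1 k4 y z h5.le h2 ?_ h4
      right
      have : (p.1 : ℝ) < 192 := by linarith
      exact_mod_cast this

theorem PZ_WW : PZ WW := rfl
theorem WW_pos : 0 < WW := Nat.pow_pos (by norm_num)

set_option exponentiation.threshold 1000 in
theorem kk : (256:ℝ) ^ 16 * (2000 * (256 ^ 16 * (2000 * (256 ^ 16 * (2000 * ((2 ^ 184 : ℤ) : ℝ))))) + 2 ^ 70 * (2000 * (256 ^ 16 * (2000 * (256 ^ 16 * (2000 * ((2 ^ 114 : ℤ) : ℝ))))))) < 2 ^ 607 := by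
  push_cast; norm_num
theorem u_sound (T Td : List (List (List ℤ))) (hT : okT (2 ^ 184) T) (hTd : okT (2 ^ 114) Td) (a b : ℕ) (vl : List (ℕ × List (ℕ × ℕ)))
    (h : uOK T Td a b vl = true) (x y z : ℝ) (h1 : (a : ℝ) ≤ 128 * x) (h2 : 128 * x ≤ b) (h3 : x ≤ y) (h4 : y ≤ z) (h5 : z ≤ 3/2)
    (hd : tev Td x y z ≤ 0) : 0 ≤ tev T x y z := by
  unfold uOK at h
  rw [andB_true, andB_true] at h
  obtain ⟨⟨k1, k2⟩, k3⟩ := h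
  have hab : a < b := Nat.le_of_ble_eq_true k1
  have hb : b ≤ 192 := Nat.le_of_ble_eq_true k2
  have hy : (a : ℝ) ≤ 128 * y := by linarith
  have ha : a < 192 := by omega
  revert hd
  refine v_sound _ _ (fun y z => tev Td x y z ≤ 0 → 0 ≤ tev T x y z) ?_ vl a k3 y z hy h4 (Or.inr ha) h5
  clear k3 h3 h4 h5 hy ha
  intro c d hcd hd192 tl htl y z hy1 hy2 hyz hz
  have hc : c < 192 := by omega
  refine t_sound _ _ (fun z => tev Td x y z ≤ 0 → 0 ≤ tev T x y z) ?_ tl c htl z (by linarith) (Or.inr hc) hz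
  clear htl hc hyz hz
  intro a' b' g hleaf z hz1 hz2 hdet
  obtain ⟨w1, hw1, ξ, hξ1, hξ2, hξ3, hs1⟩ := stage (Nat.pow 2 608) a b hab hb x h1 h2
  obtain ⟨w2, hw2, η, hη1, hη2, hη3, hs2⟩ := stage (Nat.pow 2 10336) c d hcd hd192 y hy1 hy2
  have r1 := u_rel _ T hT (Nat.pow 2 608) a b w1 ξ hs1
  have r1d := u_rel _ Td hTd (Nat.pow 2 608) a b w1 ξ hs1
  have r2 := v_rel WW_pos _ T hT (Nat.pow 2 10336) c d w2 ξ η hs2 _ r1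
  have r2d := v_rel WW_pos _ Td hTd (Nat.pow 2 10336) c d w2 ξ η hs2 _ r1d
  obtain ⟨g, hg, t, ht⟩ := leaf (w := fun i => w2 i.1 * (w1 i.2.1 * 1)) (fun i => mul_nonneg (hw2 _) (mul_nonneg (hw1 _) zero_le_one)) PZ_WW
    (l := vA T ξ η) (l' := vA Td ξ η) (by simp [vA, uA, hT.1]) (by simp [vA, uA, hTd.1]) r2 r2d _ _
    (fun ζ h0 h1 => vA_snd _ (by positivity) T hT ξ η ζ ⟨hξ2, hξ3⟩ ⟨hη2, hη3⟩ h0 h1) (by positivity)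
    (fun ζ h0 h1 => vA_snd _ (by positivity) Td hTd ξ η ζ ⟨hξ2, hξ3⟩ ⟨hη2, hη3⟩ h0 h1) kk hleaf z hz1 hz2
  rw [vA_fst, vA_fst, hξ1, hη1] at ht
  simp only [] at ht
  have : g * (128 ^ 32 * tev Td x y z) ≤ 0 := mul_nonpos_of_nonneg_of_nonpos hg (mul_nonpos_of_nonneg_of_nonpos (by positivity) hdet)
  have : (0 : ℝ) ≤ 128 ^ 32 * tev T x y z := by linarith
  exact nonneg_of_mul_nonneg_right this (by positivity)
end Ck

/-! ### symbolic expansion -/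
noncomputable def gadd {A : Type} (ad : A → A → A) (l : List A) : List A → List A :=
  List.rec (fun q => q) (fun c t F q => List.rec (c :: t) (fun d u _ => ad c d :: F u) q) l
noncomputable def gmul {A : Type} (zr : A) (ad mu : A → A → A) (l q : List A) : List A :=
  List.rec [] (fun c _ r => gadd ad (mapG (mu c) q) (zr :: r)) l
noncomputable def trp {A : Type} (zr : A) (ad : A → A → A) (l : List (List A)) : List (List A) :=
  List.rec [] (fun m _ r => gadd (gadd ad) (mapG (fun c => [c]) m) (mapG (fun t => zr :: t) r)) l
abbrev P1 := List ℤ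
abbrev P2 := List P1
abbrev P3 := List P2
noncomputable def ad1 : P1 → P1 → P1 := gadd Int.add
noncomputable def ad2 : P2 → P2 → P2 := gadd ad1
noncomputable def ad3 : P3 → P3 → P3 := gadd ad2
noncomputable def mu1 : P1 → P1 → P1 := gmul 0 Int.add Int.mul
noncomputable def mu2 : P2 → P2 → P2 := gmul [] ad1 mu1
noncomputable def mu3 : P3 → P3 → P3 := gmul [] ad2 mu2
/-- swap y and z -/
noncomputable def syz : P3 → P3 := trp [] ad1
/-- swap x and y -/
noncomputable def sxy : P3 → P3 := mapG (trp 0 Int.add)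
noncomputable def Fp (ps : List P1) : P2 :=
  List.rec [] (fun p _ r => ad2 (mu2 [p] (mapG (fun c => [c]) p)) r) ps
noncomputable def wP : P3 := [[[-2, 1], [1, -1]], [[1]]]
noncomputable def rP : P3 := [[[], [0, 4, -2], [0, -2, 1]]]
noncomputable def cst (c : ℤ) : P3 := [[[c]]]
noncomputable def Tp (bs : List (List P1)) : ℤ → P3 → P3 → P3 :=
  List.rec (fun _ _ _ => []) (fun b _ F k q q' => ad3 (mu3 [Fp b] q) (F (Int.add k 1) q'
    (ad3 (mu3 (mu3 (cst (Int.add (Int.mul 2 k) 20)) wP) q')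
      (mu3 (mu3 (cst (Int.mul (-1) (Int.mul (Int.add k 1) (Int.add k 18)))) rP) q)))) bs
noncomputable def Sp (t : P3) : P3 := ad3 t (ad3 (syz t) (sxy (syz t)))
noncomputable def zeroB (t : P3) : Bool :=
  allG (allG (allG (fun c : ℤ => Int.rec (fun n => Nat.beq n 0) (fun _ => false) c))) t
namespace Pol
theorem gev_gadd {A : Type} {e : A → ℝ} {ad : A → A → A} (h : ∀ a b, e (ad a b) = e a + e b) (x : ℝ) (l q : List A) :
    gev e x (gadd ad l q) = gev e x l + gev e x q := by
  induction l generalizing q with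
  | nil => simp [gadd, gev]
  | cons c l ih =>
    cases q with
    | nil => simp [gadd, gev]
    | cons d q =>
      have : gadd ad (c :: l) (d :: q) = ad c d :: gadd ad l q := rfl
      rw [this]; simp only [gev, h, ih]; ring
theorem gev_mapG {A B : Type} {e : A → ℝ} {e' : B → ℝ} (f : A → B) (a : ℝ) (h : ∀ c, e' (f c) = a * e c) (x : ℝ) (l : List A) :
    gev e' x (mapG f l) = a * gev e x l := by
  induction l with
  | nil => simp [mapG, gev]
  | cons c l ih =>
    have : mapG f (c :: l) = f c :: mapG f l := rfl
    rw [this]; simp only [gev, h, ih]; ring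
theorem gev_gmul {A : Type} {e : A → ℝ} {zr : A} {ad mu : A → A → A} (h : ∀ a b, e (ad a b) = e a + e b) (hz : e zr = 0)
    (hm : ∀ a b, e (mu a b) = e a * e b) (x : ℝ) (l q : List A) :
    gev e x (gmul zr ad mu l q) = gev e x l * gev e x q := by
  induction l with
  | nil => simp [gmul, gev]
  | cons c l ih =>
    have : gmul zr ad mu (c :: l) q = gadd ad (mapG (mu c) q) (zr :: gmul zr ad mu l q) := rfl
    rw [this, gev_gadd h, gev_mapG (mu c) (e c) (hm c)]; simp only [gev, hz, ih]; ring
theorem gev_trp {A : Type} {e : A → ℝ} {zr : A} {ad : A → A → A} (h : ∀ a b, e (ad a b) = e a + e b) (hz : e zr = 0)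
    (x y : ℝ) (l : List (List A)) : gev (gev e x) y (trp zr ad l) = gev (gev e y) x l := by
  induction l with
  | nil => simp [trp, gev]
  | cons m l ih =>
    have : trp zr ad (m :: l) = gadd (gadd ad) (mapG (fun c => [c]) m) (mapG (fun t => zr :: t) (trp zr ad l)) := rfl
    rw [this, gev_gadd (gev_gadd h x), gev_mapG (e := e) _ 1 (by intro c; simp [gev]),
      gev_mapG (e := gev e x) _ x (by intro c; simp [gev, hz]), ih]
    simp only [gev]; ring
abbrev e0 : ℤ → ℝ := fun c => (c : ℝ)
theorem e0a (a b : ℤ) : e0 (Int.add a b) = e0 a + e0 b := Int.cast_add a b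
theorem e0m (a b : ℤ) : e0 (Int.mul a b) = e0 a * e0 b := Int.cast_mul a b
theorem a1 (x) (a b : P1) : gev e0 x (ad1 a b) = gev e0 x a + gev e0 x b := gev_gadd e0a x a b
theorem a2 (x y) (a b : P2) : gev (gev e0 x) y (ad2 a b) = gev (gev e0 x) y a + gev (gev e0 x) y b := gev_gadd (a1 x) y a b
theorem a3 (x y z) (a b : P3) : tev (ad3 a b) x y z = tev a x y z + tev b x y z := gev_gadd (a2 x y) z a b
theorem m1 (x) (a b : P1) : gev e0 x (mu1 a b) = gev e0 x a * gev e0 x b := gev_gmul e0a Int.cast_zero e0m x a b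
theorem m2 (x y) (a b : P2) : gev (gev e0 x) y (mu2 a b) = gev (gev e0 x) y a * gev (gev e0 x) y b := gev_gmul (a1 x) rfl (m1 x) y a b
theorem m3 (x y z) (a b : P3) : tev (mu3 a b) x y z = tev a x y z * tev b x y z := gev_gmul (a2 x y) rfl (m2 x y) z a b
theorem t_syz (x y z) (t : P3) : tev (syz t) x y z = tev t x z y := gev_trp (a1 x) rfl y z t
theorem t_sxy (x y z) (t : P3) : tev (sxy t) x y z = tev t y x z := by
  have := gev_mapG (e := gev (gev e0 y) x) (e' := gev (gev e0 x) y) (trp (0:ℤ) Int.add) 1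
    (fun c => by rw [gev_trp e0a Int.cast_zero, one_mul]) z t
  rw [one_mul] at this; exact this
theorem F_p (x y) (ps : List P1) : gev (gev e0 x) y (Fp ps) = Fk ps x y := by
  induction ps with
  | nil => simp [Fp, gev, Fk]
  | cons p ps ih =>
    have : Fp (p :: ps) = ad2 (mu2 [p] (mapG (fun c => [c]) p)) (Fp ps) := rfl
    rw [this, a2, m2, ih, gev_mapG (e := e0) _ 1 (by intro c; simp [gev])]
    simp [gev, Fk, ev]
theorem T_p (x y z : ℝ) (bs : List (List P1)) : ∀ (k : ℕ) (q q' : P3),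
    tev q x y z = Qt (z + x + y - x * y - 2) (x * (2 - x) * (y * (2 - y))) k →
    tev q' x y z = Qt (z + x + y - x * y - 2) (x * (2 - x) * (y * (2 - y))) (k+1) →
    tev (Tp bs k q q') x y z = Tk x y (z + x + y - x * y - 2) (x * (2 - x) * (y * (2 - y))) bs k := by
  induction bs with
  | nil => intro k q q' _ _; simp [Tp, tev, gev, Tk]
  | cons b bs ih =>
    intro k q q' h h'
    have e : Tp (b :: bs) k q q' = ad3 (mu3 [Fp b] q) (Tp bs (Int.add k 1) q'
      (ad3 (mu3 (mu3 (cst (Int.add (Int.mul 2 k) 20)) wP) q')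
      (mu3 (mu3 (cst (Int.mul (-1) (Int.mul (Int.add k 1) (Int.add k 18)))) rP) q))) := rfl
    have c2 : ((Int.mul (-1) (Int.mul (Int.add k 1) (Int.add k 18)) : ℤ) : ℝ) = - ((k + 1) * (k + 18)) := by
      show (((-1 * (((k:ℤ) + 1) * (k + 18)) : ℤ)) : ℝ) = _
      push_cast; ring
    have hk : Int.add (k : ℤ) 1 = ((k + 1 : ℕ) : ℤ) := by push_cast; rfl
    have h1 : tev [Fp b] x y z = Fk b x y := by
      rw [← F_p]; simp [tev, gev]
    have hw : tev wP x y z = z + x + y - x * y - 2 := by simp [tev, gev, wP]; ring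
    have hr : tev rP x y z = x * (2 - x) * (y * (2 - y)) := by simp [tev, gev, rP]; ring
    have hc : ∀ c : ℤ, tev (cst c) x y z = c := by intro c; simp [tev, gev, cst]
    rw [e, a3, m3, h, h1, hk, ih (k+1) _ _ h', Tk]
    rw [a3, m3, m3, m3, m3, hc, hc, hw, hr, h, h', Qt]
    have c1 : ((Int.add (Int.mul 2 k) 20 : ℤ) : ℝ) = 2 * (k + 1) + 18 := by
      show (((2 * (k:ℤ) + 20 : ℤ)) : ℝ) = _
      push_cast; ring
    rw [hk] at c2; rw [c1, c2]; ring
theorem T_fun (x y z : ℝ) (bs : List (List P1)) :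
    tev (Tp bs 0 (cst 1) (mu3 (cst 18) wP)) x y z = Tfun bs x y z := by
  refine T_p x y z bs 0 _ _ ?_ ?_
  · simp [tev, gev, cst, Qt]
  · rw [m3]; simp [tev, gev, cst, wP, Qt]; ring
theorem S_fun (x y z : ℝ) (bs : List (List P1)) :
    tev (Sp (Tp bs 0 (cst 1) (mu3 (cst 18) wP))) x y z = Tfun bs x y z + Tfun bs x z y + Tfun bs y z x := by
  rw [Sp, a3, a3, t_sxy, t_syz, t_syz, T_fun, T_fun, T_fun]
  ring
theorem gev_zero {A : Type} {e : A → ℝ} {p : A → Bool} (h : ∀ a, p a = true → e a = 0) (x : ℝ) (l : List A) (hl : allG p l = true) :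
    gev e x l = 0 := by
  rw [Ck.allG_true] at hl
  induction l with
  | nil => rfl
  | cons c l ih => simp [gev, h c (hl c (by simp)), ih fun a ha => hl a (by simp [ha])]
theorem zeroB_tev (t : P3) (h : zeroB t = true) (x y z : ℝ) : tev t x y z = 0 := by
  refine gev_zero (fun a ha => gev_zero (fun a ha => gev_zero (fun a ha => ?_) x a ha) y a ha) z t h
  cases a with
  | ofNat n => have : n = 0 := Nat.eq_of_beq_eq_true ha
               subst this; simp
  | negSucc n => exact absurd ha (by simp)
end Pol

/-! ### the data -/
noncomputable def dec (n : Nat) : Int := Nat.rec (Int.ofNat (Nat.div n 2)) (fun _ _ => Int.negSucc (Nat.div n 2)) (Nat.mod n 2)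
noncomputable def tailG {A : Type} (l : List A) : List A := List.rec [] (fun _ t _ => t) l
noncomputable def zipG {A B C : Type} (f : A → B → C) (l : List A) : List B → List C :=
  List.rec (fun _ => []) (fun c _ F q => List.rec [] (fun d u _ => f c d :: F u) q) l
noncomputable def sym2 (l : List (List Int)) : List (List Int) :=
  List.rec [] (fun u _ r => u :: zipG (fun c t => c :: t) (tailG u) r) l
noncomputable def sym3 (l : List (List (List Int))) : List (List (List Int)) :=
  List.rec [] (fun u _ r => (fun m => m :: zipG (fun a c => a :: zipG (fun c t => c :: t) (tailG a) c) (tailG m) r) (sym2 u)) l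

noncomputable def cs0 : List Int := mapG dec [96656580091964997834, 1257987677376749592041, 181098555074434907988, 1202586791443423670728, 109794106829836510153, 65520272839126198470, 255591093060872925011, 648626312603012318700, 1142532129635525641872, 105801193619000933731, 7013150012632065594674, 1748303943717601208934, 1176009339263544552360, 1660827939267692314973, 3468040062814334605436, 608433889621731148829, 100062380302388916523, 757223782559798827693]
noncomputable def bs0 : List (List (List Int)) := mapG (mapG (mapG dec)) [[[], [23344727803811164], [474553782768224075, 471157679586360444], [4048290592599223250, 8530232074267371403, 4256227247121668234], [20801359710398392863, 67916056812178981284, 70518173664040078069, 23418369555138692228], [62799203007192481552, 279583772315475163021, 444540027388752459368, 300986251080789552133, 73580050910457361128], [185322444679519999941, 1022356149144341531516, 2166366491935087095219, 2212097355060030561784, 1091893479251955798297, 209012443424637959926], [149909225893563382246, 1116426672758933740885, 3288744080520496756364, 4943219847952357213917, 4022069066397986871928, 1687170220397342474099, 286018137851634180840], [469976893839071215935, 4042207882111933180618, 14326082835926813973729, 27201782396138996289768, 29975187057092380419125, 19227529866670676132942, 6666481613669790703049, 966271616044038042100], [993781686360815420570, 9313235567721593117685, 37075307439785854823556, 81867961799233389876101,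 109661740601038570108768, 91262104327138200132621, 46103267944712158746168, 12935169164850153166485, 1544565797060603684036], [245471504668725730403, 3204909469235178309764, 17482950904404084855823, 52949154546111995166836, 99022108392975058721327, 119365753710407423463716, 93187406792529094933021, 45590587461862562807170, 12716330591921135004821, 1543759155197219355062], [260520985561995849028, 2608383304947049925487, 12910760831492123227780, 41263802823393020278629, 90786984582610935558552, 138363067076317998045117, 144529398437221116673358, 101110605459647047521335, 45202135080172113508586, 11666507528341592449005, 1322479942763012346640], [3398351050508134962847, 41912000396575826488730, 235451789410991596435341, 797258327403674136252762, 1808397653436304524709681, 2880311927452673758909516, 3277195519979564804497821, 2654206701403397136358266, 1494366537676909964258277, 555385214020098298324314, 122347740411358420195879, 12083381905065393105358], [2738570154193690915230, 34291701350267877556449, 210782795323416058464214, 827675344830945594781251, 2258998559515810369295144, 4425724504699655499783635, 6299589731020231651045242, 6517487462453238743251567, 4847731867363339197359242, 2524867766655045513726563, 873889215546387486123420, 180525766914832162903203, 16841642846944479757320], [35873683500914101601, 9044172756688955323848, 134325131615294987445475, 909174302041397725220328, 3668703055657442676089881, 9828320430359685993460024, 18426181004071273859191083, 24800857699584161898115086,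 24154830651803575494344367, 16901028331759641193361500, 8288330459325502160288887, 2705309081422252217019538, 527933003835005632637967, 46605183447444364997752], [1218392394016418936276, 30327493475690790003991, 352106772634010060523618, 2395309652993849974750893, 10562210401527105972885722, 32070414560178488561608987, 69635086321468634931539620, 110565934501494820123090991, 129703455023809093516687054, 112348483446342906809381097, 70973759970155948756389840, 31794213121848029329610461, 9568400299234265771910904, 1734709720583135780617717, 143155477114338631735512], [136882548137080364088, 17902461472041436623976, 360693218367055258067651, 3111652947680935077458666, 15964606088779239012215671, 55027982731852579524948398, 135394188765650468775836571, 245759262700007372796487142, 334723480537417117433599335, 344025400500568188340529050, 265682044602230770135226057, 151834406913967002260995994, 62292307838000292843720197, 17350043239148716115522780, 2937681325338371230618387, 228213986509544084567690], [306474618200165980470, 14343575696284339194489, 258999505830073326892806, 2500228633117051243284653, 15147956987172295986639242, 62760964878691720299061081, 186922228474108560466934346, 412476713839393839174804589, 686506936698273081822963322, 869329420040927005987503395, 838289329203122723282939698, 611146082102203306374527917, 331138742170389002856256598, 129209940143485691276659045, 34309347261557244202589918, 5548462452894293137785031, 412308840943354068890094]],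
[[52566358931750530], [376543362241231865, 350601915289323924], [4918825669646044388, 10081022716690332091, 4970032340658777200], [13813652754108446321, 44613799226033170880, 45952129061573497573, 15174686967622936232], [46925073803573332878, 206084022322050264737, 325714113364171575878, 220692972866808665715, 54309949245574922254], [116464330307303109887, 660961198071154960270, 1451588524533133635377, 1546415449261636256144, 800625288663385199593, 161384366322234635736], [239187054989966827298, 1676801714983561572809, 4741180761551263839682, 6951494822444132567335, 5589592445058697312548, 2341012722340784221261, 399374307014779830300], [393297378081166503545, 3598618561237448180446, 13308401615065705982377, 26080560103304450793266, 29470349931974373762395, 19307478973096444784546, 6820121036235253333243, 1005518025259267289384], [247309574781066000696, 2426615242675259642353, 10112562868885057739940, 23471244195108908532413, 33260789068514806154738, 29502512985190208845395, 16004554360612130643644, 4855986514198994963765, 631065954441166460174], [1673743763610186153975, 15987020709413514936226, 67220097460036459844387, 163263094974111514198980, 252301646128155913380449, 257163004081985520740172, 172847581141280770925281, 73873390943508842799276, 18219401582601274235335, 1975865042461846882680], [1061254798208551381392, 10895524769309528185301, 52377602998962034099254, 155567474760779505535061, 313872150462985330973384, 443817756874743014836237, 439547736827799625048920, 297865275417038165013565,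 131223944376600574186824, 33789718012662606021737, 3853001066999761836008], [354397605102503711923, 5298351391067642694632, 37695681630660330849649, 160698321913258413582104, 445659628752364380599293, 837594100107211548736824, 1087840103348558560724391, 978401726102402769883370, 598983886505762900628833, 238445533309784777897150, 55703172897688504572171, 5798822262064944530794], [160371170930324929652, 8434167791354289219961, 94429523567469757930454, 518436700789143312167531, 1727909502378653089483832, 3833359819263592712014059, 5918896917352421395949780, 6479678378514498648503473, 5025463665646052201296240, 2704891037561541416132319, 961992007710578946170094, 203426152009072941038843, 19374312329296134711390], [884858938648022889359, 18549072254628138453664, 176455702696780174836713, 990121092888887803557534, 3641470634942395185074631, 9285197044605759560271980, 16944434136353867886325257, 22484773662524782695223712, 21762266322099342743193717, 15212011628477710420766156, 7480219944930518602623083, 2454596284723602713879744, 482474112845611532511077, 42956929835444632972210], [588826221552793137682, 20779377113265644560315, 266442134908628910242184, 1862625796625357984470671, 8284305562419814326975960, 25303229914614230549727427, 55339418126725914112910320, 88643318550938900140717737, 104997987229961434558198136, 91847475684880601631238233, 58572803200934178741621108, 26468295745067947620175997, 8027965231711310287055782, 1465436444715601019145997, 121651200837041311066098], [325814410197808422361,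 16584691819654914071120, 278242390313057330567207, 2428991900797267648309182, 13116634895633792269665295, 47838112352805113714206344, 123935547917960888162177673, 235004884634223493363609340, 331570765928250638951136463, 350226399565220672541439502, 275972896201844367379557079, 159904362457856980379515310, 66145377294960060741817423, 18486269168750520805676582, 3127747378450533880713141, 241933037122542244653564]],
[[27690017173858502], [400713361388434285, 411940755957000368], [2268489553448361118, 4579440910989433235, 2236790005284014806], [7394870304871371269, 22825511680151656386, 22681244910764701173, 7281041488819550908], [13420024428236565248, 58109038390606679177, 90353223644528549276, 60060709039483261711, 14465166197475280392], [49970874244698640967, 286176407530587379494, 629116640450604327847, 665667523604367108122, 340044821521115480953, 67276261123299290964], [100639293102819847582, 713051465864599851365, 2003623268685350230376, 2876261560010610398173, 2236525639163537007526, 897024518831115993435, 145501810477623628178], [216919378526093530487, 1652763158731523903066, 5318903384061623251747, 9390951130431837543464, 9832658206298653773181, 6106511899970761775136, 2082461479123660445589, 300730123307399866464], [20761533830831736865, 79309032532159511838, 46219122238160285444, 817298825129926603079, 2074227314919263780506, 2642116036598736053459, 1880711525215032987632, 711929626727430843615, 111605411605211479170], [275834287715977089492, 1899652119641682344009, 4359466199289037079466,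 740420793706590315639, 15323636337479805828439, 33420882642979017601100, 35009473731181363725995, 20552436556541657252894, 6501875953580678703585, 866388753908008424394], [76522085325168113864, 2719237131203100176143, 22589643136763860116604, 91625228872438812757811, 220437850791618255433580, 340279221409002944593733, 347110960039308156192252, 233282425405025970377861, 99473796578832676444576, 24408566659627558277669, 2625851665848463901012], [33850646830910594652, 2030418392694233571038, 23152005927345241722747, 112166833932470811350698, 318525612121554452526531, 591249598546653855930858, 750082879253919947426595, 657988927818232586708148, 393533944802528670197351, 153359691054478663097078, 35120415522105690712711, 3585548785616108936522], [690769791097589079770, 13396671069886154475369, 111012238950912340643460, 529793304152969466718627, 1638654965529217483169830, 3483034785027209683194197, 5240192140092089259615494, 5641179650119532114418479, 4323732035759436663712806, 2305779100457618040449203, 813485286232385369286968, 170721001686739641511669, 16137048666432625212382], [727316914804042349777, 15190285962339965603550, 136878615884675868781103, 719892886630264558578778, 2494629785625737662965503, 6053483844304069446387826, 10619475600976798524603127, 13661684232425109497601582, 12902544874079012775391791, 8841784106179091600304458, 4275963201853620792049027, 1382797198058596480682206, 268187974850732939274291, 23574834242576804612310], [146197949005019497946, 8054403086349273463455, 121633697950985472189742,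 937919494635135032428063, 4458277186016394903230198, 14265436857233151001145917, 32237631158649265800368396, 52843034177423401542516127, 63618274755853689680001504, 56295496777403387405430257, 36199499870132266040290872, 16458609134653704281162173, 5015660605812815739010718, 919137416669563991285387, 76564800540810072366582]],
[[18611705806512502], [185001841026732925, 191355762627100700], [575493297087083246, 1298115743646223379, 698202419308557656], [1960254965119732607, 6237637736724219664, 6449365871539451995, 2166171041486031242], [7238851439317349772, 31644738178430701561, 49975420366347033868, 33922428290740213069, 8375577112604324936], [19405790140659054063, 108278819310546572812, 233780424214273936773, 244437151947822029320, 123951327288986685213, 24426505398940617530], [55074520128509187478, 367820711180130484013, 998933995880456245678, 1417057102968619941293, 1109898465656759854964, 455701390640384065799, 76682804444660860390], [58125106487995723461, 418862400736249577116, 1277793304464456786455, 2136812205778129306902, 2112833012900478025935, 1233797237875232052770, 393539761259971016483, 52826542900846813634], [5720417207863355884, 147689765412537348399, 954911118769952252096, 2931941655736758713157, 5093265759434446717458, 5299963484738591145109, 3279137295868320837782, 1113003202627443579123, 159557065380057235706], [88902294618518177321, 1551651244665469515282, 9647042219093142072949, 31321703272477217842958, 60913615091955379525491, 75015431930312845246576,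 59141936097503992517681, 28983962132277309767092, 8049946714585892466205, 968690043590950522162], [188311050174784296886, 2544279375177497504883, 15111775368161642189176, 51806602314541286774175, 113483242376028594313112, 166154277677081903443035, 164967520991525200529290, 109892626932206691032983, 47096974734672250334598, 11746797644075710680631, 1296745183157293199268], [15107073230489917991, 384100304293342312934, 4845066738321639355135, 29668037053602135599410, 103373166743363990382205, 226034655177673619859948, 326200232914795399144579, 316586376581173591121484, 204998413203982700167641, 85059173478507215360420, 20476739210278278536955, 2176393978046525974620], [102529321731972279494, 2236469834427912208909, 20999448452024345217134, 111603325735402095911945, 377469199775213480975694, 864410228945659355086835, 1385013074255689112910698, 1573649707708372314807563, 1263962359999645349594014, 702323987073106845620449, 256960257751566474176642, 55703532367578708219973, 5420380502144907715740], [10767808414677211441, 993406384257397795538, 15896390913260235982447, 120314543748220617807772, 540449927817733654347171, 1591401700015457010281240, 3235146531686909422777763, 4663657629917959748683304, 4813736571608591958788709, 3538205375422215937426408, 1809494795158057793232679, 612202469938543852346422, 123209540886762055460261, 11169401345980115202268]],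
[[6432693440124100], [29515286185049627, 29376782352991874], [250931146051722924, 526126409718411003, 267916912472737490], [708981292797690989, 2321386045516454030, 2433066080885518585, 819156756111392290], [2931194725866075928, 12915398648705054341, 20655404986775895888, 14258529084755978001, 3592039637714263086], [3871200126326292131, 22373447578866497896, 49785658211015464109, 53315547264839910318, 27491034104668793845, 5461969698818792384], [2830812296349383982, 18783390871052308661, 50112906774660872982, 69215275042273683853, 52374867915403394816, 20607378002718822237, 3290342509275102450], [3276282792612049623, 30078073497348096076, 118858212122390280009, 255698481701563583014, 319457143807684025065, 230854497148384049848, 89334134222606364813, 14296847469691150498], [34034996494435545302, 395841248330212268769, 1850969774320092126402, 4670131446656796372667, 7050792653792688273776, 6574992044285760664797, 3716935970164570266562, 1168588788124959939239, 156817538045191840384], [74076297215152501189, 932781070591589400270, 4881020502390414429921, 14168239582241782540762, 25396391051282644818585, 29344325602490491990840, 21955988249928892938633, 10292322208189000074542, 2749886370433997971909, 319693711583449891906], [6506918736160717227, 42442312258311848152, 182452718850369800926, 2260611691698164412747, 8393795377214351179202, 16825817314124795852551, 20604767154930545442002, 15912722931627534168427, 7590218741798022752516, 2047292894699753938013, 239272957232125851196],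 [81052113285054671161, 1386168952278647708476, 10191158219645454092189, 42777669201336294631412, 114688080390309262177159, 207434423788169608609902, 259514260222132258621133, 225437238448409789987144, 133670333317625490339205, 51650789327048502020906, 11729244134169208469615, 1187840245254514703538], [81231764222091595204, 1621628576662097395231, 13830157669481625979804, 67730402591710332905543, 214136589420560774490588, 463401276997263405959311, 707199892310659565570424, 769752050843653970496577, 594864472813209037139752, 319107923200888562353575, 113026758609083375028186, 23775376524558026567113, 2249553938155331085864]],
[[887739332751016], [8498377511483899, 8354908116262616], [43380723020099378, 89131640136637327, 44127502520026608], [291412046142610571, 959322075157350936, 1018499327675817117, 349497058912482934], [208357092566637026, 816883199935635667, 1181250525909069522, 745885500640525905, 173383738136047404], [62719029878894103, 470486026370194316, 1104734031752714939, 1142700882789228542, 541385132550541831, 95072290228774100], [593373602573225530, 4150224177695525263, 11893534094193967990, 17848585903839409009, 14768101794630905852, 6372311401646268163, 1117059473659605332], [4205683072169079407, 39006288638003281054, 147471558666512432239, 297197307284642876676, 346717641269956597685, 235109270919331714132, 86086396369145494713, 13166350421663207228], [16310554106050936326, 168446788340092726475, 727452746099464381242, 1726458254034818807327, 2475066409741960509278,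 2203380364563713153133, 1193160558563520611554, 360213135640896210919, 46508714900645493888], [7203649623580239839, 97661520895172819394, 551247062112835868403, 1711371962373188135164, 3247041109065433264547, 3931942216197935771764, 3055733570800774995917, 1476182194375492337488, 403689501126934494749, 47757838139129391206], [9411601002709411558, 175866143526975576153, 1290949140647294344984, 5105935267174029199247, 12353579341376492297270, 19411342375870132241021, 20279070056536613539662, 14015542491677085255589, 6167772862798060896220, 1567321165998658788493, 175225184616741442640], [6025876895549491841, 164698374234593673000, 1527791334239806851441, 7398743067020553136722, 21904799913152803281851, 42686886428665571953916, 56672322622010811375165, 51718770913370397752678, 31986204375812253380609, 12822427855923930395446, 3007933479699115197223, 313552792780379892434]],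
[[265420582034448], [1834259282361275, 1767680433316772], [7584800988629676, 15301651167308477, 7478195155758972], [6434626269277351, 19136568362042170, 18473324532825365, 5769979915410026], [1551294552656815, 950749921731004, 5788588197603120, 7669295299887769, 2532523290369294], [7419931828407533, 81177022699935326, 231751501911087493, 278163183835193614, 150487980859498603, 30275432227931600], [211027688364465206, 1563372513469719697, 4663366308488905448, 7181286318792144725, 6035210090242809300, 2630150435740535821, 465185714665198296], [1625608726261339165, 13492176579642537570, 46494135230412337637, 86255183478783495420, 93145064649668576467, 58640253860808601668, 19962746566062693171, 2839877141456510522], [2158327568773533492, 21239326881245357169, 88454898182344105988, 203023985224053287129, 280940317588284249702, 240350718749927721933, 124359594279386350568, 35633236176509077569, 4333845230391984942], [1027609282993108400, 2922124470006954747, 21827639365725823293, 143638658987229811860, 367465682246704766501, 523063856906301617342, 448990141421140156145, 231834635273249032206, 66538218910205615289, 8179251484576424882], [2132440966626732900, 40315503883180027593, 287076231568133494446, 1094069436100285783793, 2554567763610569910974, 3887648117034546709397, 3948672017627173231034, 2662669437741154981041, 1146713498433961789782, 285872503114646482585, 31413765223905403318]],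
[[63422278340812], [606590781273501, 607850869935662], [462916604206454, 918145743255395, 432475972710488], [816268279658851, 2280868105467454, 1908566748560701, 466958162024036], [1452960717280198, 5319320815917633, 6324552627013606, 3117331555709185, 623321188059350], [40230527656449721, 225040439692777156, 498492948798476333, 539285274081554432, 283063063435126667, 57565955938918370], [178890980339927254, 1248088040576441705, 3529687782151237450, 5180728660180701893, 4166307849180166706, 1742794285228388485, 296681875731117000], [96916315329770771, 964252325328848744, 3847904408096548461, 8072002588854692944, 9690794551421363389, 6700307862667431126, 2482884001114098873, 381958477437960650], [485637208556842130, 4965901558040708721, 21680515969028790530, 52703158232013268903, 78068199637833351218, 72245075868313544497, 40840188870306418290, 12909459595810253053, 1748828720953748886], [39318542546531429, 2259426962639694852, 17891133144075527269, 64421169149862939056, 132214452857725794711, 167927778404781396256, 134994425666224554233, 67100377828737357636, 18870138359192257261, 2300481487274773922]],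
[[14665318535966], [15016840510997, 15706715586722], [9218805668654, 18690151385197, 10013476165894], [27536398782373, 94681329403326, 101177548451951, 35020955285964], [93187354461780, 391926032675011, 587458121532574, 377664973778069, 88289188040038], [641803056915463, 3641602945921136, 7991884254515013, 8499998745221130, 4392439910178743, 883728667048728], [2923748344783444, 20861529939529479, 60045620112286308, 89620392365272243, 73302514622429478, 31185383469189491, 5395952404173070], [5511463349261529, 55764168116202428, 228328316320301047, 495284791880758820, 618626391890307031, 446920618724264480, 173488717978678591, 27985382430934120], [59219012520805526, 612002188511726627, 2647248746310538946, 6284881015096385357, 8985832856744412510, 7943672372821692819, 4249412050974414106, 1259983968130085621, 158802174459379162]]]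
noncomputable def tens : P3 := sym3 (mapG (mapG (mapG dec)) [[[107292062457186938412851677131633503638134922529, 1470227027034353955923160336599174775023255765320, 11518129698262927712949727072808144407492786929083, 57094278017414835956173976644250941235111027787228, 193540982661283091448248537311177055557238687738195, 473569609763147625689064140320664789998391725179612, 865536577393487135917605200483200052888570842530431, 1206534726535124263726674437682448090224831254302284, 1297660147274075772980210894649308561552337130238511, 1081406467788651070488499089066017378945247828329376, 696558000486611632049447483668237971021166267484259, 343432721614221713801913233846892921252273030577656, 127164582995558070773976234195464042408983818409843, 34211373851243839159171322189212504863167868275716, 6311502310998413543558251355920496831379023030627, 713903738868021792470936191388904552430690025472, 37324724419509991830476127149277408650904202595], [16516325438619736892994847927530779459177370397333, 121472903344262915335601151153281045920934500607368, 589287049020737308181359377718944420954545006565353, 1976679110758148291016457488886470764718706721258066, 4807309564261538581666703561633188314116973221151357, 8757248511175444782363140353741001504022287157169732, 12194215333978733019432244426742280348270996020650369, 13127077217788085400349803322534611669013481091968434, 10969680059799282578224207892864132933781392141188929, 7097937932992087891296715537670723139452751710102626, 3521583769727059784139411485765712580860829138033611, 1314381711861887196027561542339170770702767331409214, 357034930327011926718874945047771206224997411855109,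 66614775717093903809301334450043122970813060972870, 7632545845497118374557253195421448573605538784127, 404840797961338880874287871590483045529082839942], [887238788324420628769932705846548347497075145035825, 4333896491011130299224006600553926804028863002005810, 14690368036477462098371693853766324102118931216396855, 36188553167035928073656331684980846530319286403925248, 66922518429346238666547056581378654575190524592115051, 94805795724167891994182238167358268174171207693540360, 104051731680410093636614337565686635326360282919784003, 88834129524322210005655869003215585099182780555173332, 58843841126264130025221992546125419145998295394817061, 29945604686634752916061373098441226869085032043291678, 11485274491686016359817554433566607016967055157640381, 3211435702374172811295160822341428927427138964574824, 617741651055632819996288072223370881304407099039317, 73073169200554756044020313202408320263986044135792, 4006311466232438989916339906511595153154398767149], [21345960805667001294904907275167796923238712349986987, 72957606247915751887528608455506792985302489009273826, 181404226770262644874518468571890519989877611383322015, 339073021048474588644042355543071243609809080692611202, 486233284608770729170987985746239928865468139411258483, 540981977249331721625544349382541886865716131672972120, 468858043773401540335094178976262705399163895253022627, 315682572056303125639329370692460190571466607695501816, 163484317290815736222852777218137646118160132812000751, 63873495240180817644584812120608917945966213194337528, 18209151444562936520634657852184645500301514244556787, 3573649312076020867459425804809225929532709970287086, 431526883991965507105074225927954939328983724036849,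 24159996245917540224894889749570715757537526924018], [251257637595520595824741959952758231233869439220373991, 630037525512401267510750158126390672927915260999003282, 1189240205156028274751146908254753271766422699668997225, 1724684001642634050413976317091245509189991055717036818, 1943372277036272381748172409245627876010219704732059981, 1708075387383149769107880116613446893119242781577688544, 1167731114780969829772211298247353010992720483411808457, 614709882092604959580451963200688027706369865420169824, 244358916296145358257638384300134511169016245981662217, 70934423103018692670231460557135543823375833919127356, 14184756078226560088251167178558257541503623202241885, 1746158379822767038209847680267971035681877189404300, 99703034309774758761311916708764242362946700556905], [1594544654127044376152361480711012193358411782986707239, 3041611261708435155292619115201749275497167187671126898, 4463495867080190510813464750175112966461094511735291729, 5095619780825709701365449253533658764650918407018388436, 4542785302174083867235464711322181732488421009215803415, 3153368052226307436949498979916612450422229941625931392, 1686940749688037114463381415917467161829261148004764903, 681985731852925858940490251392778065412247634616638508, 201457405804288868256534933508693631806498146476947285, 41014491482875208896625293462412436081629225321431066, 5142280951005666901398887958196759336500298236822921, 299138387922265170134981118911160034155817125438654], [5869344170969215538849644769240252073604208654826570695, 8722518258301498948938771814852762963078910520821778926, 10094249953087086010394027318951346097588237988133363057, 9130437871698969092959983545027199668353794406516013274,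 6435255365934303219272353230432375770179394778200073889, 3497758612298448219923153979224620078579684294214755188, 1437453762434929427598340163322293161936924056368571141, 431837706610918147677645156492126420569270797529707222, 89444546640986504227487296475104042970765354710483029, 11412830212488283575622741079203305559276858592097592, 675872897920093503336899609303213087552986442779121], [13137561138288706397232560300608245543981017091118854539, 15419526935091363556820354132366122671546983286042136354, 14153827886795722429405114816991467606132016269783618573, 10128692115743072330998264759575731983778370618517461664, 5591999647502493938783415983828589931785514596397669675, 2335169201575261616386209654805401696860606522547268412, 713071085872060050991955844667510647013408383070334145, 150171814444643176489358886741659759969550444603402934, 19488974307526351003610071571557130047931731438415337, 1174286872462182383315377828689763869252824115199206], [18362491227403005322346648344829809953451137638813560539, 17107528532508928678501767723860554715085581312394096076, 12429214418323023437816854753107160664180950992791415453, 6968568924714653713418405775665982386751829368981139434, 2955871983539889870426451251625512413351867003560298137, 917067171464326727080003290992678801222471986670657180, 196283069163219089611192215846843384330225262930556101, 25897450715064845804245198809940961122943841483517628, 1587054321350274670603637618831098759454844974911613], [16178830889996642728196582502471642408880532484123499713, 11933128511869159158087049867016230509199453729793773766, 6792943693875999665922753613860821821134267819151700133, 2925992517162797044503841309951440883236929662287556078,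 922052820514473048171850699800214183128179693078417085, 200506677275633829446820415390111618905018312355605052, 26887639126273075757634472250810785350518772726295461, 1675447618021332245367853304362422840938947874548548], [8935138217485106081547827431541271155676978882279804039, 5163681635918943440406708189276466086961190316119607316, 2258276348498457155450119816290362445260192066063733867, 722682796052749792019364403904501751974887265768245950, 159637012459276323560395522361102449367524329732798741, 21753701990155113744580865471595891756016756006492666, 1378113108974232808920704927235113761464301018503293], [3029448155758314346804209999046453038971170579542401825, 1345124751572207984227205570408679381855312656606568104, 437113317940079935939066664532793880266851773217841651, 98075565554149149380798783361850567274814195086711386, 13579892343087749964227649260844747122006296335762789, 874513345809586036808971067868018458391285771256110], [606415149550513631375932673510657066697007109449318103, 200115070257836178088020919728032798896037317270594406, 45606808256537267806019516044455861541663607177050453, 6416209724877636805438848875931367304972316923274818, 419959375272218582514841228158467180721130133854601], [67068707733868889279067089179040270832543970923871639, 15526568139192817414505731948114818676332603553457002, 2219301740404479341217391320962026254585571764968979, 147612403917843485287225939453686649730063711316726], [3651453575557652516270243746732479918342940948196949, 530230152045048665884355252434579942077287916782236, 35829001421909377369789479088849251032431311835709], [78210033535433564662281970352770184619485329234581, 5367128408044774689398962992477883058504769400272],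 [373880504549234718345071866241488275107504369117]],
[[104310119184751807357859490279817129273145968699728, 576228106946137569903996636449994440183370998778671, 2474665732437874051187979433262387305739156530151448, 7632293839975471073251092619438778064561256029248735, 17151662652006838689842911724514756077072852833714968, 28776486216412369694617857799664790959185343543723735, 36655272138672412981043313227973889845150844256662200, 35742476313585443319098376344434796605343464047926951, 26690033410077125807888250049276033391402091097147608, 15145687924623771870796870500850057430415187076887463, 6417741267428862133646592539912501249043473025359520, 1966834186303155919556018387237286923048907217347287, 411825110140798666518635690605095501362564600633136, 52711908153584716729569014507803115862673198209935, 3110955171217114915661842259550288062496134602560, 0], [2657038374847724464488383406766342129034119067450604, 10843821235419495517325618322425448060755046307270643, 32932013875953442052123726718994022586351738301596348, 73462000591525952461441663243485150197345151354257291, 122725978888517204693918124871913322967320976922549772, 156004956176126176806377880447635039744334007588652339, 152113041083130589994655911152514446854809862527645352, 113804547711816085183735584142089969571727471172845327, 64827654400229554672669390140651398537784138318730476, 27626801749925967659146102184209780054744918732153043, 8530825030242200091483521057190343998429233193358272, 1802957078235654340025368354087376974565602233971387, 233332215688925882820784180260908558421368694946128, 13946250443077106258169202354673542438927170836831, 0],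 [44561591880666872878557221843221319298859082888747292, 137410930670892995559479814372911493978500592675018923, 311535849613970365816524322701539376936407745218625912, 529619886293111112651444041385441572757734856498651167, 686227426847553113195843978758721548279986486238991592, 683278794520382778729359796957238869177198166559521751, 523026771248805305066506331509332119740453303832214792, 305415386501646058709841790267460699281573276391929103, 133672357109552232472749874830273160471130845437004476, 42467699042893837002835886102906869228925903138393363, 9249814865737997714047153499731991797749158830084080, 1235549495848029690013234165384042928253947622137339, 76324452996002566912253997109113570293547941062968, 0], [429187832588012480394398202479075206145583853540807692, 984075327696069367416294285297003672132005339973931055, 1692554966165275385707583418960549920546126433862358724, 2221084988977377613961733213053892959149003932585304367, 2242694173524113311344871833288227173306627859956657944, 1743226020392998946657278687514815001574633436144293515, 1035030250551166718935365368237733569949497361375580776, 461189715954996554019250354039881279086484740506944611, 149337113913297638760892501039544854537853509008547680, 33185417460192852882493936354218197247093320285767151, 4526312349548650942276417817309927084383598001532272, 285699470422743834339990325135126261317745830444863, 0], [2278398035871951958708754810844003643484654039260911396, 3959292621268479700600287283800972416669981078655398015, 5255817052378525874670874961496208135515794309270731284, 5375868449998931317781098307663678367884393453973190367, 4238870559488607356766370105202727449876074453346074284,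 2556580677176416683802220655638376159454073716421332775, 1158626598961978742293333898345351773280782063738939320, 382011302183268211254534857531679633060025645611274631, 86520247903633446915597749378221435052972760483641232, 12037074448892315949144505895034572880553160527705991, 775468177787398996292264022700407326527168188404256, 0], [6956111721650686873355330036762773926143795147023765140, 9346553899627187455294408645963269634399493257903527167, 9688723829064888238856002022671052876333809334097238236, 7751885419963945208223381544605931478167368274146563915, 4749508340116999433858057611420996840757303268567631056, 2188767695271242017256378534124827669992381220037816899, 734457500371584805457038986319270272093989804134336860, 169409856207565851932486590694544934983166611663017087, 24015977812856224192759747914099522419931170029338468, 1577137704238338407502459706506397976346033426721895, 0], [12723660593279263737497878823068728310446140972034864828, 13376057311227224274944501228544830957114773687318032167, 10863419042868092466283222812195964199641756632946248972, 6761667621722373699519194064415172081293676562355444835, 3167674680961630015188222161611451152410930265338607248, 1081114216551064812538818357539279501781393410327764391, 253733387934691892453915625294480857173233440993414124, 36609453877133507007811171629239853230249841146871203, 2447363188231979571604332979447059154929525490227600, 0], [14270035907471563917350990442375535650607121872340312580, 11767497867164510538393672377499652326719463010341381371, 7440160285127447605979104808546724263937420527062066080, 3541759458073089581429602185025074725349951570734637755,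 1228548647864383573460305688055731344158443075414280732, 293085634677378649808196601904974868898930947022537875, 42986569366271861424665067702343747081485609316307376, 2921272363920789034788957916205663230464153338944895, 0], [9854643454545711133024030612402486779551429796365952720, 6328041450522470550220380521737523478664307243013099359, 3059363696453141510376043335395853619775458919658451236, 1077696738599502558981532230906007885035459812293426523, 261060951750918985754715796547621164029399559260645576, 38874939136251498569023164731160519188180107198946615, 2681950308661103395439079163268324781802554669760728, 0], [4125844150960908411338096462301749008015452719917095564, 2024666994887849050380486680459525758457436675550706423, 723693437540061378909365024036478615398316877423179468, 177826752976172597075788172729070204518125831581525503, 26853348810069767640241524534114996509591810831132664, 1878241992169516494150999417283550894386587118559999, 0], [1007914525922857910039504456229660865727865686108373252, 365271174822800938093528862884128570021193104612237587, 90956117466119335102962599271531551007934843130611224, 13912972396987887584334480356892698172513794422105103, 985383356469569360711991643205555092307952129010680, 0], [134115151384923983778622944532291049014113384788485284, 33812601615428326518655735799492758525635328232532623, 5233616258673601432867540661663039124265734310943604, 374896908424446290735167191551370588692890371390815, 0], [8624070076240500510873164192522286140491975967033268, 1349451396631489901403311512087357048992871863337487, 97659963702283720606343523995026809799255867925688,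 0], [213278776812521651115919871120400584486015678942088, 15577993138431722770256890448933736470068905606167, 0], [1147265013041265231423565452498375922660691762736, 0], [0]],
[[6746332804677901367354716085767592373016263478703999, 20341772471078626347158560800102131837035527231886080, 53815900872499219491515058764433865289543459528582879, 108188609047097700322872627846630801292171119428439840, 162953942884198201851244381540041530404466056696594559, 185218950440419303312753951449375506623210571747478240, 159407266718280953796888082624389891480349653765999839, 103366444382521662702079292909174297927307109705930560, 49724543568291166260125240385549214546913629460024639, 17214176843811963364537511341537682224992514622868000, 4056050138521167546519838209933923343172022474037599, 582531754108815384605198136811531490461269312055680, 38495855636743512125433095886117605684438254764959, 0, 0], [51180452668402412458588128713752779671208669567830399, 129245290231167100058717281293165833446275428809158720, 256311519709771876856600644852566821944326357499983359, 383245651851217429256932583134907948407141315207982160, 433431338191392140172341124901898816746295847916520399, 371860117731318343705410687493402250551694741412729600, 240840941654997360602242734214139011650785569525500959, 115954363823019223356953671020066891688019545236074400, 40261202901357477702147340009331209293164312159411039, 9535088842413212975906264176117779289649369989326720, 1379443950228322264917101209558658595627427177536239, 92023727992838750203119559503460112355957581873280, 0, 0], [330945525745687259864706615156301219684300935476909279,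 668849821393059544803537080269842545535802984151235360, 1018876013145792981523060893630114123976469089531795439, 1174792660208336710931295580985612431057230038411282880, 1028956792572560956889997752899477636886473805972405759, 681426821645653518692359993260682494481238835953427120, 336041138535105818694761154296976658715952720475403519, 119719855032962150013133352793508237017816645163068960, 29142020740076978761333775260391748592698049702926239, 4340266387761770643367951559134696452123446408517600, 298519247058841307625347613450134560748237686812239, 0, 0], [1370220969199922394973763447132376276672995936222984399, 2110641693030172238522246358667799078278921870708812720, 2460702386580830591830835426848225585059795666586611359, 2180793751186821248944400312468170792523409759043995600, 1462869486956240056728413142359087194246843291688525279, 731585163683950786840227452062383041103100877809784640, 264650765860276084471707965281689424333868560439130719, 65495587944821116493035155601683430712076663860309280, 9929394979604498523368186792491617807143549295661199, 695948420210564482579315918112226307508320897522320, 0, 0], [3280376458662085260910825056892098707043920113001987279, 3859724630960191224776313029758099245218078327974320480, 3455433216514098472913235161512653660454287800665737839, 2344240254031888491002578696392203376543153507466621440, 1187256099213904693567755672949066258140431784837748799, 435541040695049202840893248867794837508696652463530160, 109452179868781068807964703340122814696962732998553039, 16870543546571758841182016255257942224472472131783680, 1203500962966548628962583398123352386181358559720479,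 0, 0], [4584609063719430149440346025430395999718435613950891919, 4146822523426485625002462802757907536475887830029161040, 2845217693183737342904700154361391323812500935973032399, 1458897560407796676125505909157409030869518271100325600, 542429829523913649375446060922905282742469018624815599, 138296537976534163264274374912058498809677646430156160, 21645722699569523837003723547006872952252846947895119, 1569109704802190655331863913136539076530636794195840, 0, 0], [3791647525744795483280591568584092397534198545791354959, 2631510527976387038361104369776695712974753703080380400, 1365782341616817679575251426432732230843164285101121599, 514334430775232542613021807216701001763619846261219440, 132893579215750030044290133438948711804465423631716239, 21088716578654228443140694441026010723611946887325920, 1550414359145495885079423832175384497882613676830399, 0, 0], [1847758531391320504414152270638780249231439994565117519, 970421612732141870393100965455285991410075128270703200, 369842700332610475960687421507629701898849018535588399, 96714187343804235917453547163280099852660495624310960, 15532319955826695781463733746735202770501354364900719, 1155527101213320239397308798033543376457212478470960, 0, 0], [515528832825187883742717860923982589297151292405876159, 198652220772026150120177076657817734701765665136470080, 52496586081390119561089904053246266563453728285187519, 8515398943651242832485979588137007459341944559461280, 639488282652121358226527285580454970520299587256639, 0, 0], [77315977797285013511799486430742594479685110657775519, 20614574782142458962310980024516300172493657995904160, 3370162553845096397852481709244149322324659580049359,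 254823818082606489044425424490647120769221436676560, 0, 0], [5536494675240376815197103842333970703222002434523359, 910272730839237536493010323437571715053654366023040, 69114880891412167544333290008239410445371628369039, 0, 0], [150190970628894982536010325622447066974340212369519, 11420996708697074161142301422200387358261060433120, 0, 0], [867558032766331310909779421819427812281416400079, 0, 0], [0, 0], [0]],
[[67558935018331111882565060650407167922161232469054080, 122983800789339505166731265803533146032259200342144319, 208351776578382211132831920270973724410467555263788800, 273446575539749354281301156131904515283893287870456959, 269157784852579369651576111951810666188250644698408640, 197202486912917756935060751529369272537536798946463359, 106119735498533381886955952869361182271704473044261760, 40777987737198501769792209395757272222786032773216959, 10600679579898157067216419337770100106898397267920320, 1671778567157169782892174141216207135015679890263039, 120842990831088383380979498235962970780508051288320, 0, 0, 0], [185436868893541023987091109697004272016424520451284480, 300208267929530271380576611059959826638547056177012159, 388284207506962847443884657844754736735046272836273280, 378287675578421371308068417902478772639269328399604799, 274611650257712450830509706387866763213971706389876000, 146562313034418228914588478428823574315598914817303519, 55926714324889313108273676672487155052195534801631520, 14459552303095306915575597627669823485473371119192479, 2271786099044335141943377242469034425464782169565440, 163888188252968210225792243153366718751240600859519, 0, 0,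 0], [493912150651063036170223948895238311030529994368131040, 650425629271834238528692213956967682542262968750842719, 644240366974855249399272641043312775751646829768823520, 475453354325147592547046467196828530394408948298481439, 258128631274436964818662337832660848394305230208445120, 100284729269926798207761346551471361297990739465336639, 26424237859381171246230493916695132097381465101337280, 4235398830677841665133154321808384068824178002647039, 312029901844597126602921435854346966621432277497600, 0, 0, 0], [864747084314446542829080782277101277868539812791902240, 861584943063022068753597382483513668760725023978046719, 638843966703749590257543903401512685854252956970475520, 348288552654035853588948244146647211360787320621082559, 135854012200243952564466366709117100056274450446462560, 35941892123651391268356997914651321769055384018480159, 5785978589465791058113612030459950605440226695712640, 428330569321078474300125268670262586282998615361919, 0, 0, 0], [860430565308758456036310209767007058052398845583966240, 638661726206202471768726561922896799427996865804395519, 348301914394975070250986256263073954141862934614903680, 135840726275091062608553829646565351349076706006598719, 35926670978154057152836385495400440649327935430841920, 5782315828112769106453705027282403280085881595875839, 428168370440754081260799610348582112099067313340160, 0, 0, 0], [473717459260540669800780459102555447835894722654816960, 257777086196154682261053395266457807500506805111633919, 100172950545595432919892545153782351365562165532202720, 26365600127020467518450710167195485289426172562893439, 4219083955992493040023304500928670650346485283542880,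 310462775170528992733754938986119908924924485460799, 0, 0, 0], [139592710598433949487871526200102650365854239357449920, 53830811127425844751649149889572532044444936914521759, 14018581899633677724311991380854870039977823249868640, 2213214766740882889737171564133996686526258676738879, 160265579900030388770840250262544340084180502990080, 0, 0, 0], [20500297684257106706992384599292962145381272986107680, 5242488643262785388612649811633310258219455180429919, 807516731013155215733128239005457089804925654308160, 56643245339277454045258484697422554481926954279679, 0, 0, 0], [1303420035243748526906112511129503733663569493897920, 192602658530626749664324148184841286445242837132639, 12726559241714468970005857329497737915736422021440, 0, 0, 0], [26568893288505335252043987476765663300952032080800, 1561664606689978574647799466069088977056596887359, 0, 0, 0], [70037463372549482504967428701375712754737800320, 0, 0, 0], [0, 0, 0], [0, 0], [0]],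
[[137047470032985006561737314374268008491583229976052479, 155289015461652324635525468984220411171441534565163520, 168283195020049062092766062265262982403434319834631679, 139562076324851349402664567906803524984064155342668800, 84135801925328001663216423312747730424819834336540159, 35748085715076652681807930411582606780630065898767360, 10161008095077472201494657774138465302361466261555199, 1736596726230127941494056153833614561765184232642560, 135180998799368216359544251946577082053122973327359, 0, 0, 0, 0], [143862565138610420390064124315534179666100267664252159, 149136414470374356023982712574470954935205950489934080, 121693730477135064535884818979016822860490360633466879, 72298073387213435467424311880006366113566395267009280, 30247275480738248515602947578293711763004772020739839, 8460802435566114175477635525847179274205592567905280, 1423093647611268492896054390781834042833648687443199, 109123805546859817933026840772169369305056910686720, 0, 0, 0, 0], [157233948815569719143268754932117764357925254477268479, 130241081075496499186286480589381336807944454637447680, 78339851027526550782828983872450028290169294453713919, 33157942952681200849549609530635571224887577580476160, 9383186304255751306337160592859434557927027560970239, 1597383947626103992111994360806378178321294544971520, 124075047384629657875243810532863023491777515453439, 0, 0, 0, 0], [108207113876773425296997937991283901123321586867738879, 64955171792569524432015854764181651689202831776293120, 27357706730525597475485827645939997325988820226205439, 7684109077606941943250004112830567256349447339040000, 1295319712354053941121450032851801076526385191125759,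 99421104690765528262921239711154681880883761671680, 0, 0, 0, 0], [38703892542414203031999980821219614423334761295188479, 16117551927215024118185671631830000514147926408174080, 4456994602657476137905293454633292318367941618856959, 736181695307426345552967226373254181967984765047040, 55080736117300486847650114857110267030976508561919, 0, 0, 0, 0], [6595076810305564191901082583150464293621213736021759, 1777572691584004956163736290321857686612497428349440, 283110503941232830757299084861088032347296664564479, 20133450061234878334480589229939453157022065973760, 0, 0, 0, 0], [459954556199893920668776471398567649635285996222719, 68652091465033329211249824730255893177299109415680, 4391868777936285362717157998141873354018291573759, 0, 0, 0, 0], [9065734961977457010856980257620959030744366911999, 442996925858892174708617404002810987296226954240, 0, 0, 0, 0], [3437970543021620194187648869098631243319408639, 0, 0, 0, 0], [0, 0, 0, 0], [0, 0, 0], [0, 0], [0]],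
[[58419080103403060974351366587096919667819725071600640, 40622722668148734562306883471814246856446653135677439, 27151800474627292221236882858038236367124545458385920, 13112390888037150746027484917946517971109905823303679, 4183862014390609400684789733280138928663695704775680, 789914202802363759583616938918590146871684426260479, 66706710891140300341554139969048194361353749022720, 0, 0, 0, 0, 0], [22601412645261906307990543113984875804970650805972480, 14548314206555074664269811241293252563416773920511999, 6917228825452283977482913446270829965576916483445760, 2167778615602769853208741039872768597404838170196479, 400289198037778908892745789066706634035732315187200, 32876486742494447543494784884724550697034909790719, 0, 0, 0, 0, 0], [9570154631163911686601982589988090679172960911528960, 4611136847055258399087852483302300027558217181263359, 1457962444502340098451354560309242526558162193576960, 270889645576637248205442227676203069614851421655039, 22339809453317432238669172264109063962479993162240, 0, 0, 0, 0, 0], [2213840596135938752159154607688116025643994084715520, 692680809294731041243862236565640493459073459420159, 126517556295857737409690906418066731932695381596160, 10172233785642126131304739539802550571671922439679, 0, 0, 0, 0, 0], [212820709557705703888441247656146720966029485386240, 37813358129724588985265491049657941268913977610239, 2916162758128838063175770077518055142249779960320, 0, 0, 0, 0, 0], [6432208467563156937353403167206198877708213268480, 461524584607101410972857762097874789148506071039,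 0, 0, 0, 0, 0], [28737948634804347136977942380496146926846993920, 0, 0, 0, 0, 0], [0, 0, 0, 0, 0], [0, 0, 0, 0], [0, 0, 0], [0, 0], [0]],
[[4257060493805168243145277386488803283099621205135359, 1678190008919110391548151196324696156295670162411520, 614492306496378595812117730912997489668640039362559, 136486319530062072965268108589173368013258851696640, 13657300060368996365327275270011967222455081185279, 0, 0, 0, 0, 0, 0], [512740175042232351794454006907881783916608708218879, 185620845993842176198153886361925654635469330298880, 41134885376808600434362056569078994266855288647679, 4108710932460787763349687013721386483686794680320, 0, 0, 0, 0, 0, 0], [69886148827815835725446917099272719591387347445759, 15827073047621250904490715264036045263300714557440, 1602475264431844028947752215677124298870203320319, 0, 0, 0, 0, 0, 0], [3604715633685193367794408136824529334365779660799, 365072137407083552288914452977925947233990133760, 0, 0, 0, 0, 0, 0], [36818270732076421206996933588375878489419745279, 0, 0, 0, 0, 0, 0], [0, 0, 0, 0, 0, 0], [0, 0, 0, 0, 0], [0, 0, 0, 0], [0, 0, 0], [0, 0], [0]],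
[[21908127236453433473519000451346434715154807808000, 3281113724837253392210406651964242388200607948799, 288984678780165338664529015575847852074247372800, 0, 0, 0, 0, 0, 0, 0], [364566560024835955747114054887367432764634521600, 29615742316439263561836797368729559401963622399, 0, 0, 0, 0, 0, 0, 0], [2415308523273583357158670145460180597831168000, 0, 0, 0, 0, 0, 0, 0], [0, 0, 0, 0, 0, 0, 0], [0, 0, 0, 0, 0, 0], [0, 0, 0, 0, 0], [0, 0, 0, 0], [0, 0, 0], [0, 0], [0]],
[[5025082363661967177153925206084322998101606399, 0, 0, 0, 0, 0, 0, 0, 0], [0, 0, 0, 0, 0, 0, 0, 0], [0, 0, 0, 0, 0, 0, 0], [0, 0, 0, 0, 0, 0], [0, 0, 0, 0, 0], [0, 0, 0, 0], [0, 0, 0], [0, 0], [0]],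
[[0, 0, 0, 0, 0, 0, 0, 0], [0, 0, 0, 0, 0, 0, 0], [0, 0, 0, 0, 0, 0], [0, 0, 0, 0, 0], [0, 0, 0, 0], [0, 0, 0], [0, 0], [0]],
[[0, 0, 0, 0, 0, 0, 0], [0, 0, 0, 0, 0, 0], [0, 0, 0, 0, 0], [0, 0, 0, 0], [0, 0, 0], [0, 0], [0]],
[[0, 0, 0, 0, 0, 0], [0, 0, 0, 0, 0], [0, 0, 0, 0], [0, 0, 0], [0, 0], [0]],
[[0, 0, 0, 0, 0], [0, 0, 0, 0], [0, 0, 0], [0, 0], [0]],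
[[0, 0, 0, 0], [0, 0, 0], [0, 0], [0]],
[[0, 0, 0], [0, 0], [0]],
[[0, 0], [0]],
[[0]]])

/-! ### one-variable check -/
noncomputable def T1 (bs : List (List P1)) : ℤ → P1 → P1 → P1 :=
  List.rec (fun _ _ _ => []) (fun b _ F k q q' => ad1 (mu1 (List.rec [] (fun p _ r => ad1 (mu1 p p) r) b) q) (F (Int.add k 1) q'
    (ad1 (mu1 [0, Int.mul 2 (Int.add (Int.mul 2 k) 20), Int.mul (-1) (Int.add (Int.mul 2 k) 20)] q')
      (mu1 (mu1 [Int.mul (-1) (Int.mul (Int.add k 1) (Int.add k 18))] [0, 0, 4, -4, 1]) q)))) bs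
noncomputable def L1 (cs : List ℤ) : List P1 → P1 :=
  List.rec (fun _ => []) (fun c _ F ps => List.rec [] (fun p ps' _ => ad1 (mu1 [c] p) (F ps')) ps) cs
/-- homogeneous substitution `x = P/Q` -/
noncomputable def sub1 (P Q : P1) (l : P1) : P1 × P1 :=
  List.rec ([], [1]) (fun c _ r => (ad1 (mu1 [c] (Prod.snd r)) (mu1 P (Prod.fst r)), mu1 Q (Prod.snd r))) l
noncomputable def nnB (l : P1) : Bool := allG (fun c : ℤ => Int.rec (fun _ => true) (fun _ => false) c) l
noncomputable def bOK (l : P1) (a b : ℤ) : Bool := nnB (Prod.fst (sub1 [a, b] [128, 128] l))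
namespace Pol
theorem T_1 (x : ℝ) (bs : List (List P1)) : ∀ (k : ℕ) (q q' : P1),
    gev e0 x q = Qt (2 + x + x - x * x - 2) (x * (2 - x) * (x * (2 - x))) k →
    gev e0 x q' = Qt (2 + x + x - x * x - 2) (x * (2 - x) * (x * (2 - x))) (k+1) →
    gev e0 x (T1 bs k q q') = Tk x x (2 + x + x - x * x - 2) (x * (2 - x) * (x * (2 - x))) bs k := by
  induction bs with
  | nil => intro k q q' _ _; simp [T1, gev, Tk]
  | cons b bs ih =>
    intro k q q' h h'
    have e : T1 (b :: bs) k q q' = ad1 (mu1 (List.rec [] (fun p _ r => ad1 (mu1 p p) r) b) q) (T1 bs (Int.add k 1) q'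
      (ad1 (mu1 [0, Int.mul 2 (Int.add (Int.mul 2 k) 20), Int.mul (-1) (Int.add (Int.mul 2 k) 20)] q')
      (mu1 (mu1 [Int.mul (-1) (Int.mul (Int.add k 1) (Int.add k 18))] [0, 0, 4, -4, 1]) q))) := rfl
    have hF : ∀ b : List P1, gev e0 x (List.rec [] (fun p _ r => ad1 (mu1 p p) r) b : P1) = Fk b x x := by
      intro b
      induction b with
      | nil => simp [gev, Fk]
      | cons p b ih => 
        show gev e0 x (ad1 (mu1 p p) _) = _
        rw [a1, m1, ih]; simp [Fk, ev]
    have c0 : ∀ a b : ℤ, ((Int.mul a b : ℤ) : ℝ) = a * b := fun a b => Int.cast_mul a b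
    have c1 : ((Int.add (Int.mul 2 k) 20 : ℤ) : ℝ) = 2 * (k + 1) + 18 := by
      show (((2 * (k:ℤ) + 20 : ℤ)) : ℝ) = _
      push_cast; ring
    have c2 : ((Int.mul (-1) (Int.mul (Int.add k 1) (Int.add k 18)) : ℤ) : ℝ) = - ((k + 1) * (k + 18)) := by
      show (((-1 * (((k:ℤ) + 1) * (k + 18)) : ℤ)) : ℝ) = _
      push_cast; ring
    have hk : Int.add (k : ℤ) 1 = ((k + 1 : ℕ) : ℤ) := by push_cast; rfl
    rw [hk] at c2
    rw [e, a1, m1, hF, h, hk, ih (k+1) _ _ h', Tk]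
    rw [a1, m1, m1, m1, h, h', Qt]
    simp only [gev, e0, c2]
    simp only [c0, c1]
    push_cast
    ring
theorem T_1fun (x : ℝ) (bs : List (List P1)) : gev e0 x (T1 bs 0 [1] [0, 36, -18]) = Tfun bs x x 2 := by
  refine T_1 x bs 0 _ _ ?_ ?_
  · simp [gev, Qt]
  · simp [gev, Qt]; ring
theorem L_1 (x : ℝ) (cs : List ℤ) : ∀ ps : List P1, gev e0 x (L1 cs ps) = Lsum x cs ps := by
  induction cs with
  | nil => intro ps; cases ps <;> simp [L1, Lsum, gev]
  | cons c cs ih =>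
    intro ps
    cases ps with
    | nil => simp [L1, Lsum, gev]
    | cons p ps =>
      have : L1 (c :: cs) (p :: ps) = ad1 (mu1 [c] p) (L1 cs ps) := rfl
      rw [this, a1, m1, ih]; simp [gev, Lsum, ev]
theorem sub_1 (P Q : P1) (x t : ℝ) (h : gev e0 t P = x * gev e0 t Q) (l : P1) :
    gev e0 t (sub1 P Q l).1 * gev e0 t Q = gev e0 x l * gev e0 t (sub1 P Q l).2 ∧ gev e0 t (sub1 P Q l).2 = gev e0 t Q ^ l.length := by
  induction l with
  | nil => simp [sub1, gev]
  | cons c l ih =>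
    have : sub1 P Q (c :: l) = (ad1 (mu1 [c] (sub1 P Q l).2) (mu1 P (sub1 P Q l).1), mu1 Q (sub1 P Q l).2) := rfl
    rw [this]; simp only [a1, m1, h, ih.2, gev, List.length_cons]
    refine ⟨?_, by ring⟩
    have h1 := ih.1
    rw [ih.2] at h1
    calc _ = e0 c * gev e0 t Q ^ (l.length + 1) + x * gev e0 t Q * (gev e0 t (sub1 P Q l).1 * gev e0 t Q) := by ring
      _ = _ := by rw [h1]; ring
theorem nn_gev (t : ℝ) (ht : 0 ≤ t) (l : P1) (h : nnB l = true) : 0 ≤ gev e0 t l := by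
  unfold nnB at h
  rw [Ck.allG_true] at h
  induction l with
  | nil => simp [gev]
  | cons c l ih =>
    have h1 : (0:ℝ) ≤ e0 c := by
      have := h c (by simp)
      cases c with
      | ofNat n => simp [e0]
      | negSucc n => exact absurd this (by simp)
    exact add_nonneg h1 (mul_nonneg ht (ih fun a ha => h a (by simp [ha])))
theorem b_sound (l : P1) (a b : ℤ) (h : bOK l a b = true) (x t : ℝ) (ht : 0 ≤ t) (hx : 128 * x * (1 + t) = a + b * t) : 0 ≤ gev e0 x l := by
  have h1 := nn_gev t ht _ h
  have h2 := sub_1 [a, b] [128, 128] x t (by simp [gev]; linarith) l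
  rw [h2.2] at h2
  have h3 : 0 < gev e0 t [128, 128] := by simp [gev]; positivity
  have h4 := mul_nonneg h1 h3.le
  rw [h2.1] at h4
  exact nonneg_of_mul_nonneg_left h4 (by positivity)
theorem b_int (l : P1) (a b : ℤ) (h : bOK l a b = true) (x : ℝ) (h1 : (a:ℝ) ≤ 128 * x) (h2 : 128 * x < b) : 0 ≤ gev e0 x l := by
  refine b_sound l a b h x ((128 * x - a) / (b - 128 * x)) (div_nonneg (by linarith) (by linarith)) ?_
  have : (b : ℝ) - 128 * x ≠ 0 := by linarith
  field_simp; ring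
theorem b_int' (l : P1) (a b : ℤ) (h : bOK l b a = true) (x : ℝ) (h1 : (a:ℝ) < 128 * x) (h2 : 128 * x ≤ b) : 0 ≤ gev e0 x l := by
  refine b_sound l b a h x ((b - 128 * x) / (128 * x - a)) (div_nonneg (by linarith) (by linarith)) ?_
  have : 128 * x - (a : ℝ) ≠ 0 := by linarith
  field_simp; ring
end Pol

/-! ### combination -/
/-- minus `κ` times the Gram determinant, written in the shifted variables -/
noncomputable def tensd : P3 := mapG (mapG (mapG (Int.mul (Int.ofNat (Nat.mul 3 (Nat.pow 2 108))))))
  [[[4, -4, 1], [-4, 2], [1]], [[-4, 2], [2, -2]], [[1]], [], [], [], [], [], [], [], [], [], [], [], [], [], []]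
noncomputable def lenG {A : Type} (l : List A) : Nat := List.rec 0 (fun _ _ r => Nat.succ r) l
noncomputable def absB (K : Nat) (c : Int) : Bool := Int.rec (fun n => Nat.ble n K) (fun n => Nat.ble (Nat.succ n) K) c
noncomputable def okB (K : Nat) (T : P3) : Bool :=
  andB (Nat.beq (lenG T) 17) (allG (fun m => andB (Nat.ble (lenG m) 17)
    (allG (fun l => andB (Nat.ble (lenG l) 17) (allG (absB K) l)) m)) T)
/-- the one-variable polynomial -/
noncomputable def Bp : P1 := ad1 [Int.negSucc (Nat.sub (Nat.pow 2 128) 1)]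
  (mu1 [-1] (ad1 (mu1 [2] (L1 cs0 (List.rec [] (fun b _ _ => b) bs0))) (T1 bs0 0 [1] [0, 36, -18])))
namespace Pol
theorem lenG_eq {A : Type} (l : List A) : lenG l = l.length := by
  induction l with
  | nil => rfl
  | cons c l ih => show Nat.succ (lenG l) = _; rw [ih]; rfl
theorem okB_okT (K : ℕ) (T : P3) (h : okB K T = true) : Ck.okT K T := by
  unfold okB at h
  simp only [Ck.andB_true, Ck.allG_true, lenG_eq] at h
  refine ⟨Nat.eq_of_beq_eq_true h.1, fun m hm => ⟨Nat.le_of_ble_eq_true (h.2 m hm).1, fun l hl =>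
    ⟨Nat.le_of_ble_eq_true ((h.2 m hm).2 l hl).1, fun c hc => ?_⟩⟩⟩
  have := ((h.2 m hm).2 l hl).2 c hc
  cases c with
  | ofNat n =>
    have : n ≤ K := Nat.le_of_ble_eq_true this
    rw [Int.ofNat_eq_natCast, abs_of_nonneg (by positivity)]; exact_mod_cast this
  | negSucc n =>
    have : n + 1 ≤ K := Nat.le_of_ble_eq_true this
    rw [Int.negSucc_eq, abs_neg, abs_of_nonneg (by positivity)]; exact_mod_cast this
theorem tensd_ev (x y z : ℝ) : tev tensd x y z =
    -(3 * 2 ^ 108) * (1 + 2 * (x-1) * (y-1) * (z-1) - (x-1)^2 - (y-1)^2 - (z-1)^2) := by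
  unfold tensd tev
  rw [gev_mapG (e := gev (gev e0 x) y) _ (3 * 2 ^ 108)]
  · simp only [gev]; push_cast; ring
  · intro m
    refine gev_mapG (e := gev e0 x) _ _ ?_ y m
    intro l
    refine gev_mapG (e := e0) _ _ ?_ x l
    intro c
    have : e0 (Int.mul (Int.ofNat (Nat.mul 3 (Nat.pow 2 108))) c) = ((Nat.mul 3 (Nat.pow 2 108) : ℕ) : ℝ) * (c : ℝ) := by
      rw [e0m]; simp [e0]
    rw [show (c : ℝ) = e0 c from rfl] at this
    refine this.trans ?_
    congr 1
    show ((3 * 2 ^ 108 : ℕ) : ℝ) = _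
    norm_num
theorem okd : okB (Nat.pow 2 114) tensd = true := by decide +kernel
theorem okt : okB (Nat.pow 2 184) tens = true := by decide +kernel
theorem okd' : Ck.okT (2 ^ 114) tensd := by
  have := okB_okT _ _ okd
  rwa [show ((Nat.pow 2 114 : ℕ) : ℤ) = 2 ^ 114 from rfl] at this
theorem okt' : Ck.okT (2 ^ 184) tens := by
  have := okB_okT _ _ okt
  rwa [show ((Nat.pow 2 184 : ℕ) : ℤ) = 2 ^ 184 from rfl] at this
theorem tens_ok : zeroB (ad3 (Sp (Tp bs0 0 (cst 1) (mu3 (cst 18) wP))) tens) = true := by decide +kernel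
theorem tens_ev (x y z : ℝ) : tev tens x y z = -(Tfun bs0 x y z + Tfun bs0 x z y + Tfun bs0 y z x) := by
  have := zeroB_tev _ tens_ok x y z
  rw [a3, S_fun] at this; linarith
theorem Tk_comm (x y w r : ℝ) (bs : List (List P1)) : ∀ k, Tk x y w r bs k = Tk y x w r bs k := by
  induction bs with
  | nil => intro k; rfl
  | cons b bs ih =>
    intro k; rw [Tk, Tk, ih]
    congr 2
    unfold Fk; congr 1
    exact List.map_congr_left fun p _ => mul_comm _ _
theorem T_comm (x y z : ℝ) (bs : List (List P1)) : Tfun bs x y z = Tfun bs y x z := by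
  unfold Tfun
  rw [Tk_comm, show z + y + x - y * x - 2 = z + x + y - x * y - 2 by ring, mul_comm (x * (2 - x))]
/-- statement on one slab -/
def Slab (a b : ℕ) : Prop := ∀ x y z : ℝ, (a : ℝ) ≤ 128 * x → 128 * x ≤ b → x ≤ y → y ≤ z → z ≤ 3/2 →
  0 ≤ 1 + 2 * (x-1) * (y-1) * (z-1) - (x-1)^2 - (y-1)^2 - (z-1)^2 → Tfun bs0 x y z + Tfun bs0 x z y + Tfun bs0 y z x ≤ 0
theorem Slab.mk {a b : ℕ} {vl : List (ℕ × List (ℕ × ℕ))} (h : uOK tens tensd a b vl = true) : Slab a b := by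
  intro x y z h1 h2 h3 h4 h5 h6
  have := Ck.u_sound tens tensd okt' okd' a b vl h x y z h1 h2 h3 h4 h5 (by
    rw [tensd_ev]; exact mul_nonpos_of_nonpos_of_nonneg (by norm_num) h6)
  rw [tens_ev] at this; linarith
theorem Slab.trans {a b c : ℕ} (h : Slab a b) (h' : Slab b c) : Slab a c := by
  intro x y z h1 h2
  rcases le_total (128 * x) b with h3 | h3
  · exact h x y z h1 h3
  · exact h' x y z h3 h2
theorem all_sorted (H : Slab 0 192) (a b c : ℝ) (ha : 0 ≤ a) (h1 : a ≤ b) (h2 : b ≤ c) (h3 : c ≤ 3/2)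
    (hd : 0 ≤ 1 + 2 * (a-1) * (b-1) * (c-1) - (a-1)^2 - (b-1)^2 - (c-1)^2) : Tfun bs0 a b c + Tfun bs0 a c b + Tfun bs0 b c a ≤ 0 :=
  H a b c (by push_cast; linarith) (by push_cast; linarith) h1 h2 h3 hd
theorem all_S (H : Slab 0 192) : ∀ a b c : ℝ, 0 ≤ a → a ≤ 3/2 → 0 ≤ b → b ≤ 3/2 → 0 ≤ c → c ≤ 3/2 →
      0 ≤ 1 + 2 * (a-1) * (b-1) * (c-1) - (a-1)^2 - (b-1)^2 - (c-1)^2 → Tfun bs0 a b c + Tfun bs0 a c b + Tfun bs0 b c a ≤ 0 := by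
  intro a b c a0 a1 b0 b1 c0 c1 hd
  have K := all_sorted H
  have e1 := T_comm a b c bs0
  have e2 := T_comm a c b bs0
  have e3 := T_comm b c a bs0
  rcases le_total a b with h1 | h1 <;> rcases le_total b c with h2 | h2 <;> rcases le_total a c with h3 | h3
  · linarith [K a b c a0 h1 h2 c1 (by linarith)]
  · linarith [K a b c a0 h1 h2 c1 (by linarith)]
  · linarith [K a c b a0 h3 h2 b1 (by linarith)]
  · linarith [K c a b c0 h3 h1 b1 (by linarith)]
  · linarith [K b a c b0 h1 h3 c1 (by linarith)]
  · linarith [K b c a b0 h2 h3 a1 (by linarith)]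
  · linarith [K c b a c0 h2 h1 a1 (by linarith)]
  · linarith [K c b a c0 h2 h1 a1 (by linarith)]
theorem B_ok : andB (bOK Bp 0 48) (andB (bOK Bp 48 72) (andB (bOK Bp 72 96) (andB (bOK Bp 96 128) (andB (bOK Bp 128 152)
    (andB (bOK Bp 152 160) (andB (bOK Bp 160 184) (bOK Bp 192 180))))))) = true := by decide +kernel
noncomputable def ps0 : List P1 := List.rec [] (fun b _ _ => b) bs0
noncomputable def bt0 : List (List P1) := tailG bs0
theorem bs_eq : bs0 = ps0 :: bt0 := by
  unfold ps0 bt0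
  have : lenG bs0 = 9 := by decide +kernel
  cases h : bs0 with
  | nil => rw [h] at this; exact absurd this (by decide)
  | cons b l => rfl
theorem B_ev (x : ℝ) : gev e0 x Bp = -2 ^ 128 - (2 * Lsum x cs0 ps0 + Tfun bs0 x x 2) := by
  unfold Bp
  rw [a1, m1, a1, m1, T_1fun, L_1]
  have : e0 (Int.negSucc (Nat.sub (Nat.pow 2 128) 1)) = - 2 ^ 128 := by
    show ((Int.negSucc (2 ^ 128 - 1) : ℤ) : ℝ) = _
    norm_num
  simp only [gev, this]
  unfold ps0
  simp; ring
theorem B_bd (x : ℝ) (h0 : 0 ≤ x) (h1 : x ≤ 3/2) : 2 * Lsum x cs0 ps0 + Tfun bs0 x x 2 ≤ -2 ^ 128 := by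
  suffices h : 0 ≤ gev e0 x Bp by rw [B_ev] at h; linarith
  have := B_ok
  simp only [Ck.andB_true] at this
  obtain ⟨k1, k2, k3, k4, k5, k6, k7, k8⟩ := this
  rcases lt_or_ge (128 * x) 48 with h | h
  · exact b_int _ _ _ k1 x (by push_cast; linarith) (by push_cast; linarith)
  rcases lt_or_ge (128 * x) 72 with h | h
  · exact b_int _ _ _ k2 x (by push_cast; linarith) (by push_cast; linarith)
  rcases lt_or_ge (128 * x) 96 with h | h
  · exact b_int _ _ _ k3 x (by push_cast; linarith) (by push_cast; linarith)
  rcases lt_or_ge (128 * x) 128 with h | h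
  · exact b_int _ _ _ k4 x (by push_cast; linarith) (by push_cast; linarith)
  rcases lt_or_ge (128 * x) 152 with h | h
  · exact b_int _ _ _ k5 x (by push_cast; linarith) (by push_cast; linarith)
  rcases lt_or_ge (128 * x) 160 with h | h
  · exact b_int _ _ _ k6 x (by push_cast; linarith) (by push_cast; linarith)
  rcases lt_or_ge (128 * x) 184 with h | h
  · exact b_int _ _ _ k7 x (by push_cast; linarith) (by push_cast; linarith)
  exact b_int' _ 180 192 k8 x (by push_cast; linarith) (by push_cast; linarith)
noncomputable def sqs (l : List ℤ) : ℕ := List.rec 0 (fun c _ r => Nat.add (Nat.mul (Int.natAbs c) (Int.natAbs c)) r) l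
theorem sqs_eq (l : List ℤ) : (sqs l : ℝ) = Asum l := by
  induction l with
  | nil => simp [sqs, Asum]
  | cons c l ih =>
    have : sqs (c :: l) = c.natAbs * c.natAbs + sqs l := rfl
    rw [this]; push_cast; rw [ih]
    have : (c.natAbs : ℝ) * c.natAbs = c * c := by
      rw [Nat.cast_natAbs, Int.cast_abs]; exact abs_mul_abs_self _
    simp [Asum]
theorem A_ok : Nat.ble (Nat.succ (sqs cs0)) (Nat.mul 54584 (Nat.pow 2 128)) = true := by decide +kernel
theorem A_bd : Asum cs0 < 54584 * 2 ^ 128 := by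
  have : sqs cs0 < 54584 * 2 ^ 128 := Nat.le_of_ble_eq_true A_ok
  rw [← sqs_eq]
  calc (sqs cs0 : ℝ) < ((54584 * 2 ^ 128 : ℕ) : ℝ) := Nat.cast_lt.2 this
    _ = _ := by norm_num
theorem len_ok : lenG cs0 = lenG ps0 := by decide +kernel
theorem final (H : Slab 0 192) (S : Finset (EuclideanSpace ℝ (Fin 21))) (hnorm : ∀ x ∈ S, ‖x‖ = 1) (hdist : ∀ x ∈ S, ∀ y ∈ S, x ≠ y → 1 ≤ dist x y) :
    S.card ≤ 54584 := by
  refine Cnt.main S hnorm hdist (Asum cs0) (2 ^ 128) (fun x => Lsum x cs0 ps0) (Tfun bs0) (by positivity) A_bd B_bd (all_S H) ?_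
  intro z hz
  have := Cnt.zineq z (hnorm z hz) (S.erase z) (fun x hx => hnorm x (Finset.mem_of_mem_erase hx)) cs0 ps0 bt0
    (by rw [← lenG_eq, ← lenG_eq, len_ok])
  rw [← bs_eq] at this
  exact this
end Pol

namespace Pol
theorem u0 : uOK tens tensd 0 1
  [(48, [(192, 1000000000000000)]), (96, [(144, 10000000000000000), (171, 0), (192, 0)]), (144, [(132, 0), (160, 0), (192, 0)]), (192, [(192, 100000000000000)])] = true := by decide +kernel
theorem u1 : uOK tens tensd 1 17
  [(17, [(192, 1000000000000000)]), (19, [(189, 10000000000000000), (192, 2000000000)]), (23, [(182, 1000000000000000), (192, 0)]), (55, [(139, 10000000000), (192, 0)]), (71, [(162, 0), (192, 0)]), (95, [(149, 0), (159, 0), (167, 0), (192, 0)]), (111, [(153, 0), (160, 0), (187, 0), (192, 0)]), (127, [(129, 0), (157, 0), (165, 0), (192, 0)]), (147, [(135, 0), (166, 0), (192, 0)]), (192, [(192, 0)])] = true := by decide +kernel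
theorem u2 : uOK tens tensd 17 33
  [(33, [(163, 0), (192, 0)]), (53, [(162, 0), (192, 0)]), (65, [(159, 0), (192, 0)]), (85, [(136, 0), (155, 0), (166, 0), (192, 0)]), (95, [(138, 0), (156, 0), (159, 0), (166, 0), (192, 0)]), (115, [(128, 0), (158, 0), (161, 0), (172, 0), (192, 0)]), (121, [(127, 0), (157, 0), (161, 0), (176, 0), (192, 0)]), (131, [(129, 0), (157, 0), (166, 0), (192, 0)]), (155, [(159, 0), (192, 0)]), (192, [(190, 0), (192, 20000000)])] = true := by decide +kernel
theorem u3 : uOK tens tensd 33 41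
  [(35, [(179, 0), (192, 0)]), (59, [(156, 0), (166, 0), (192, 0)]), (65, [(157, 0), (159, 0), (166, 0), (192, 0)]), (85, [(125, 0), (157, 0), (174, 0), (192, 0)]), (93, [(127, 0), (156, 0), (167, 0), (192, 0)]), (105, [(127, 0), (158, 0), (161, 0), (172, 0), (192, 0)]), (121, [(126, 0), (156, 0), (165, 0), (192, 0)]), (133, [(133, 0), (156, 0), (157, 0), (158, 0), (161, 0), (172, 0), (192, 0)]), (157, [(157, 0), (161, 0), (165, 0), (180, 0), (192, 0)]), (181, [(192, 0)]), (192, [(192, 100000000000000)])] = true := by decide +kernel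
theorem u4 : uOK tens tensd 41 49
  [(51, [(143, 0), (157, 0), (192, 0)]), (59, [(141, 0), (156, 0), (166, 0), (192, 0)]), (75, [(123, 0), (157, 0), (163, 0), (186, 0), (192, 0)]), (87, [(121, 0), (135, 0), (156, 0), (161, 0), (180, 0), (192, 0)]), (97, [(127, 0), (134, 0), (156, 0), (160, 0), (175, 0), (192, 0)]), (109, [(130, 0), (159, 0), (162, 0), (173, 0), (192, 0)]), (121, [(143, 0), (156, 0), (192, 0)]), (133, [(137, 0), (155, 0), (160, 0), (162, 0), (169, 0), (192, 0)]), (157, [(157, 0), (158, 0), (160, 0), (162, 0), (169, 0), (192, 0)]), (159, [(170, 0), (192, 0)]), (179, [(192, 0)]), (192, [(186, 6000000), (192, 31000000)])] = true := by decide +kernel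
theorem u5 : uOK tens tensd 49 57
  [(57, [(130, 0), (149, 0), (158, 0), (192, 0)]), (77, [(121, 0), (137, 0), (157, 0), (159, 0), (161, 0), (168, 0), (192, 0)]), (82, [(122, 0), (157, 0), (174, 0), (192, 0)]), (94, [(93, 0), (125, 0), (156, 0), (158, 0), (165, 0), (192, 0)]), (114, [(126, 0), (157, 0), (167, 0), (192, 0)]), (122, [(131, 0), (156, 0), (160, 0), (175, 0), (192, 0)]), (123, [(139, 0), (157, 0), (161, 0), (176, 0), (192, 0)]), (124, [(144, 0), (158, 0), (168, 0), (192, 0)]), (156, [(157, 0), (162, 0), (181, 0), (192, 0)]), (158, [(157, 0), (158, 0), (161, 0), (172, 0), (192, 0)]), (163, [(192, 0)]), (179, [(192, 0)]), (181, [(192, 1000000)]), (182, [(192, 1700000)]), (183, [(192, 2400000)]), (184, [(192, 3300000)]), (186, [(192, 5850000)]), (192, [(189, 12000000), (192, 23000000)])] = true := by decide +kernel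
theorem u6 : uOK tens tensd 57 61
  [(65, [(123, 0), (157, 0), (159, 0), (166, 0), (192, 0)]), (81, [(107, 0), (130, 0), (156, 0), (160, 0), (175, 0), (192, 0)]), (91, [(93, 0), (125, 0), (158, 0), (169, 0), (192, 0)]), (97, [(98, 0), (124, 0), (151, 0), (157, 0), (161, 0), (176, 0), (192, 0)]), (113, [(127, 0), (156, 0), (164, 0), (192, 0)]), (123, [(129, 0), (158, 0), (164, 0), (182, 0), (192, 0)]), (125, [(135, 0), (158, 0), (165, 0), (192, 0)]), (157, [(157, 0), (161, 0), (176, 0), (192, 0)]), (158, [(159, 0), (166, 0), (192, 0)]), (163, [(192, 0)]), (167, [(192, 0)]), (183, [(192, 0)]), (186, [(192, 1900000)]), (187, [(192, 3700000)]), (188, [(192, 5110000)]), (189, [(192, 7000000)]), (192, [(192, 12200000)])] = true := by decide +kernel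
theorem u7 : uOK tens tensd 61 64
  [(81, [(93, 0), (128, 0), (156, 0), (160, 0), (175, 0), (192, 0)]), (97, [(90, 0), (101, 0), (126, 0), (157, 0), (158, 0), (161, 0), (172, 0), (192, 0)]), (113, [(127, 0), (156, 0), (158, 0), (165, 0), (192, 0)]), (123, [(129, 0), (158, 0), (169, 0), (192, 0)]), (126, [(134, 0), (158, 0), (168, 0), (192, 0)]), (150, [(156, 0), (161, 0), (180, 0), (192, 0)]), (158, [(158, 0), (160, 0), (167, 0), (192, 0)]), (160, [(165, 0), (192, 0)]), (163, [(192, 0)]), (187, [(192, 0)]), (190, [(192, 3000000)]), (191, [(192, 6000000)]), (192, [(192, 8000000)])] = true := by decide +kernel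
theorem u8 : uOK tens tensd 64 76
  [(80, [(92, 0), (119, 0), (130, 0), (156, 0), (160, 0), (175, 0), (192, 0)]), (96, [(98, 0), (121, 0), (137, 0), (157, 0), (159, 0), (161, 0), (168, 0), (192, 0)]), (100, [(130, 0), (156, 0), (157, 0), (158, 0), (161, 0), (172, 0), (192, 0)]), (120, [(127, 0), (154, 0), (157, 0), (168, 0), (192, 0)]), (126, [(128, 0), (158, 0), (167, 0), (192, 0)]), (138, [(157, 0), (169, 0), (192, 0)]), (154, [(159, 0), (192, 0)]), (158, [(159, 0), (168, 0), (192, 0)]), (161, [(161, 0), (172, 0), (192, 0)]), (192, [(192, 0)])] = true := by decide +kernel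
theorem u9 : uOK tens tensd 76 84
  [(84, [(114, 0), (140, 0), (157, 0), (192, 0)]), (96, [(110, 0), (126, 0), (149, 0), (159, 0), (192, 0)]), (116, [(126, 0), (158, 0), (160, 0), (167, 0), (192, 0)]), (124, [(152, 0), (158, 0), (160, 0), (167, 0), (192, 0)]), (144, [(158, 0), (161, 0), (172, 0), (192, 0)]), (152, [(161, 0), (192, 0)]), (155, [(170, 0), (192, 0)]), (158, [(170, 0), (192, 0)]), (192, [(192, 0)])] = true := by decide +kernel
theorem u10 : uOK tens tensd 84 92
  [(94, [(118, 0), (128, 0), (157, 0), (163, 0), (186, 0), (192, 0)]), (114, [(124, 0), (157, 0), (165, 0), (192, 0)]), (124, [(126, 0), (157, 0), (163, 0), (183, 0), (192, 0)]), (136, [(139, 0), (157, 0), (161, 0), (176, 0), (192, 0)]), (156, [(158, 0), (160, 0), (161, 0), (164, 0), (175, 0), (192, 0)]), (158, [(158, 0), (163, 0), (182, 0), (192, 0)]), (159, [(164, 0), (187, 0), (192, 0)]), (192, [(192, 0)])] = true := by decide +kernel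
theorem u11 : uOK tens tensd 92 100
  [(100, [(125, 0), (157, 0), (167, 0), (192, 0)]), (124, [(126, 0), (157, 0), (159, 0), (166, 0), (192, 0)]), (126, [(141, 0), (157, 0), (158, 0), (161, 0), (172, 0), (192, 0)]), (146, [(157, 0), (158, 0), (161, 0), (172, 0), (192, 0)]), (158, [(158, 0), (165, 0), (192, 0)]), (160, [(164, 0), (187, 0), (192, 0)]), (192, [(192, 0)])] = true := by decide +kernel
theorem u12 : uOK tens tensd 100 116
  [(116, [(131, 0), (158, 0), (192, 0)]), (128, [(138, 0), (158, 0), (173, 0), (192, 0)]), (152, [(157, 0), (166, 0), (192, 0)]), (160, [(161, 0), (191, 0), (192, 0)]), (192, [(192, 0)])] = true := by decide +kernel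
theorem u13 : uOK tens tensd 116 122
  [(126, [(134, 0), (157, 0), (186, 0), (192, 0)]), (146, [(158, 0), (192, 0)]), (158, [(161, 0), (192, 0)]), (192, [(192, 0)])] = true := by decide +kernel
theorem u14 : uOK tens tensd 122 130
  [(128, [(149, 0), (158, 0), (160, 0), (167, 0), (192, 0)]), (148, [(159, 0), (192, 0)]), (158, [(159, 0), (192, 0)]), (160, [(192, 0)]), (192, [(192, 0)])] = true := by decide +kernel
theorem u15 : uOK tens tensd 130 154
  [(154, [(159, 0), (190, 0), (192, 0)]), (160, [(166, 0), (192, 0)]), (168, [(180, 0), (192, 0)]), (192, [(192, 0)])] = true := by decide +kernel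
theorem u16 : uOK tens tensd 154 157
  [(157, [(167, 0), (192, 0)]), (167, [(167, 0), (192, 0)]), (192, [(192, 0)])] = true := by decide +kernel
theorem u17 : uOK tens tensd 157 160
  [(160, [(169, 0), (192, 0)]), (192, [(192, 0)])] = true := by decide +kernel
theorem u18 : uOK tens tensd 160 192
  [(192, [(192, 0)])] = true := by decide +kernel
theorem slab : Slab 0 192 :=
  (Slab.trans (Slab.trans (Slab.trans (Slab.trans (Slab.trans (Slab.trans (Slab.trans (Slab.trans (Slab.trans (Slab.trans (Slab.trans (Slab.trans (Slab.trans (Slab.trans (Slab.trans (Slab.trans (Slab.trans (Slab.trans (Slab.mk u0) (Slab.mk u1)) (Slab.mk u2)) (Slab.mk u3)) (Slab.mk u4)) (Slab.mk u5)) (Slab.mk u6)) (Slab.mk u7)) (Slab.mk u8)) (Slab.mk u9)) (Slab.mk u10)) (Slab.mk u11)) (Slab.mk u12)) (Slab.mk u13)) (Slab.mk u14)) (Slab.mk u15)) (Slab.mk u16)) (Slab.mk u17)) (Slab.mk u18))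
end Pol


theorem kissing_number_dim21_le_54584
    (S : Finset (EuclideanSpace ℝ (Fin 21)))
    (hnorm : ∀ x ∈ S, ‖x‖ = 1)
    (hdist : ∀ x ∈ S, ∀ y ∈ S, x ≠ y → 1 ≤ dist x y) :
    S.card ≤ 54584 := Pol.final Pol.slab S hnorm hdist
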